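/- arXiv:1510.06328 — 2 statements merged into one kernel-verified Lean document; each statement's English description precedes it below -/
import Mathlib

section
/- Let d(n) denote the number of permutations of length n avoiding the patterns 4213 and 2143. Then d(n) is asymptotically equivalent to (60/121)·√(5/π)·5ⁿ·n^{−3/2}, i.e. d(n)·n^{3/2}/5ⁿ tends to (60/121)·√(5/π) as n → ∞. -/
open Filter Topology PowerSeries

/-- `σ` contains the pattern `π`. -/
def PatternContains {n k : ℕ} (σ : Equiv.Perm (Fin n)) (π : Fin k → Fin k) : Prop :=
  ∃ f : Fin k → Fin n, StrictMono f ∧ ∀ a b : Fin k, π a < π b ↔ σ (f a) < σ (f b)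

/-- `σ` avoids the pattern `π`. -/
def PatternAvoids {n k : ℕ} (σ : Equiv.Perm (Fin n)) (π : Fin k → Fin k) : Prop :=
  ¬ PatternContains σ π

/-- The pattern 4213 (zero-indexed values). -/
def p4213 : Fin 4 → Fin 4 := ![3, 1, 0, 2]

/-- The pattern 2413 (zero-indexed values). -/
def p2413 : Fin 4 → Fin 4 := ![1, 3, 0, 2]

/-- The pattern 2143 (zero-indexed values). -/
def p2143 : Fin 4 → Fin 4 := ![1, 0, 3, 2]

/-- The pattern 213 (zero-indexed values). -/
def p213 : Fin 3 → Fin 3 := ![1, 0, 2]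

/-- `σ` avoids 4213, 2413 and 2143. -/
def AvoidsH {n : ℕ} (σ : Equiv.Perm (Fin n)) : Prop :=
  PatternAvoids σ p4213 ∧ PatternAvoids σ p2413 ∧ PatternAvoids σ p2143

/-- `σ` avoids 4213 and 2143. -/
def AvoidsD {n : ℕ} (σ : Equiv.Perm (Fin n)) : Prop :=
  PatternAvoids σ p4213 ∧ PatternAvoids σ p2143

/-- An H-gridding of `σ`: a value cutoff `k ∈ {0,…,n}` such that the subsequence of
entries with (1-based) values `> k` is increasing and the subsequence of entries with
values `≤ k` avoids 213. -/
def HGridding {n : ℕ} (σ : Equiv.Perm (Fin n)) (k : ℕ) : Prop :=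
  k ≤ n ∧
  (∀ i j : Fin n, i < j → k < (σ i : ℕ) + 1 → k < (σ j : ℕ) + 1 → σ i < σ j) ∧
  ¬ ∃ f : Fin 3 → Fin n, StrictMono f ∧ (∀ a, (σ (f a) : ℕ) + 1 ≤ k) ∧
      (∀ a b : Fin 3, p213 a < p213 b ↔ σ (f a) < σ (f b))

/-- A G-gridding of `σ`: a pair `(j, k)` with `0 ≤ j, k ≤ n` such that (i) the first `j`
entries have values `≤ k` and are increasing, (ii) the subsequence of entries at
(1-based) positions `> j` with values `> k` is increasing, and (iii) the subsequence of
entries at positions `> j` with values `≤ k` avoids 213. -/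
def GGridding {n : ℕ} (σ : Equiv.Perm (Fin n)) (j k : ℕ) : Prop :=
  j ≤ n ∧ k ≤ n ∧
  (∀ i : Fin n, (i : ℕ) < j → (σ i : ℕ) + 1 ≤ k) ∧
  (∀ i₁ i₂ : Fin n, i₁ < i₂ → (i₂ : ℕ) < j → σ i₁ < σ i₂) ∧
  (∀ i₁ i₂ : Fin n, i₁ < i₂ → j ≤ (i₁ : ℕ) → k < (σ i₁ : ℕ) + 1 → k < (σ i₂ : ℕ) + 1 →
      σ i₁ < σ i₂) ∧
  ¬ ∃ f : Fin 3 → Fin n, StrictMono f ∧ (∀ a, j ≤ ((f a) : ℕ) ∧ (σ (f a) : ℕ) + 1 ≤ k) ∧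
      (∀ a b : Fin 3, p213 a < p213 b ↔ σ (f a) < σ (f b))

/-- The number of permutations of length `n` avoiding 4213, 2413 and 2143. -/
noncomputable def hCount (n : ℕ) : ℕ :=
  Nat.card {σ : Equiv.Perm (Fin n) // AvoidsH σ}

/-- The number of permutations of length `n` avoiding 4213 and 2143. -/
noncomputable def dCount (n : ℕ) : ℕ :=
  Nat.card {σ : Equiv.Perm (Fin n) // AvoidsD σ}

/-- The minimal number of top points over all H-griddings of `σ`. -/
noncomputable def topPts {n : ℕ} (σ : Equiv.Perm (Fin n)) : ℕ :=
  n - sSup {k | HGridding σ k}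

/-- The minimal number of left points over all G-griddings of `σ`. -/
noncomputable def leftPts {n : ℕ} (σ : Equiv.Perm (Fin n)) : ℕ :=
  sInf {j | ∃ k, GGridding σ j k}

/-!
Grow the permutations by inserting a new maximum. This creates no 4213 or 2143 iff every 213 either
ends before the insertion site or has the site between its first two letters. The sites after the
new maximum stay active, while one before it survives only if no descent comes before the site or
between it and the new maximum. So the number of descendants of a permutation depends only on how
many active sites there are before, in and after the increasing run that follows the last site
preceded by no descent (on their total number, if every site is preceded by one). The kernel method
solves the resulting functional equation: the generating function is `D = 1 + (1 - 2z) N / Q`, where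
`Q = 1 - 10z + 24z² - 20z³ + 4z⁴` and `N` involves `√((1 - 5z) / (1 - z))`.

The root `α ≈ 0.145` of `Q` is smaller than `1 / 5`, but on the branch of the square root that
occurs `N` vanishes there too, so `D` has no pole at `α`. The dominant singularity is therefore
the square root at `1 / 5`, whose coefficients behave like `5ⁿ n ^ (-3/2)`.
-/

namespace MaxInsertion

open Finset

section Words

variable {f : ℕ → ℕ} {n p q a b m : ℕ}

/-- The word `f` with the letter `m` inserted at position `p`. Words are functions on `ℕ` of which
only the first `n` values matter, so that lengthening them needs no coercions. -/
def insertAt (f : ℕ → ℕ) (p m : ℕ) : ℕ → ℕ :=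
  fun i => if i < p then f i else if i = p then m else f (i - 1)

/-- The position, once a letter has been inserted at `p`, of the letter formerly at `i`. -/
def shift (p i : ℕ) : ℕ := if i < p then i else i + 1

/-- The first `n` letters of `f` are a permutation of `0, …, n - 1`. -/
structure IsWord (f : ℕ → ℕ) (n : ℕ) : Prop where
  lt : ∀ i < n, f i < n
  inj : ∀ i < n, ∀ j < n, f i = f j → i = j

/-- The first `n` letters of `f` avoid the patterns 4213 and 2143. -/
def Avoiding (f : ℕ → ℕ) (n : ℕ) : Prop :=
  ∀ i j k l, i < j → j < k → k < l → l < n →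
    ¬ (f k < f j ∧ f j < f l ∧ f l < f i) ∧ ¬ (f j < f i ∧ f i < f l ∧ f l < f k)

/-- A site at which a new maximum creates neither a 4213 nor a 2143: every occurrence of 213 among
the first `n` letters of `f` either ends before `p` or has `p` between its first two letters. -/
def ActiveSite (f : ℕ → ℕ) (n p : ℕ) : Prop :=
  ∀ i j k, i < j → j < k → k < n → f j < f i → f i < f k → (i < p ∧ p ≤ j) ∨ k < p

lemma insertAt_shift (i : ℕ) : insertAt f p m (shift p i) = f i := by
  unfold insertAt shift; split_ifs <;> first | rfl | omega

lemma insertAt_self : insertAt f p m p = m := by simp [insertAt]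

lemma insertAt_of_lt {i : ℕ} (hi : i < p) : insertAt f p m i = f i := by simp [insertAt, hi]

lemma insertAt_succ {i : ℕ} (hi : p ≤ i) : insertAt f p m (i + 1) = f i := by
  simp [insertAt, show ¬ i + 1 < p by omega, show i + 1 ≠ p by omega]

lemma shift_lt_shift {i j : ℕ} : shift p i < shift p j ↔ i < j := by
  unfold shift; split_ifs <;> omega

lemma shift_lt_succ_iff (hp : p ≤ n) {i : ℕ} : shift p i < n + 1 ↔ i < n := by
  unfold shift; split_ifs <;> omega

lemma shift_lt_self {i : ℕ} : shift p i < p ↔ i < p := by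
  unfold shift; split_ifs <;> omega

lemma self_lt_shift {i : ℕ} : p < shift p i ↔ p ≤ i := by
  unfold shift; split_ifs <;> omega

lemma eq_or_eq_shift (p i : ℕ) : p = i ∨ ∃ j, i = shift p j := by
  rcases lt_trichotomy i p with h | h | h
  · exact Or.inr ⟨i, by simp [shift, h]⟩
  · exact Or.inl h.symm
  · exact Or.inr ⟨i - 1, by unfold shift; split_ifs <;> omega⟩

lemma IsWord.insertAt (hf : IsWord f n) (hp : p ≤ n) : IsWord (insertAt f p n) (n + 1) where
  lt i hi := by
    have := hf.lt
    obtain rfl | ⟨i, rfl⟩ := eq_or_eq_shift p i <;>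
    grind [insertAt_self, insertAt_shift, shift_lt_succ_iff]
  inj i hi j hj h := by
    have := hf.lt
    have := hf.inj
    obtain rfl | ⟨i, rfl⟩ := eq_or_eq_shift p i <;>
    obtain rfl | ⟨j, rfl⟩ := eq_or_eq_shift p j <;>
    grind [insertAt_self, insertAt_shift, shift_lt_succ_iff]

lemma Avoiding.of_insertAt (hp : p ≤ n) (h : Avoiding (insertAt f p m) (n + 1)) :
    Avoiding f n := by
  intro i j k l hij hjk hkl hl
  simpa only [insertAt_shift] using h (shift p i) (shift p j) (shift p k) (shift p l)
    (shift_lt_shift.2 hij) (shift_lt_shift.2 hjk) (shift_lt_shift.2 hkl)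
    ((shift_lt_succ_iff hp).2 hl)

lemma Avoiding.activeSite (hf : IsWord f n) (hp : p ≤ n)
    (h : Avoiding (MaxInsertion.insertAt f p n) (n + 1)) : ActiveSite f n p := by
  intro i j k hij hjk hk hji hik
  have hkn := hf.lt k hk
  by_contra! hc
  rcases lt_or_ge i p with hi | hi
  · have h2143 := (h (shift p i) (shift p j) p (shift p k) (shift_lt_shift.2 hij)
      (shift_lt_self.2 (by omega)) (self_lt_shift.2 (by omega)) ((shift_lt_succ_iff hp).2 hk)).2
    simp only [insertAt_shift, insertAt_self] at h2143
    omega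
  · have h4213 := (h p (shift p i) (shift p j) (shift p k) (self_lt_shift.2 hi)
      (shift_lt_shift.2 hij) (shift_lt_shift.2 hjk) ((shift_lt_succ_iff hp).2 hk)).1
    simp only [insertAt_shift, insertAt_self] at h4213
    omega

lemma Avoiding.insertAt (hf : IsWord f n) (hp : p ≤ n) (h : Avoiding f n)
    (hs : ActiveSite f n p) : Avoiding (insertAt f p n) (n + 1) := by
  intro i j k l hij hjk hkl hl
  have hlt := hf.lt
  obtain rfl | ⟨i, rfl⟩ := eq_or_eq_shift p i <;>
  obtain rfl | ⟨j, rfl⟩ := eq_or_eq_shift p j <;>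
  obtain rfl | ⟨k, rfl⟩ := eq_or_eq_shift p k <;>
  obtain rfl | ⟨l, rfl⟩ := eq_or_eq_shift p l <;>
  simp only [insertAt_self, insertAt_shift, shift_lt_shift, shift_lt_self, self_lt_shift,
    shift_lt_succ_iff hp, lt_irrefl] at * <;>
  grind [ActiveSite, Avoiding]

theorem avoiding_insertAt (hf : IsWord f n) (hp : p ≤ n) :
    Avoiding (insertAt f p n) (n + 1) ↔ Avoiding f n ∧ ActiveSite f n p :=
  ⟨fun h => ⟨h.of_insertAt hp, h.activeSite hf hp⟩, fun h => h.1.insertAt hf hp h.2⟩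

lemma activeSite_insertAt_succ (hf : IsWord f n) (hp : p ≤ n) (hq : p ≤ q) :
    ActiveSite (insertAt f p n) (n + 1) (q + 1) ↔ ActiveSite f n q := by
  have hlt := hf.lt
  constructor
  · intro h i j k hij hjk hk hji hik
    have := h (shift p i) (shift p j) (shift p k) (shift_lt_shift.2 hij) (shift_lt_shift.2 hjk)
      ((shift_lt_succ_iff hp).2 hk) (by simpa only [insertAt_shift])
      (by simpa only [insertAt_shift])
    grind [shift]
  · intro h i j k hij hjk hk hji hik
    obtain rfl | ⟨i, rfl⟩ := eq_or_eq_shift p i <;>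
    obtain rfl | ⟨j, rfl⟩ := eq_or_eq_shift p j <;>
    obtain rfl | ⟨k, rfl⟩ := eq_or_eq_shift p k <;>
    simp only [insertAt_self, insertAt_shift, shift_lt_shift, shift_lt_self, self_lt_shift,
      shift_lt_succ_iff hp, lt_irrefl] at * <;>
    grind [ActiveSite, shift]

/-- Letters `f j < f i` with `i < j < p` form a 213 with the new maximum. -/
lemma ActiveSite.lt_of_insertAt (hf : IsWord f n) (hp : p ≤ n)
    (h : ActiveSite (insertAt f p n) (n + 1) q) {i j : ℕ} (hij : i < j) (hj : j < p) (hqp : q ≤ p)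
    (hq : ¬ (i < q ∧ q ≤ j)) : f i < f j := by
  have hlt := hf.lt
  have hinj := hf.inj i (by omega) j (by omega)
  have := h i j p hij hj (by omega)
  rw [insertAt_of_lt hj, insertAt_of_lt (hij.trans hj), insertAt_self] at this
  grind

lemma activeSite_insertAt_of_le (hf : IsWord f n) (hp : p ≤ n) (hq : q ≤ p) :
    ActiveSite (insertAt f p n) (n + 1) q ↔
      ActiveSite f n q ∧ StrictMonoOn f (Set.Ico 0 q) ∧ StrictMonoOn f (Set.Ico q p) := by
  have hlt := hf.lt
  constructor
  · intro h
    refine ⟨fun i j k hij hjk hk hji hik => ?_, fun i _ j hj hij => ?_, fun i hi j hj hij => ?_⟩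
    · have := h (shift p i) (shift p j) (shift p k) (shift_lt_shift.2 hij) (shift_lt_shift.2 hjk)
        ((shift_lt_succ_iff hp).2 hk) (by simpa only [insertAt_shift])
        (by simpa only [insertAt_shift])
      have := h.lt_of_insertAt hf hp hij (q := q)
      grind [shift]
    · exact h.lt_of_insertAt hf hp hij (hj.2.trans_le hq) hq (by have := hj.2; omega)
    · exact h.lt_of_insertAt hf hp hij hj.2 hq (by have := hi.1; omega)
  · rintro ⟨h, h₀, h₁⟩ i j k hij hjk hk hji hik
    simp only [StrictMonoOn, Set.mem_Ico] at h₀ h₁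
    obtain rfl | ⟨i, rfl⟩ := eq_or_eq_shift p i <;>
    obtain rfl | ⟨j, rfl⟩ := eq_or_eq_shift p j <;>
    obtain rfl | ⟨k, rfl⟩ := eq_or_eq_shift p k <;>
    simp only [insertAt_self, insertAt_shift, shift_lt_shift, shift_lt_self, self_lt_shift,
      shift_lt_succ_iff hp, lt_irrefl] at * <;>
    grind [ActiveSite, shift]

lemma strictMonoOn_insertAt_of_le (hb : b ≤ p) :
    StrictMonoOn (insertAt f p m) (Set.Ico a b) ↔ StrictMonoOn f (Set.Ico a b) :=
  Set.EqOn.congr_strictMonoOn fun _ hi => insertAt_of_lt (hi.2.trans_le hb)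

lemma strictMonoOn_insertAt_succ (ha : p ≤ a) :
    StrictMonoOn (insertAt f p m) (Set.Ico (a + 1) (b + 1)) ↔ StrictMonoOn f (Set.Ico a b) := by
  have hshift : ∀ i ∈ Set.Ico a b, insertAt f p m (i + 1) = f i :=
    fun i hi => insertAt_succ (ha.trans hi.1)
  constructor
  · intro h i hi j hj hij
    simpa only [hshift i hi, hshift j hj] using
      h (Set.mem_Ico.2 ⟨by grind, by grind⟩ : i + 1 ∈ Set.Ico (a + 1) (b + 1))
        (Set.mem_Ico.2 ⟨by grind, by grind⟩ : j + 1 ∈ Set.Ico (a + 1) (b + 1)) (by omega)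
  · rintro h (_ | i) hi (_ | j) hj hij
    all_goals grind [StrictMonoOn]

lemma strictMonoOn_insertAt_succ_self (hf : IsWord f n) (hp : p ≤ n) :
    StrictMonoOn (insertAt f p n) (Set.Ico a (p + 1)) ↔ StrictMonoOn f (Set.Ico a p) := by
  rw [← strictMonoOn_insertAt_of_le (f := f) (m := n) le_rfl]
  refine ⟨fun h => h.mono (Set.Ico_subset_Ico_right p.le_succ), fun h i hi j hj hij => ?_⟩
  rcases Nat.lt_succ_iff_lt_or_eq.1 hj.2 with hjp | rfl
  · exact h ⟨hi.1, hij.trans hjp⟩ ⟨hj.1, hjp⟩ hij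
  · rw [insertAt_self, insertAt_of_lt hij]
    exact hf.lt i (by omega)

lemma not_strictMonoOn_insertAt (hf : IsWord f n) (ha : a ≤ p) (hpb : p + 1 < b)
    (hb : b ≤ n + 1) : ¬ StrictMonoOn (insertAt f p n) (Set.Ico a b) := by
  intro h
  have hlt := h (Set.mem_Ico.2 ⟨ha, by omega⟩ : p ∈ Set.Ico a b)
    (Set.mem_Ico.2 ⟨by omega, hpb⟩ : p + 1 ∈ Set.Ico a b) p.lt_succ_self
  rw [insertAt_self, insertAt_succ le_rfl] at hlt
  have := hf.lt p (by omega)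
  omega

end Words

section Sites

variable {f : ℕ → ℕ} {n p q c r t : ℕ}

open Classical in
/-- The active sites of the word `f` of length `n`. -/
noncomputable def sites (f : ℕ → ℕ) (n : ℕ) : Finset ℕ := {p ∈ range (n + 1) | ActiveSite f n p}

lemma mem_sites : p ∈ sites f n ↔ p ≤ n ∧ ActiveSite f n p := by simp [sites]

lemma le_of_mem_sites (hp : p ∈ sites f n) : p ≤ n := (mem_sites.1 hp).1

lemma succ_mem_sites_insertAt (hf : IsWord f n) (hp : p ≤ n) (hq : p ≤ q) :
    q + 1 ∈ sites (insertAt f p n) (n + 1) ↔ q ∈ sites f n := by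
  rw [mem_sites, mem_sites, activeSite_insertAt_succ hf hp hq, Nat.succ_le_succ_iff]

lemma mem_sites_insertAt_of_le (hf : IsWord f n) (hp : p ≤ n) (hq : q ≤ p) :
    q ∈ sites (insertAt f p n) (n + 1) ↔
      q ∈ sites f n ∧ StrictMonoOn f (Set.Ico 0 q) ∧ StrictMonoOn f (Set.Ico q p) := by
  rw [mem_sites, mem_sites, activeSite_insertAt_of_le hf hp hq]
  grind

lemma card_filter_sites_insertAt (hf : IsWord f n) (hp : p ≤ n) (P : ℕ → Prop)
    [DecidablePred P] :
    #{q ∈ sites (insertAt f p n) (n + 1) | p < q ∧ P q} =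
      #{q ∈ sites f n | p ≤ q ∧ P (q + 1)} := by
  refine (card_nbij (· + 1) (fun q hq => ?_) (add_left_injective 1).injOn fun q hq => ?_).symm
  · grind [succ_mem_sites_insertAt]
  · obtain ⟨hqs, hpq, hq⟩ := mem_filter.1 hq
    refine ⟨q - 1, mem_filter.2 ?_, by grind⟩
    rw [← succ_mem_sites_insertAt hf hp (by omega), Nat.sub_add_cancel (by omega)]
    exact ⟨hqs, by omega, hq⟩

/-- The number of words obtained from the word `f` of length `n` by `m` successive insertions of
a new maximum at an active site. -/
noncomputable def descendants : ℕ → (ℕ → ℕ) → ℕ → ℕ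
  | 0, _, _ => 1
  | m + 1, f, n => ∑ p ∈ sites f n, descendants m (insertAt f p n) (n + 1)

/-- A word each of whose active sites is preceded by a descent. -/
def Dead (f : ℕ → ℕ) (n : ℕ) : Prop := ∀ p ∈ sites f n, ¬ StrictMonoOn f (Set.Ico 0 p)

open Classical in
/-- The active sites to the right of `c` up to which the word increases from `c` on. -/
noncomputable def runSites (f : ℕ → ℕ) (n c : ℕ) : Finset ℕ :=
  {p ∈ sites f n | c < p ∧ StrictMonoOn f (Set.Ico c p)}

open Classical in
/-- The active sites to the right of `c` that are separated from `c` by a descent. -/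
noncomputable def lateSites (f : ℕ → ℕ) (n c : ℕ) : Finset ℕ :=
  {p ∈ sites f n | c < p ∧ ¬ StrictMonoOn f (Set.Ico c p)}

/-- A word with an active site preceded by no descent, the last of which is `c`; the other active
sites are `r` sites before `c`, `q` sites in the increasing run from `c` on, and `t` later ones. -/
structure Live (f : ℕ → ℕ) (n c r q t : ℕ) : Prop where
  mem_sites : c ∈ sites f n
  incr : StrictMonoOn f (Set.Ico 0 c)
  not_incr : ∀ p ∈ sites f n, c < p → ¬ StrictMonoOn f (Set.Ico 0 p)
  card_before : #{p ∈ sites f n | p < c} = r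
  card_run : #(runSites f n c) = q
  card_late : #(lateSites f n c) = t

lemma dead_insertAt (hf : IsWord f n) (hp : p ∈ sites f n)
    (hsites : ∀ q ∈ sites f n, q ≤ p → StrictMonoOn f (Set.Ico 0 q) →
      ¬ StrictMonoOn f (Set.Ico q p)) : Dead (insertAt f p n) (n + 1) := by
  have hpn := le_of_mem_sites hp
  intro x hx
  rcases le_or_gt x p with hxp | hxp
  · obtain ⟨hxs, h₀, h₁⟩ := (mem_sites_insertAt_of_le hf hpn hxp).1 hx
    exact absurd h₁ (hsites x hxs hxp h₀)
  · rcases (Nat.succ_le_iff.2 hxp).eq_or_lt with rfl | hpx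
    · rw [Nat.succ_eq_add_one, strictMonoOn_insertAt_succ_self hf hpn]
      exact fun h => hsites p hp le_rfl h (by simp [StrictMonoOn])
    · exact not_strictMonoOn_insertAt hf p.zero_le hpx (le_of_mem_sites hx)

lemma card_sites_insertAt (hf : IsWord f n) (hp : p ∈ sites f n)
    (hsites : ∀ q ∈ sites f n, q ≤ p → StrictMonoOn f (Set.Ico 0 q) →
      ¬ StrictMonoOn f (Set.Ico q p)) :
    #(sites (insertAt f p n) (n + 1)) = #{q ∈ sites f n | p ≤ q} := by
  have hpn := le_of_mem_sites hp
  have hcard := card_filter_sites_insertAt hf hpn fun _ => True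
  simp only [and_true] at hcard
  rw [← hcard, filter_true_of_mem fun x hx => ?_]
  by_contra! hxp
  obtain ⟨hxs, h₀, h₁⟩ := (mem_sites_insertAt_of_le hf hpn hxp).1 hx
  exact hsites x hxs hxp h₀ h₁

lemma strictMonoOn_Ico_of_overlap {a b c d : ℕ} (h₁ : StrictMonoOn f (Set.Ico a c))
    (h₂ : StrictMonoOn f (Set.Ico b d)) (hbc : b < c) : StrictMonoOn f (Set.Ico a d) := by
  intro i hi j hj hij
  simp only [Set.mem_Ico] at hi hj
  rcases lt_or_ge j c with hjc | hjc
  · exact h₁ (Set.mem_Ico.2 (by omega)) (Set.mem_Ico.2 (by omega)) hij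
  rcases le_or_gt b i with hbi | hbi
  · exact h₂ (Set.mem_Ico.2 (by omega)) (Set.mem_Ico.2 (by omega)) hij
  · calc f i ≤ f (c - 1) := h₁.monotoneOn (Set.mem_Ico.2 (by omega)) (Set.mem_Ico.2 (by omega))
          (by omega)
      _ < f j := h₂ (Set.mem_Ico.2 (by omega)) (Set.mem_Ico.2 (by omega)) (by omega)

lemma Live.not_strictMonoOn (h : Live f n c r q t) (hp : p ∈ sites f n) (hcp : c < p) {x : ℕ}
    (hx : x < c) : ¬ StrictMonoOn f (Set.Ico x p) :=
  fun hxp => h.not_incr p hp hcp (strictMonoOn_Ico_of_overlap h.incr hxp hx)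

lemma Live.card_after (h : Live f n c r q t) : #{p ∈ sites f n | c < p} = q + t := by
  classical
  rw [← h.card_run, ← h.card_late, runSites, lateSites, ← filter_filter, ← filter_filter,
    card_filter_add_card_filter_not]

lemma card_runSites_insertAt (hf : IsWord f n) (hp : p ≤ n) :
    #(runSites (insertAt f p n) (n + 1) (p + 1)) = #(runSites f n p) := by
  classical
  rw [runSites, runSites]
  convert card_filter_sites_insertAt hf hp
    fun x => p + 1 < x ∧ StrictMonoOn (insertAt f p n) (Set.Ico (p + 1) x) using 3 with x
  · grind
  · rw [strictMonoOn_insertAt_succ le_rfl]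
    grind

lemma card_lateSites_insertAt (hf : IsWord f n) (hp : p ≤ n) :
    #(lateSites (insertAt f p n) (n + 1) (p + 1)) = #(lateSites f n p) := by
  classical
  rw [lateSites, lateSites]
  convert card_filter_sites_insertAt hf hp
    fun x => p + 1 < x ∧ ¬ StrictMonoOn (insertAt f p n) (Set.Ico (p + 1) x) using 3 with x
  · grind
  · rw [strictMonoOn_insertAt_succ le_rfl]
    grind

lemma card_filter_le_eq {α : Type*} [LinearOrder α] {s : Finset α} {a : α} (ha : a ∈ s) :
    #{x ∈ s | x ≤ a} = #{x ∈ s | x < a} + 1 := by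
  rw [← card_insert_of_notMem (a := a) (by simp)]
  congr 1
  grind

lemma card_before_insertAt (hf : IsWord f n) (hp : p ∈ sites f n)
    (hincr : StrictMonoOn f (Set.Ico 0 p)) :
    #{x ∈ sites (insertAt f p n) (n + 1) | x < p + 1} = #{x ∈ sites f n | x < p} + 1 := by
  rw [← card_filter_le_eq hp]
  congr 1
  ext x
  simp only [mem_filter, Nat.lt_succ_iff, and_congr_left_iff]
  intro hxp
  rw [mem_sites_insertAt_of_le hf (le_of_mem_sites hp) hxp, and_iff_left_iff_imp]
  exact fun _ => ⟨hincr.mono (Set.Ico_subset_Ico_right hxp),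
    hincr.mono (Set.Ico_subset_Ico_left x.zero_le)⟩

lemma Live.insertAt_peak (hf : IsWord f n) (h : Live f n c r q t) :
    Live (insertAt f c n) (n + 1) (c + 1) (r + 1) q t where
  mem_sites :=
    (succ_mem_sites_insertAt hf (le_of_mem_sites h.mem_sites) le_rfl).2 h.mem_sites
  incr := (strictMonoOn_insertAt_succ_self hf (le_of_mem_sites h.mem_sites)).2 h.incr
  not_incr x hx hcx := not_strictMonoOn_insertAt hf c.zero_le hcx (le_of_mem_sites hx)
  card_before := by rw [card_before_insertAt hf h.mem_sites h.incr, h.card_before]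
  card_run := by rw [card_runSites_insertAt hf (le_of_mem_sites h.mem_sites), h.card_run]
  card_late := by rw [card_lateSites_insertAt hf (le_of_mem_sites h.mem_sites), h.card_late]

lemma Live.card_runSites_before (h : Live f n c r q t) (hp : p ∈ sites f n) (hpc : p < c) :
    #(runSites f n p) = r - #{x ∈ sites f n | x < p} := by
  have hrun : runSites f n p = {x ∈ sites f n | x ≤ c} \ {x ∈ sites f n | x ≤ p} := by
    ext x
    simp only [runSites, mem_filter]
    have hincr : x ≤ c → StrictMonoOn f (Set.Ico p x) := fun hxc =>
      h.incr.mono (Set.Ico_subset_Ico p.zero_le hxc)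
    have := h.not_strictMonoOn (p := x) (x := p)
    grind
  rw [hrun, card_sdiff_of_subset (monotone_filter_right _ fun x _ hx => hx.trans hpc.le),
    card_filter_le_eq h.mem_sites, card_filter_le_eq hp, h.card_before, Nat.add_sub_add_right]

lemma Live.card_lateSites_before (h : Live f n c r q t) (hpc : p < c) :
    #(lateSites f n p) = q + t := by
  rw [← h.card_after]
  congr 1
  ext x
  simp only [lateSites, mem_filter, and_congr_right_iff]
  intro hx
  have hincr : x ≤ c → StrictMonoOn f (Set.Ico p x) := fun hxc =>
    h.incr.mono (Set.Ico_subset_Ico p.zero_le hxc)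
  have := h.not_strictMonoOn hx (x := p)
  grind

lemma Live.insertAt_before (hf : IsWord f n) (h : Live f n c r q t) (hp : p ∈ sites f n)
    (hpc : p < c) :
    Live (insertAt f p n) (n + 1) (p + 1) (#{x ∈ sites f n | x < p} + 1)
      (r - #{x ∈ sites f n | x < p}) (q + t) := by
  have hpn := le_of_mem_sites hp
  have hincr : StrictMonoOn f (Set.Ico 0 p) := h.incr.mono (Set.Ico_subset_Ico_right hpc.le)
  exact {
    mem_sites := (succ_mem_sites_insertAt hf hpn le_rfl).2 hp
    incr := (strictMonoOn_insertAt_succ_self hf hpn).2 hincr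
    not_incr x hx hpx := not_strictMonoOn_insertAt hf p.zero_le hpx (le_of_mem_sites hx)
    card_before := card_before_insertAt hf hp hincr
    card_run := by rw [card_runSites_insertAt hf hpn, h.card_runSites_before hp hpc]
    card_late := by rw [card_lateSites_insertAt hf hpn, h.card_lateSites_before hpc] }

lemma Live.mem_sites_insertAt_run (hf : IsWord f n) (h : Live f n c r q t)
    (hp : p ∈ runSites f n c) {x : ℕ} :
    x ∈ sites (insertAt f p n) (n + 1) ↔ x = c ∨ (p < x ∧ x - 1 ∈ sites f n) := by
  simp only [runSites, mem_filter] at hp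
  obtain ⟨hps, hcp, hrun⟩ := hp
  have hpn := le_of_mem_sites hps
  rcases le_or_gt x p with hxp | hxp
  · rw [mem_sites_insertAt_of_le hf hpn hxp]
    have := h.not_incr x
    have := h.not_strictMonoOn hps hcp (x := x)
    have := h.incr
    have := h.mem_sites
    grind
  · obtain ⟨y, rfl⟩ : ∃ y, x = y + 1 := ⟨x - 1, by omega⟩
    rw [succ_mem_sites_insertAt hf hpn (by omega)]
    grind

lemma Live.card_filter_lt_of_run (h : Live f n c r q t) (hp : p ∈ runSites f n c) :
    #{x ∈ sites f n | p < x} = #{x ∈ runSites f n c | p < x} + t := by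
  classical
  simp only [runSites, mem_filter] at hp
  rw [← h.card_late, ← card_filter_add_card_filter_not (s := {x ∈ sites f n | p < x})
    (fun x => StrictMonoOn f (Set.Ico c x)), lateSites, runSites]
  have hmono : ∀ x, ¬ StrictMonoOn f (Set.Ico c x) → p < x := fun x hx => by
    by_contra! hxp
    exact hx (hp.2.2.mono (Set.Ico_subset_Ico_right hxp))
  congr 2 <;> grind

lemma Live.insertAt_run (hf : IsWord f n) (h : Live f n c r q t) (hp : p ∈ runSites f n c) :
    Live (insertAt f p n) (n + 1) c 0 1 (#{x ∈ runSites f n c | p < x} + t) := by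
  have hmem : ∀ x, _ := fun x => h.mem_sites_insertAt_run hf hp (x := x)
  have hcard := h.card_filter_lt_of_run hp
  simp only [runSites, mem_filter] at hp
  obtain ⟨hps, hcp, hrun⟩ := hp
  have hpn := le_of_mem_sites hps
  have hbroken : ∀ a ≤ p, ∀ x ∈ sites (insertAt f p n) (n + 1), p + 1 < x →
      ¬ StrictMonoOn (insertAt f p n) (Set.Ico a x) := fun a ha x hx hpx =>
    not_strictMonoOn_insertAt hf ha hpx (le_of_mem_sites hx)
  have hpeak : ∀ a, StrictMonoOn (insertAt f p n) (Set.Ico a (p + 1)) ↔ _ :=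
    fun a => strictMonoOn_insertAt_succ_self hf hpn
  refine ⟨(hmem c).2 (Or.inl rfl), (strictMonoOn_insertAt_of_le hcp.le).2 h.incr, ?_, ?_, ?_, ?_⟩
  · have := h.not_incr p hps hcp
    grind
  · grind [card_eq_zero]
  · rw [card_eq_one]
    exact ⟨p + 1, by grind [runSites]⟩
  · rw [← hcard]
    calc #(lateSites (insertAt f p n) (n + 1) c)
        = #{x ∈ sites (insertAt f p n) (n + 1) | p < x ∧ p + 1 < x} := by
          congr 1
          grind [lateSites]
      _ = #{x ∈ sites f n | p < x} := by
          rw [card_filter_sites_insertAt hf hpn]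
          congr 1
          grind

lemma mem_sites_of_mem_runSites (hp : p ∈ runSites f n c) : p ∈ sites f n := by
  simp only [runSites, mem_filter] at hp
  exact hp.1

lemma mem_sites_of_mem_lateSites (hp : p ∈ lateSites f n c) : p ∈ sites f n := by
  simp only [lateSites, mem_filter] at hp
  exact hp.1

lemma Live.not_strictMonoOn_late (h : Live f n c r q t) (hp : p ∈ lateSites f n c) {x : ℕ}
    (hx : x ∈ sites f n) (hincr : StrictMonoOn f (Set.Ico 0 x)) :
    ¬ StrictMonoOn f (Set.Ico x p) := by
  simp only [lateSites, mem_filter] at hp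
  rcases lt_trichotomy x c with hxc | rfl | hcx
  · exact h.not_strictMonoOn hp.1 hp.2.1 hxc
  · exact hp.2.2
  · exact absurd hincr (h.not_incr x hx hcx)

lemma Live.dead_insertAt_late (hf : IsWord f n) (h : Live f n c r q t)
    (hp : p ∈ lateSites f n c) : Dead (insertAt f p n) (n + 1) :=
  dead_insertAt hf (mem_sites_of_mem_lateSites hp) fun _ hx _ =>
    h.not_strictMonoOn_late hp hx

lemma Live.card_sites_insertAt_late (hf : IsWord f n) (h : Live f n c r q t)
    (hp : p ∈ lateSites f n c) :
    #(sites (insertAt f p n) (n + 1)) = #{x ∈ lateSites f n c | p < x} + 1 := by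
  rw [card_sites_insertAt hf (mem_sites_of_mem_lateSites hp) fun _ hx _ =>
      h.not_strictMonoOn_late hp hx,
    ← card_insert_of_notMem (a := p) (by simp)]
  simp only [lateSites, mem_filter] at hp
  have hlate : ∀ x, p ≤ x → ¬ StrictMonoOn f (Set.Ico c x) := fun x hpx hx =>
    hp.2.2 (hx.mono (Set.Ico_subset_Ico_right hpx))
  congr 1
  grind [lateSites]

end Sites

section Counting

variable {f : ℕ → ℕ} {n c r q t : ℕ}

lemma sum_card_filter_lt {α M : Type*} [LinearOrder α] [AddCommMonoid M] (s : Finset α)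
    (F : ℕ → M) : ∑ p ∈ s, F #{x ∈ s | x < p} = ∑ i ∈ range #s, F i := by
  induction s using Finset.induction_on_max with
  | empty => simp
  | insert a s hlt ih =>
    have ha : a ∉ s := fun h => (hlt a h).false
    rw [sum_insert ha, card_insert_of_notMem ha, sum_range_succ_comm, ← ih]
    congr 1
    · congr 2
      grind
    · refine sum_congr rfl fun p hp => ?_
      congr 2
      have := hlt p hp
      grind

lemma sum_card_filter_gt {α M : Type*} [LinearOrder α] [AddCommMonoid M] (s : Finset α)
    (F : ℕ → M) : ∑ p ∈ s, F #{x ∈ s | p < x} = ∑ i ∈ range #s, F i :=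
  sum_card_filter_lt (α := αᵒᵈ) s F

/-- The generating functions of the numbers of descendants of the dead words with `k` active sites
and of the live words with parameters `r, q, t`, as determined by the generating tree. -/
structure TreeSeries {R : Type*} [CommSemiring R] (dead : ℕ → R⟦X⟧) (live : ℕ → ℕ → ℕ → R⟦X⟧) :
    Prop where
  dead_eq (k : ℕ) : dead k = 1 + X * ∑ j ∈ range k, dead (j + 1)
  live_eq (r q t : ℕ) : live r q t = 1 + X * (∑ i ∈ range r, live (i + 1) (r - i) (q + t) +
    live (r + 1) q t + ∑ j ∈ range q, live 0 1 (j + t) + ∑ j ∈ range t, dead (j + 1))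

lemma Live.sum_sites {M : Type*} [AddCommMonoid M] (h : Live f n c r q t) (F : ℕ → M) :
    ∑ p ∈ sites f n, F p = ∑ p ∈ sites f n with p < c, F p + F c + ∑ p ∈ runSites f n c, F p +
      ∑ p ∈ lateSites f n c, F p := by
  classical
  rw [← sum_filter_add_sum_filter_not (sites f n) (· < c),
    ← sum_filter_add_sum_filter_not (filter (¬ · < c) (sites f n)) (· = c),
    ← sum_filter_add_sum_filter_not (filter (¬ · = c) _) (fun p => StrictMonoOn f (Set.Ico c p))]
  have hc := h.mem_sites
  have hpeak : {p ∈ {p ∈ sites f n | ¬ p < c} | p = c} = {c} := by grind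
  rw [hpeak, sum_singleton, add_assoc, add_assoc]
  congr 3 <;> congr 1 <;> grind [runSites, lateSites]

variable {R : Type*} [CommSemiring R] {dead : ℕ → R⟦X⟧} {live : ℕ → ℕ → ℕ → R⟦X⟧}

lemma TreeSeries.descendants_dead (T : TreeSeries dead live) (m : ℕ) (hf : IsWord f n)
    (h : Dead f n) : (descendants m f n : R) = coeff m (dead #(sites f n)) := by
  induction m generalizing f n with
  | zero => rw [T.dead_eq]; simp [descendants]
  | succ m ih =>
    have hsites : ∀ p, ∀ q ∈ sites f n, q ≤ p → StrictMonoOn f (Set.Ico 0 q) →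
        ¬ StrictMonoOn f (Set.Ico q p) := fun _ q hq _ hincr => absurd hincr (h q hq)
    rw [T.dead_eq, map_add, coeff_one, if_neg m.succ_ne_zero, zero_add, coeff_succ_X_mul, map_sum,
      ← sum_card_filter_gt (sites f n) fun j => coeff m (dead (j + 1)), descendants, Nat.cast_sum]
    refine sum_congr rfl fun p hp => ?_
    rw [ih (hf.insertAt (le_of_mem_sites hp)) (dead_insertAt hf hp (hsites p)),
      card_sites_insertAt hf hp (hsites p), ← card_insert_of_notMem (a := p) (by simp)]
    congr 3
    grind

theorem TreeSeries.descendants_live (T : TreeSeries dead live) (m : ℕ) (hf : IsWord f n)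
    (h : Live f n c r q t) : (descendants m f n : R) = coeff m (live r q t) := by
  induction m generalizing f n c r q t with
  | zero => rw [T.live_eq]; simp [descendants]
  | succ m ih =>
    have hword : ∀ p ∈ sites f n, IsWord (insertAt f p n) (n + 1) := fun p hp =>
      hf.insertAt (le_of_mem_sites hp)
    have hbefore : ∑ p ∈ sites f n with p < c, (descendants m (insertAt f p n) (n + 1) : R) =
        ∑ i ∈ range r, coeff m (live (i + 1) (r - i) (q + t)) := by
      rw [← h.card_before, ← sum_card_filter_lt]
      refine sum_congr rfl fun p hp => ?_
      obtain ⟨hps, hpc⟩ := mem_filter.1 hp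
      rw [ih (hword p hps) (h.insertAt_before hf hps hpc), h.card_before, filter_filter]
      congr! 5 <;> grind
    have hrun : ∑ p ∈ runSites f n c, (descendants m (insertAt f p n) (n + 1) : R) =
        ∑ j ∈ range q, coeff m (live 0 1 (j + t)) := by
      rw [← h.card_run, ← sum_card_filter_gt]
      refine sum_congr rfl fun p hp => ?_
      exact ih (hword p (mem_sites_of_mem_runSites hp)) (h.insertAt_run hf hp)
    have hlate : ∑ p ∈ lateSites f n c, (descendants m (insertAt f p n) (n + 1) : R) =
        ∑ j ∈ range t, coeff m (dead (j + 1)) := by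
      rw [← h.card_late, ← sum_card_filter_gt _ fun j => coeff m (dead (j + 1))]
      refine sum_congr rfl fun p hp => ?_
      rw [T.descendants_dead m (hword p (mem_sites_of_mem_lateSites hp))
        (h.dead_insertAt_late hf hp), h.card_sites_insertAt_late hf hp]
    rw [T.live_eq, map_add, coeff_one, if_neg m.succ_ne_zero, zero_add, coeff_succ_X_mul,
      descendants, Nat.cast_sum, h.sum_sites, hbefore, hrun, hlate,
      ih (hword c h.mem_sites) (h.insertAt_peak hf)]
    simp only [map_add, map_sum]

lemma live_zero (f : ℕ → ℕ) : Live f 0 0 0 0 0 := by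
  have hs : sites f 0 = {0} := by
    ext x
    simp only [mem_sites, mem_singleton]
    grind [ActiveSite]
  constructor <;> simp [hs, runSites, lateSites, StrictMonoOn]

end Counting

section Permutations

variable {n : ℕ}

lemma patternContains_iff_of_inverse {k : ℕ} {σ : Equiv.Perm (Fin n)} {π e : Fin k → Fin k}
    (hl : Function.LeftInverse e π) (hr : Function.RightInverse e π) :
    PatternContains σ π ↔ ∃ f : Fin k → Fin n, StrictMono f ∧ StrictMono (σ ∘ f ∘ e) := by
  refine exists_congr fun f => and_congr_right fun _ => ⟨fun h a b hab => ?_, fun h a b => ?_⟩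
  · rwa [Function.comp_apply, Function.comp_apply, Function.comp_apply, Function.comp_apply,
      ← h, hr, hr]
  · simpa only [Function.comp_apply, hl a, hl b] using (h.lt_iff_lt (a := π a) (b := π b)).symm

lemma exists_strictMono_fin_four {α : Type*} [Preorder α] {P : (Fin 4 → α) → Prop} :
    (∃ f, StrictMono f ∧ P f) ↔ ∃ i j k l, i < j ∧ j < k ∧ k < l ∧ P ![i, j, k, l] := by
  constructor
  · rintro ⟨f, hf, hP⟩
    refine ⟨f 0, f 1, f 2, f 3, hf (by decide), hf (by decide), hf (by decide), ?_⟩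
    rwa [show ![f 0, f 1, f 2, f 3] = f from List.ofFn_inj.1 rfl]
  · rintro ⟨i, j, k, l, hij, hjk, hkl, hP⟩
    refine ⟨_, ?_, hP⟩
    simp [Fin.strictMono_iff_lt_succ, Fin.forall_fin_succ, hij, hjk, hkl]

lemma patternContains_p4213_iff {σ : Equiv.Perm (Fin n)} :
    PatternContains σ p4213 ↔ ∃ i j k l, i < j ∧ j < k ∧ k < l ∧
      σ k < σ j ∧ σ j < σ l ∧ σ l < σ i := by
  rw [patternContains_iff_of_inverse (e := ![2, 1, 3, 0]) (by decide) (by decide),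
    exists_strictMono_fin_four]
  simp [Fin.strictMono_iff_lt_succ, Fin.forall_fin_succ]

lemma patternContains_p2143_iff {σ : Equiv.Perm (Fin n)} :
    PatternContains σ p2143 ↔ ∃ i j k l, i < j ∧ j < k ∧ k < l ∧
      σ j < σ i ∧ σ i < σ l ∧ σ l < σ k := by
  rw [patternContains_iff_of_inverse (e := ![1, 0, 3, 2]) (by decide) (by decide),
    exists_strictMono_fin_four]
  simp [Fin.strictMono_iff_lt_succ, Fin.forall_fin_succ]

/-- The word of a permutation, extended by zeros. -/
def toWord (σ : Equiv.Perm (Fin n)) : ℕ → ℕ := fun i => if h : i < n then σ ⟨i, h⟩ else 0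

lemma toWord_coe (σ : Equiv.Perm (Fin n)) (i : Fin n) : toWord σ i = σ i := by
  simp [toWord]

lemma isWord_toWord (σ : Equiv.Perm (Fin n)) : IsWord (toWord σ) n where
  lt i hi := by
    rw [toWord_coe σ ⟨i, hi⟩]
    exact (σ ⟨i, hi⟩).isLt
  inj i hi j hj h := by
    rw [toWord_coe σ ⟨i, hi⟩, toWord_coe σ ⟨j, hj⟩] at h
    exact congrArg Fin.val (σ.injective (Fin.ext h))

lemma avoidsD_iff (σ : Equiv.Perm (Fin n)) : AvoidsD σ ↔ Avoiding (toWord σ) n := by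
  simp only [AvoidsD, PatternAvoids, patternContains_p4213_iff, patternContains_p2143_iff]
  constructor
  · rintro ⟨h4213, h2143⟩ i j k l hij hjk hkl hl
    lift l to Fin n using hl
    lift k to Fin n using hkl.trans l.isLt
    lift j to Fin n using hjk.trans k.isLt
    lift i to Fin n using hij.trans j.isLt
    simp only [toWord_coe, Fin.val_fin_lt] at hij hjk hkl ⊢
    exact ⟨fun h => h4213 ⟨i, j, k, l, hij, hjk, hkl, h⟩,
      fun h => h2143 ⟨i, j, k, l, hij, hjk, hkl, h⟩⟩
  · intro h
    have havoid := fun i j k l : Fin n => h i j k l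
    simp only [toWord_coe, Fin.val_fin_lt] at havoid
    exact ⟨fun ⟨i, j, k, l, hij, hjk, hkl, hc⟩ => (havoid i j k l hij hjk hkl l.isLt).1 hc,
      fun ⟨i, j, k, l, hij, hjk, hkl, hc⟩ => (havoid i j k l hij hjk hkl l.isLt).2 hc⟩

/-- The permutation obtained from `σ` by inserting a new maximum at position `p`. -/
def insertMax (p : Fin (n + 1)) (σ : Equiv.Perm (Fin n)) : Equiv.Perm (Fin (n + 1)) :=
  (finSuccEquiv' p).trans ((Equiv.optionCongr σ).trans (finSuccEquiv' (Fin.last n)).symm)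

lemma insertMax_self (p : Fin (n + 1)) (σ : Equiv.Perm (Fin n)) :
    insertMax p σ p = Fin.last n := by
  simp [insertMax]

lemma insertMax_succAbove (p : Fin (n + 1)) (σ : Equiv.Perm (Fin n)) (i : Fin n) :
    insertMax p σ (p.succAbove i) = (σ i).castSucc := by
  simp [insertMax]

lemma toWord_insertMax (p : Fin (n + 1)) (σ : Equiv.Perm (Fin n)) :
    toWord (insertMax p σ) = insertAt (toWord σ) p n := by
  ext i
  obtain rfl | ⟨j, rfl⟩ := eq_or_eq_shift p i
  · rw [toWord_coe, insertMax_self, insertAt_self, Fin.val_last]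
  rw [insertAt_shift]
  by_cases hj : j < n
  · have hshift : shift p j = (p.succAbove ⟨j, hj⟩ : Fin (n + 1)) := by
      simp only [shift, Fin.succAbove, Fin.lt_def, Fin.val_castSucc]
      split_ifs <;> rfl
    rw [hshift, toWord_coe, insertMax_succAbove, toWord_coe σ ⟨j, hj⟩, Fin.val_castSucc]
  · rw [toWord, dif_neg (by rwa [shift_lt_succ_iff p.is_le]), toWord, dif_neg hj]

lemma insertMax_bijective :
    Function.Bijective fun x : Fin (n + 1) × Equiv.Perm (Fin n) => insertMax x.1 x.2 := by
  rw [Fintype.bijective_iff_injective_and_card]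
  refine ⟨?_, by simp [Fintype.card_perm, Nat.factorial_succ]⟩
  rintro ⟨p, σ⟩ ⟨q, τ⟩ (h : insertMax p σ = insertMax q τ)
  obtain rfl : p = q := (insertMax p σ).injective (by rw [insertMax_self, h, insertMax_self])
  congr 1
  ext i
  have hi := congrArg Fin.val (DFunLike.congr_fun h (p.succAbove i))
  simpa only [insertMax_succAbove, Fin.val_castSucc] using hi

open Classical in
lemma sum_avoidsD_succ {M : Type*} [AddCommMonoid M] (F : (ℕ → ℕ) → M) :
    ∑ τ : Equiv.Perm (Fin (n + 1)) with AvoidsD τ, F (toWord τ) =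
      ∑ σ : Equiv.Perm (Fin n) with AvoidsD σ,
        ∑ p ∈ sites (toWord σ) n, F (insertAt (toWord σ) p n) := by
  have hinsert (p : Fin (n + 1)) (σ : Equiv.Perm (Fin n)) :
      AvoidsD (insertMax p σ) ↔ AvoidsD σ ∧ ActiveSite (toWord σ) n p := by
    rw [avoidsD_iff, avoidsD_iff, toWord_insertMax, avoiding_insertAt (isWord_toWord σ) p.is_le]
  simp only [sum_filter, sites]
  rw [← insertMax_bijective.sum_comp, Fintype.sum_prod_type_right]
  refine sum_congr rfl fun σ _ => ?_
  rw [← Fin.sum_univ_eq_sum_range (fun p => if ActiveSite (toWord σ) n p then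
    F (insertAt (toWord σ) p n) else 0)]
  simp only [hinsert, toWord_insertMax, ite_and]
  split_ifs <;> simp

open Classical in
lemma dCount_add (n m : ℕ) :
    dCount (n + m) = ∑ σ : Equiv.Perm (Fin n) with AvoidsD σ, descendants m (toWord σ) n := by
  induction m generalizing n with
  | zero => simp [dCount, descendants, Fintype.card_subtype]
  | succ m ih =>
    rw [← add_assoc, add_right_comm, ih (n + 1),
      sum_avoidsD_succ (fun f => descendants m f (n + 1))]
    rfl

theorem TreeSeries.dCount_eq_coeff {R : Type*} [CommSemiring R] {dead : ℕ → R⟦X⟧}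
    {live : ℕ → ℕ → ℕ → R⟦X⟧} (T : TreeSeries dead live) (n : ℕ) :
    (dCount n : R) = coeff n (live 0 0 0) := by
  classical
  have havoids (σ : Equiv.Perm (Fin 0)) : AvoidsD σ :=
    (avoidsD_iff σ).2 fun _ _ _ _ _ _ _ hl => absurd hl (Nat.not_lt_zero _)
  rw [← T.descendants_live n (isWord_toWord 1) (live_zero _), ← zero_add n, dCount_add 0 n,
    filter_true_of_mem fun σ _ => havoids σ, Fintype.sum_unique, zero_add]
  rfl

end Permutations

end MaxInsertion

namespace KernelMethod

section CommRing

open Finset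

variable {R : Type*} [CommRing R]

/-- The polynomial whose roots are the candidate poles of the generating function. -/
def denominator (z : R) : R := 1 - 10 * z + 24 * z ^ 2 - 20 * z ^ 3 + 4 * z ^ 4

/-- The algebraic factor of the generating function, `s` standing for `√((1 - 5z) / (1 - z))`. -/
def numerator (z s : R) : R := -1 + 5 * z - 7 * z ^ 2 + 2 * z ^ 3 + (1 - z) ^ 2 * s

variable {z u w β x : R}

/-- The conditions on `ℓ` under which `u ^ t * (u * β + u ^ q * ℓ r)` solves the recurrences of the
generating tree, where `u = 1 / (1 - z)`. -/
structure IsProfile (z u β : R) (ℓ : ℕ → R) : Prop where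
  zero : ℓ 0 = 1 - 2 * β
  one : z * ℓ 1 = -β
  add_two (r : ℕ) : z * ℓ (r + 2) - ℓ (r + 1) + u * ℓ r = z * u * (1 - 2 * β + z * u * β * r)

lemma mul_sum_pow_succ (hu : u * (1 - z) = 1) (k : ℕ) :
    z * ∑ j ∈ range k, u ^ (j + 1) = u ^ k - 1 := by
  rw [← geom_sum_mul u k, mul_comm z, sum_mul, sum_mul]
  refine sum_congr rfl fun j _ => ?_
  linear_combination -u ^ j * hu

lemma IsProfile.mul_sum {ℓ : ℕ → R} (h : IsProfile z u β ℓ) (hu : u * (1 - z) = 1) (r : ℕ) :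
    z * ∑ i ∈ range r, (u * β + u ^ (r - i) * ℓ (i + 1)) = ℓ r - z * ℓ (r + 1) - (1 - β) := by
  induction r with
  | zero =>
    simp only [range_zero, sum_empty]
    linear_combination h.one - h.zero
  | succ r ih =>
    have hshift : ∀ i ∈ range r, u * β + u ^ (r + 1 - i) * ℓ (i + 1) =
        u * (u * β + u ^ (r - i) * ℓ (i + 1)) + (1 - u) * (u * β) := fun i hi => by
      rw [Nat.succ_sub (mem_range.1 hi).le, pow_succ]
      ring
    rw [sum_range_succ, sum_congr rfl hshift, sum_add_distrib, ← Finset.mul_sum, sum_const,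
      card_range, nsmul_eq_mul, Nat.add_sub_cancel_left, pow_one]
    linear_combination u * ih + h.add_two r - (1 - β + z * u * β * r) * hu

/-- The profile is a linear solution of the inhomogeneous recurrence plus a multiple of the
geometric progression of the root `x` of the kernel `z x² - x + u`, where `u = 1 / (1 - z)` and
`w = 1 / (2 - z)`. -/
def profile (z u w β x : R) (r : ℕ) : R :=
  let b := w * (1 - 2 * β + w * β * (1 - 2 * z))
  z * u * w * β * r + b + (1 - 2 * β - b) * x ^ r

lemma mul_profile_one {κ : R} (hu : u * (1 - z) = 1) (hw : w * (2 - z) = 1)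
    (hκ : denominator z * κ = 1) (hx : z * x ^ 2 = x - u)
    (hβ : β = -(1 - z) * numerator z (1 - 2 * z * x) * κ) :
    z * profile z u w β x 1 = -β := by
  have hlinear : (1 - z) * (2 - z) * (z * u * w * β) = z * β := by
    linear_combination (2 - z) * w * z * β * hu + z * β * hw
  have hconst : (2 - z) ^ 2 * (w * (1 - 2 * β + w * β * (1 - 2 * z))) =
      (2 - z) * (1 - 2 * β) + β * (1 - 2 * z) := by
    linear_combination ((2 - z) * (1 - 2 * β) + β * (1 - 2 * z) * (w * (2 - z) + 1)) * hw
  have hβ' : denominator z * β = -(1 - z) * numerator z (1 - 2 * z * x) := by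
    linear_combination denominator z * hβ - (1 - z) * numerator z (1 - 2 * z * x) * hκ
  have hx' : (1 - z) * (z * x ^ 2) = (1 - z) * x - 1 := by linear_combination (1 - z) * hx - hu
  have cancel (t : R) (ht : (1 - z) * (2 - z) ^ 2 * denominator z * t = 0) : t = 0 := by
    linear_combination u * w ^ 2 * κ * ht - u * w ^ 2 * (1 - z) * (2 - z) ^ 2 * t * hκ
      - w ^ 2 * (2 - z) ^ 2 * t * hu - (w * (2 - z) + 1) * t * hw
  rw [← sub_eq_zero]
  apply cancel
  simp only [profile, Nat.cast_one, mul_one, pow_one]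
  generalize w * (1 - 2 * β + w * β * (1 - 2 * z)) = b at *
  generalize z * u * w * β = a at *
  linear_combination (norm := (simp only [denominator, numerator]; ring))
    denominator z * z * (2 - z) * hlinear + denominator z * z * (1 - z) * (1 - x) * hconst +
    (z ^ 2 * (2 - z) + z * (1 - z) * (1 - x) * (1 - 2 * z - 2 * (2 - z)) +
      (1 - z) * (2 - z) ^ 2 * (1 - 2 * z * x)) * hβ' +
    2 * z * (1 - z) ^ 3 * (3 - 2 * (2 - z) ^ 2) * hx'

lemma profile_add_two (hu : u * (1 - z) = 1) (hw : w * (2 - z) = 1) (hx : z * x ^ 2 = x - u)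
    (r : ℕ) : z * profile z u w β x (r + 2) - profile z u w β x (r + 1) + u * profile z u w β x r =
      z * u * (1 - 2 * β + z * u * β * r) := by
  simp only [profile, Nat.cast_add, Nat.cast_ofNat, Nat.cast_one]
  generalize hb : w * (1 - 2 * β + w * β * (1 - 2 * z)) = b
  have hlinear : z * (z * u * w * β * (r + 2) + b) - (z * u * w * β * (r + 1) + b) +
      u * (z * u * w * β * r + b) = z * u * (1 - 2 * β + z * u * β * r) := by
    subst hb
    clear hx
    generalize (r : R) = y at *
    grind
  linear_combination hlinear + (1 - 2 * β - b) * x ^ r * hx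

theorem isProfile_profile {κ : R} (hu : u * (1 - z) = 1) (hw : w * (2 - z) = 1)
    (hκ : denominator z * κ = 1) (hx : z * x ^ 2 = x - u)
    (hβ : β = -(1 - z) * numerator z (1 - 2 * z * x) * κ) :
    IsProfile z u β (profile z u w β x) where
  zero := by simp [profile]
  one := mul_profile_one hu hw hκ hx hβ
  add_two := profile_add_two hu hw hx

theorem treeSeries_of_isProfile {u β : R⟦X⟧} {ℓ : ℕ → R⟦X⟧} (hu : u * (1 - X) = 1)
    (h : IsProfile X u β ℓ) :
    MaxInsertion.TreeSeries (u ^ ·) fun r q t => u ^ t * (u * β + u ^ q * ℓ r) where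
  dead_eq k := by rw [mul_sum_pow_succ hu]; ring
  live_eq r q t := by
    have hbefore : X * ∑ i ∈ range r, u ^ (q + t) * (u * β + u ^ (r - i) * ℓ (i + 1)) =
        u ^ (q + t) * (ℓ r - X * ℓ (r + 1) - (1 - β)) := by
      rw [← h.mul_sum hu, ← Finset.mul_sum, mul_left_comm]
    have hrun : X * ∑ j ∈ range q, u ^ (j + t) * (u * β + u ^ 1 * ℓ 0) =
        u ^ t * (1 - β) * (u ^ q - 1) := by
      rw [← mul_sum_pow_succ hu, mul_left_comm _ X, Finset.mul_sum _ _ (u ^ t * (1 - β))]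
      congr 1
      refine sum_congr rfl fun j _ => ?_
      rw [h.zero]
      ring
    rw [mul_add, mul_add, mul_add, mul_add, hbefore, hrun, mul_sum_pow_succ hu]
    linear_combination u ^ t * β * hu

end CommRing

theorem denominator_mul_mk_dCount {k : Type*} [Field k] [NeZero (2 : k)] {s : k⟦X⟧}
    (hs : s ^ 2 * (1 - X) = 1 - 5 * X) (hs0 : constantCoeff s = 1) :
    denominator X * mk (fun n => (dCount n : k)) =
      denominator X + (1 - 2 * X) * numerator X s := by
  have h2 : (2 : k) ≠ 0 := NeZero.ne 2
  have hu : (1 - X : k⟦X⟧)⁻¹ * (1 - X) = 1 := PowerSeries.inv_mul_cancel _ (by simp)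
  have hw : (2 - X : k⟦X⟧)⁻¹ * (2 - X) = 1 :=
    PowerSeries.inv_mul_cancel _ (by rw [map_sub, map_ofNat, constantCoeff_X, sub_zero]; exact h2)
  have hκ : denominator X * (denominator X : k⟦X⟧)⁻¹ = 1 :=
    PowerSeries.mul_inv_cancel _ (by simp [denominator])
  obtain ⟨y, hy⟩ : X ∣ 1 - s := by simp [X_dvd_iff, hs0]
  have h2C : (2 : k⟦X⟧) * C (2⁻¹ : k) = 1 := by
    rw [← map_ofNat (C (R := k)) 2, ← map_mul, mul_inv_cancel₀ h2, map_one]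
  have hsx : s = 1 - 2 * X * (C (2⁻¹ : k) * y) := by linear_combination -hy + X * y * h2C
  generalize C (2⁻¹ : k) * y = x at hsx
  generalize (1 - X : k⟦X⟧)⁻¹ = u at hu
  have hx : X * x ^ 2 = x - u := by
    have h4X : (2 * 2 * X : k⟦X⟧) ≠ 0 := by
      have : (2 : k⟦X⟧) ≠ 0 := left_ne_zero_of_mul_eq_one h2C
      exact mul_ne_zero (mul_ne_zero this this) X_ne_zero
    refine mul_left_cancel₀ h4X ?_
    rw [hsx] at hs
    linear_combination u * hs - ((1 - 2 * X * x) ^ 2 - 1) * hu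
  have hprofile := isProfile_profile hu hw hκ hx rfl
  have hT := treeSeries_of_isProfile hu hprofile
  have hmk : mk (fun n => (dCount n : k)) = _ :=
    ext fun n => (coeff_mk _ _).trans (hT.dCount_eq_coeff n)
  rw [hmk, hprofile.zero, hsx]
  generalize numerator X (1 - 2 * X * x) = N
  linear_combination (1 - 2 * X) * N * hκ - denominator X * N * (denominator X)⁻¹ * hu

end KernelMethod

namespace SingularityAnalysis

open Finset

section Sequences

variable {a b c : ℕ → ℝ} {s L β : ℝ}

lemma tendsto_natCast_rpow_div_add (s : ℝ) (k : ℕ) :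
    Tendsto (fun n : ℕ => (n : ℝ) ^ s / ((n + k : ℕ) : ℝ) ^ s) atTop (𝓝 1) := by
  have h := (tendsto_natCast_div_add_atTop (k : ℝ)).rpow_const (p := s) (Or.inl one_ne_zero)
  rw [Real.one_rpow] at h
  refine h.congr fun n => ?_
  rw [Real.div_rpow (by positivity) (by positivity), Nat.cast_add]

lemma tendsto_add_mul_rpow_iff (k : ℕ) :
    Tendsto (fun n : ℕ => a (n + k) * (n : ℝ) ^ s) atTop (𝓝 L) ↔
      Tendsto (fun n : ℕ => a n * (n : ℝ) ^ s) atTop (𝓝 L) := by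
  have hpos : ∀ᶠ n : ℕ in atTop, (n : ℝ) ^ s ≠ 0 ∧ ((n + k : ℕ) : ℝ) ^ s ≠ 0 := by
    filter_upwards [eventually_ge_atTop 1] with n hn
    constructor <;> positivity
  rw [← tendsto_add_atTop_iff_nat (f := fun n : ℕ => a n * (n : ℝ) ^ s) k]
  constructor <;> intro h
  · have h' := h.div (tendsto_natCast_rpow_div_add s k) one_ne_zero
    rw [div_one] at h'
    refine h'.congr' ?_
    filter_upwards [hpos] with n ⟨hn, hnk⟩
    simp only [Pi.div_apply]
    field_simp
  · have h' := h.mul (tendsto_natCast_rpow_div_add s k)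
    rw [mul_one] at h'
    refine h'.congr' ?_
    filter_upwards [hpos] with n ⟨hn, hnk⟩
    field_simp

lemma exists_abs_mul_rpow_le (ha : Tendsto (fun n : ℕ => a n * (n : ℝ) ^ s) atTop (𝓝 L)) :
    ∃ B, ∀ n, |a n| * ((n : ℝ) + 1) ^ s ≤ B := by
  have h : Tendsto (fun n : ℕ => a n * ((n + 1 : ℕ) : ℝ) ^ s) atTop (𝓝 L) := by
    refine (tendsto_add_atTop_iff_nat (f := fun n => a (n - 1) * (n : ℝ) ^ s) 1).2 ?_
    exact (tendsto_add_mul_rpow_iff (a := fun n => a (n - 1)) 1).1 ha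
  obtain ⟨B, hB⟩ := h.abs.bddAbove_range
  refine ⟨B, fun n => (hB ⟨n, rfl⟩).trans' (le_of_eq ?_)⟩
  simp only
  rw [abs_mul, Nat.cast_succ, abs_of_nonneg (by positivity : 0 ≤ ((n : ℝ) + 1) ^ s)]

lemma natCast_rpow_le_mul_rpow (hs : 0 ≤ s) {j n : ℕ} (hj : j ≤ n) :
    (n : ℝ) ^ s ≤ (((n - j : ℕ) : ℝ) + 1) ^ s * ((j : ℝ) + 1) ^ s := by
  obtain ⟨m, rfl⟩ := Nat.exists_eq_add_of_le hj
  rw [← Real.mul_rpow (by positivity) (by positivity), Nat.add_sub_cancel_left]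
  refine Real.rpow_le_rpow (by positivity) ?_ hs
  norm_cast
  nlinarith

lemma tendsto_pow_mul_succ_rpow (s : ℝ) {q : ℝ} (hq0 : 0 < q) (hq1 : q < 1) :
    Tendsto (fun j : ℕ => q ^ j * ((j : ℝ) + 1) ^ s) atTop (𝓝 0) := by
  obtain ⟨k, hk⟩ := exists_nat_ge s
  have hpow := (tendsto_add_atTop_iff_nat 1).2
    (tendsto_pow_const_mul_const_pow_of_abs_lt_one k (by rwa [abs_of_pos hq0]))
  refine squeeze_zero (fun j => by positivity) (fun j => ?_) (by simpa using hpow.const_mul q⁻¹)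
  have hle : ((j : ℝ) + 1) ^ s ≤ ((j : ℝ) + 1) ^ k := by
    rw [← Real.rpow_natCast]
    exact Real.rpow_le_rpow_of_exponent_le (by simp) hk
  calc q ^ j * ((j : ℝ) + 1) ^ s ≤ q ^ j * ((j : ℝ) + 1) ^ k := by gcongr
    _ = q⁻¹ * (((j : ℝ) + 1) ^ k * q ^ (j + 1)) := by rw [pow_succ]; field_simp

lemma sum_antidiagonal_mul_eq_tsum (a b : ℕ → ℝ) (n : ℕ) (x : ℝ) :
    (∑ p ∈ antidiagonal n, a p.1 * b p.2) * x =
      ∑' j, if j ≤ n then a (n - j) * x * b j else 0 := by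
  rw [tsum_eq_sum (s := range (n + 1)) (by grind), sum_mul, ← Nat.sum_antidiagonal_swap,
    Nat.sum_antidiagonal_eq_sum_range_succ_mk]
  refine sum_congr rfl fun j hj => ?_
  rw [if_pos (mem_range_succ_iff.1 hj)]
  exact mul_right_comm _ _ _

theorem tendsto_convolution_mul_rpow (hs : 0 ≤ s)
    (ha : Tendsto (fun n : ℕ => a n * (n : ℝ) ^ s) atTop (𝓝 L))
    (hb : Summable fun j : ℕ => |b j| * ((j : ℝ) + 1) ^ s) :
    Tendsto (fun n : ℕ => (∑ p ∈ antidiagonal n, a p.1 * b p.2) * (n : ℝ) ^ s) atTop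
      (𝓝 (L * ∑' j, b j)) := by
  obtain ⟨B, hB⟩ := exists_abs_mul_rpow_le ha
  simp_rw [sum_antidiagonal_mul_eq_tsum]
  rw [← tsum_mul_left]
  refine tendsto_tsum_of_dominated_convergence (hb.mul_left B) (fun j => ?_)
    (Eventually.of_forall fun n j => ?_)
  · have hshift : Tendsto (fun n : ℕ => a (n - j) * (n : ℝ) ^ s) atTop (𝓝 L) :=
      (tendsto_add_mul_rpow_iff (a := fun n => a (n - j)) j).1 (by simpa using ha)
    refine (hshift.mul_const (b j)).congr' ?_
    filter_upwards [eventually_ge_atTop j] with n hn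
    rw [if_pos hn]
  · split_ifs with hj
    · rw [Real.norm_eq_abs, abs_mul, abs_mul, abs_of_nonneg (by positivity : 0 ≤ (n : ℝ) ^ s)]
      calc |a (n - j)| * (n : ℝ) ^ s * |b j|
          ≤ |a (n - j)| * ((((n - j : ℕ) : ℝ) + 1) ^ s * ((j : ℝ) + 1) ^ s) * |b j| := by
            gcongr
            exact natCast_rpow_le_mul_rpow hs hj
        _ = |a (n - j)| * (((n - j : ℕ) : ℝ) + 1) ^ s * (|b j| * ((j : ℝ) + 1) ^ s) := by ring
        _ ≤ B * (|b j| * ((j : ℝ) + 1) ^ s) := by gcongr; exact hB _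
    · have hB0 : 0 ≤ B := (by positivity : 0 ≤ |a 0| * (((0 : ℕ) : ℝ) + 1) ^ s).trans (hB 0)
      rw [norm_zero]
      positivity

lemma tsum_geometric_succ_neg (L : ℝ) (hβ0 : β ≠ 0) (hβ1 : |β| < 1) :
    ∑' j : ℕ, -(L * β ^ (j + 1)) = L / (1 - β⁻¹) := by
  have h1 : 1 - β ≠ 0 := by linarith [lt_of_abs_lt hβ1]
  have h2 : β - 1 ≠ 0 := by linarith [lt_of_abs_lt hβ1]
  simp_rw [pow_succ', ← mul_assoc, ← neg_mul]
  rw [tsum_mul_left, tsum_geometric_of_abs_lt_one hβ1, show 1 - β⁻¹ = (β - 1) / β by field_simp]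
  field_simp
  ring

/-- A vanishing sum has partial sums equal to minus its tails, and tails inherit asymptotics. -/
theorem tendsto_partialSum_mul_rpow (hs : 0 ≤ s)
    (ha : Tendsto (fun n : ℕ => a n * (n : ℝ) ^ s) atTop (𝓝 L)) (hβ0 : β ≠ 0) (hβ1 : |β| < 1)
    (hsum : HasSum (fun n => a n * β ^ n) 0)
    (hc : ∀ n, c n * β ^ n = ∑ k ∈ range (n + 1), a k * β ^ k) :
    Tendsto (fun n : ℕ => c n * (n : ℝ) ^ s) atTop (𝓝 (L / (1 - β⁻¹))) := by
  obtain ⟨B, hB⟩ := exists_abs_mul_rpow_le ha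
  have htail (n : ℕ) : c n * (n : ℝ) ^ s =
      ∑' j, -(a (n + (j + 1)) * (n : ℝ) ^ s * β ^ (j + 1)) := by
    have h := hsum.summable.sum_add_tsum_nat_add (n + 1)
    rw [hsum.tsum_eq, ← hc] at h
    refine mul_right_cancel₀ (pow_ne_zero n hβ0) ?_
    rw [mul_right_comm, eq_neg_of_add_eq_zero_left h, ← tsum_neg, ← tsum_mul_right,
      ← tsum_mul_right]
    refine tsum_congr fun j => ?_
    rw [show j + (n + 1) = n + (j + 1) by ring, pow_add]
    ring
  simp_rw [htail]
  rw [← tsum_geometric_succ_neg L hβ0 hβ1]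
  have hgeom : Summable fun j : ℕ => B * |β| ^ (j + 1) :=
    ((summable_nat_add_iff 1).2 (summable_geometric_of_abs_lt_one (by rwa [abs_abs]))).mul_left B
  refine tendsto_tsum_of_dominated_convergence hgeom
    (fun j => (((tendsto_add_mul_rpow_iff (j + 1)).2 ha).mul_const _).neg)
    (Eventually.of_forall fun n j => ?_)
  rw [norm_neg, Real.norm_eq_abs, abs_mul, abs_mul, abs_pow,
    abs_of_nonneg (by positivity : 0 ≤ (n : ℝ) ^ s)]
  gcongr
  refine le_trans ?_ (hB (n + (j + 1)))
  gcongr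
  exact_mod_cast (by omega : n ≤ n + (j + 1) + 1)

end Sequences

/-- The power series `f` converges absolutely at `r`, with sum `v`. -/
def EvalsTo (f : ℝ⟦X⟧) (r v : ℝ) : Prop := HasSum (fun n => coeff n f * r ^ n) v

namespace EvalsTo

variable {f g : ℝ⟦X⟧} {r v w : ℝ}

lemma unique (h : EvalsTo f r v) (h' : EvalsTo f r w) : v = w := HasSum.unique h h'

lemma summable (hf : EvalsTo f r v) : Summable fun n => coeff n f * r ^ n := HasSum.summable hf

lemma add (hf : EvalsTo f r v) (hg : EvalsTo g r w) : EvalsTo (f + g) r (v + w) := by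
  simpa only [EvalsTo, map_add, add_mul] using HasSum.add hf hg

lemma mul (hf : EvalsTo f r v) (hg : EvalsTo g r w) : EvalsTo (f * g) r (v * w) := by
  have hsummable := (summable_norm_sum_mul_antidiagonal_of_summable_norm hf.summable.norm
    hg.summable.norm).of_norm
  have hprod := tsum_mul_tsum_eq_tsum_sum_antidiagonal_of_summable_norm hf.summable.norm
    hg.summable.norm
  rw [HasSum.tsum_eq hf, HasSum.tsum_eq hg] at hprod
  rw [EvalsTo, hprod]
  refine HasSum.congr_fun hsummable.hasSum fun n => ?_
  rw [coeff_mul, sum_mul]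
  refine sum_congr rfl fun p hp => ?_
  rw [← mem_antidiagonal.1 hp, pow_add]
  ring

lemma polynomial (p : Polynomial ℝ) (r : ℝ) : EvalsTo (p : ℝ⟦X⟧) r (p.eval r) := by
  rw [EvalsTo, Polynomial.eval_eq_sum_range]
  simp only [Polynomial.coeff_coe]
  refine hasSum_sum_of_ne_finset_zero fun n hn => ?_
  rw [Polynomial.coeff_eq_zero_of_natDegree_lt (by simpa using hn), zero_mul]

lemma rescale {c : ℝ} (hf : EvalsTo f (c * r) v) : EvalsTo (PowerSeries.rescale c f) r v := by
  refine HasSum.congr_fun hf fun n => ?_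
  rw [coeff_rescale, mul_pow]
  ring

end EvalsTo

/-- The coefficients of `f` are asymptotic to `L * n ^ (-s) / ρ ^ n`; the case `L = 0`, in which
they are of smaller order, is included. -/
def CoeffAsymp (f : ℝ⟦X⟧) (ρ s L : ℝ) : Prop :=
  Tendsto (fun n : ℕ => coeff n f * ρ ^ n * (n : ℝ) ^ s) atTop (𝓝 L)

namespace CoeffAsymp

variable {f g Q : ℝ⟦X⟧} {ρ r s L M v α : ℝ}

lemma add (hf : CoeffAsymp f ρ s L) (hg : CoeffAsymp g ρ s M) :
    CoeffAsymp (f + g) ρ s (L + M) := by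
  simpa only [CoeffAsymp, map_add, add_mul] using Tendsto.add hf hg

lemma polynomial (p : Polynomial ℝ) (ρ s : ℝ) : CoeffAsymp (p : ℝ⟦X⟧) ρ s 0 := by
  refine tendsto_const_nhds.congr' ?_
  filter_upwards [eventually_gt_atTop p.natDegree] with n hn
  rw [Polynomial.coeff_coe, Polynomial.coeff_eq_zero_of_natDegree_lt hn, zero_mul, zero_mul]

lemma summable_mul_rpow (hρ : 0 < ρ) (hρr : ρ < r) (hr : Summable fun n => coeff n g * r ^ n)
    (s : ℝ) : Summable fun j : ℕ => |coeff j g * ρ ^ j| * ((j : ℝ) + 1) ^ s := by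
  have hr0 : 0 < r := hρ.trans hρr
  have hweight := tendsto_pow_mul_succ_rpow s (div_pos hρ hr0) ((div_lt_one hr0).2 hρr)
  have hO := (Asymptotics.isBigO_refl (fun j => |coeff j g * r ^ j|) atTop).mul
    (hweight.isBigO_one ℝ)
  refine summable_of_isBigO_nat hr.abs (hO.congr (fun j => ?_) fun j => mul_one _)
  rw [abs_mul, abs_mul, abs_of_pos (pow_pos hρ j), abs_of_pos (pow_pos hr0 j), div_pow]
  field_simp

theorem mul (hs : 0 ≤ s) (hρ : 0 < ρ) (hf : CoeffAsymp f ρ s L) (hg : EvalsTo g ρ v) (hρr : ρ < r)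
    (hr : Summable fun n => coeff n g * r ^ n) : CoeffAsymp (f * g) ρ s (L * v) := by
  have h := tendsto_convolution_mul_rpow hs hf (summable_mul_rpow hρ hρr hr s)
  rw [HasSum.tsum_eq hg] at h
  refine h.congr fun n => ?_
  congr 1
  rw [coeff_mul, sum_mul]
  refine sum_congr rfl fun p hp => ?_
  rw [← mem_antidiagonal.1 hp, pow_add]
  ring

lemma mul_polynomial (hs : 0 ≤ s) (hρ : 0 < ρ) (hf : CoeffAsymp f ρ s L) (p : Polynomial ℝ) :
    CoeffAsymp (f * (p : ℝ⟦X⟧)) ρ s (L * p.eval ρ) :=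
  hf.mul hs hρ (.polynomial p ρ) (lt_add_one ρ) (EvalsTo.polynomial p (ρ + 1)).summable

theorem of_linear_mul (hs : 0 ≤ s) (hα0 : α ≠ 0) (hα : |α| < ρ)
    (hf : CoeffAsymp ((1 - C α⁻¹ * X) * g) ρ s L) (h0 : EvalsTo ((1 - C α⁻¹ * X) * g) α 0) :
    CoeffAsymp g ρ s (L / (1 - ρ / α)) := by
  have hρ : 0 < ρ := (abs_nonneg α).trans_lt hα
  have hρα (n : ℕ) : ρ ^ n * (α / ρ) ^ n = α ^ n := by rw [← mul_pow, mul_div_cancel₀ _ hρ.ne']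
  have hβ1 : |α / ρ| < 1 := by rwa [abs_div, abs_of_pos hρ, div_lt_one hρ]
  rw [← inv_div α ρ]
  refine tendsto_partialSum_mul_rpow (c := fun n => coeff n g * ρ ^ n) hs hf
    (div_ne_zero hα0 hρ.ne') hβ1 (HasSum.congr_fun h0 fun n => by rw [mul_assoc, hρα]) fun n => ?_
  simp only [mul_assoc, hρα]
  induction n with
  | zero => simp
  | succ n ih =>
    rw [sum_range_succ, ← ih, sub_mul, one_mul, map_sub, mul_assoc, coeff_C_mul, coeff_succ_X_mul,
      pow_succ]
    field_simp
    ring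

theorem of_mul (hs : 0 ≤ s) (hρ : 0 < ρ) (hf : CoeffAsymp (Q * g) ρ s L)
    (hQ0 : constantCoeff Q ≠ 0) (hQ : EvalsTo Q ρ v) (hρr : ρ < r)
    (hr : Summable fun n => coeff n Q⁻¹ * r ^ n) : CoeffAsymp g ρ s (L / v) := by
  have hsummable : Summable fun n => coeff n Q⁻¹ * ρ ^ n := by
    refine Summable.of_norm_bounded hr.norm fun n => ?_
    simp_rw [norm_mul, norm_pow, Real.norm_of_nonneg hρ.le, Real.norm_of_nonneg (hρ.trans hρr).le]
    gcongr
  have hinv : EvalsTo Q⁻¹ ρ (∑' n, coeff n Q⁻¹ * ρ ^ n) := hsummable.hasSum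
  have hone : EvalsTo (Q * Q⁻¹) ρ 1 := by
    rw [PowerSeries.mul_inv_cancel Q hQ0]
    simpa using EvalsTo.polynomial 1 ρ
  rw [div_eq_mul_inv, ← eq_inv_of_mul_eq_one_right ((hQ.mul hinv).unique hone)]
  have h := hf.mul hs hρ hinv hρr hr
  rwa [mul_right_comm, PowerSeries.mul_inv_cancel Q hQ0, one_mul] at h

end CoeffAsymp

theorem abs_coeff_inv_mul_pow_le_one {f : ℝ⟦X⟧} {R : ℝ} (hR : 0 ≤ R) (hf0 : constantCoeff f = 1)
    (hf : ∀ n, ∑ k ∈ range n, |coeff (k + 1) f| * R ^ (k + 1) ≤ 1) (n : ℕ) :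
    |coeff n f⁻¹| * R ^ n ≤ 1 := by
  induction n using Nat.strong_induction_on with
  | _ n ih =>
    rcases n with _ | n
    · simp [hf0]
    have hcoeff : coeff (n + 1) f⁻¹ =
        -∑ k ∈ range (n + 1), coeff (k + 1) f * coeff (n - k) f⁻¹ := by
      have h := congrArg (coeff (n + 1)) (PowerSeries.mul_inv_cancel f (by simp [hf0]))
      rw [coeff_mul, Nat.sum_antidiagonal_eq_sum_range_succ_mk, sum_range_succ', coeff_one,
        if_neg n.succ_ne_zero] at h
      simp only [coeff_zero_eq_constantCoeff_apply, hf0, one_mul, Nat.sub_zero,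
        Nat.add_sub_add_right] at h
      linarith
    calc |coeff (n + 1) f⁻¹| * R ^ (n + 1)
        ≤ (∑ k ∈ range (n + 1), |coeff (k + 1) f * coeff (n - k) f⁻¹|) * R ^ (n + 1) := by
          rw [hcoeff, abs_neg]
          gcongr
          exact abs_sum_le_sum_abs _ _
      _ = ∑ k ∈ range (n + 1), |coeff (k + 1) f| * R ^ (k + 1) *
            (|coeff (n - k) f⁻¹| * R ^ (n - k)) := by
          rw [sum_mul]
          refine sum_congr rfl fun k hk => ?_
          rw [abs_mul, show n + 1 = k + 1 + (n - k) by grind, pow_add]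
          ring
      _ ≤ ∑ k ∈ range (n + 1), |coeff (k + 1) f| * R ^ (k + 1) * 1 := by
          gcongr with k
          exact ih (n - k) (by omega)
      _ ≤ 1 := by simpa using hf (n + 1)

lemma summable_of_abs_coeff_mul_pow_le {f : ℝ⟦X⟧} {r R B : ℝ} (hr : 0 ≤ r) (hrR : r < R)
    (hf : ∀ n, |coeff n f| * R ^ n ≤ B) : Summable fun n => coeff n f * r ^ n := by
  have hR : 0 < R := hr.trans_lt hrR
  refine Summable.of_norm_bounded ((summable_geometric_of_lt_one (r := r / R) (by positivity)
    ((div_lt_one hR).2 hrR)).mul_left B) fun n => ?_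
  rw [norm_mul, norm_pow, Real.norm_of_nonneg hr, Real.norm_eq_abs, div_pow, mul_div_assoc',
    le_div_iff₀ (by positivity), mul_right_comm]
  gcongr
  exact hf n

section BinomialSeries

variable {a ρ r c : ℝ}

lemma neg_one_pow_mul_choose (a : ℝ) (n : ℕ) :
    (-1) ^ n * Ring.choose a n = (∏ j ∈ range n, (-a + j)) / n.factorial := by
  have hprod : ∏ j ∈ range n, (-a + j) = (-1) ^ n * ∏ j ∈ range n, (a - j) := by
    rw [← card_range n, ← prod_const, card_range, ← prod_mul_distrib]
    exact prod_congr rfl fun j _ => by ring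
  rw [hprod, Ring.choose_eq_smul, ← descPochhammer_eval_eq_prod_range, ← descPochhammer_map
    (algebraMap ℤ ℝ), Polynomial.eval_map_algebraMap, Polynomial.aeval_eq_smeval, smul_eq_mul]
  ring

theorem tendsto_neg_one_pow_mul_choose_mul_rpow (ha : ∀ k : ℕ, a ≠ k) :
    Tendsto (fun n : ℕ => (-1) ^ n * Ring.choose a n * (n : ℝ) ^ (a + 1)) atTop
      (𝓝 (Real.Gamma (-a))⁻¹) := by
  have hΓ : Real.Gamma (-a) ≠ 0 := Real.Gamma_ne_zero fun k h => ha k (neg_inj.1 h)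
  have h := ((Real.GammaSeq_tendsto_Gamma (-a)).inv₀ hΓ).mul (tendsto_natCast_div_add_atTop (-a))
  rw [mul_one] at h
  refine h.congr' ?_
  filter_upwards [eventually_ge_atTop 1] with n hn
  have hn0 : (0 : ℝ) < n := by exact_mod_cast hn
  have hna : (n : ℝ) + -a ≠ 0 := fun h => ha n (by linarith)
  rw [neg_one_pow_mul_choose, Real.GammaSeq, prod_range_succ, Real.rpow_add_one hn0.ne',
    Real.rpow_neg hn0.le, add_comm (-a) n]
  field_simp

/-- The binomial series of `(1 - c * X) ^ a`. -/
noncomputable def oneSubPow (c a : ℝ) : ℝ⟦X⟧ := rescale (-c) (PowerSeries.binomialSeries ℝ a)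

lemma oneSubPow_add (c a b : ℝ) : oneSubPow c (a + b) = oneSubPow c a * oneSubPow c b := by
  rw [oneSubPow, binomialSeries_add, map_mul, oneSubPow, oneSubPow]

lemma oneSubPow_natCast (c : ℝ) (d : ℕ) : oneSubPow c d = (1 - C c * X) ^ d := by
  rw [oneSubPow, binomialSeries_nat, map_pow, map_add, map_one, rescale_X, map_neg, neg_mul,
    sub_eq_add_neg]

lemma constantCoeff_oneSubPow (c a : ℝ) : constantCoeff (oneSubPow c a) = 1 := by
  rw [oneSubPow, ← coeff_zero_eq_constantCoeff_apply, coeff_rescale]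
  simp

lemma evalsTo_oneSubPow (h : |c * r| < 1) : EvalsTo (oneSubPow c a) r ((1 - c * r) ^ a) := by
  refine EvalsTo.rescale ?_
  have hsum := (Real.one_add_rpow_hasFPowerSeriesOnBall_zero (a := a)).hasSum
    (y := -c * r) (by rwa [mem_eball_zero_iff, ← ofReal_norm, ENNReal.ofReal_lt_one,
      Real.norm_eq_abs, neg_mul, abs_neg])
  rw [zero_add, neg_mul, ← sub_eq_add_neg] at hsum
  refine HasSum.congr_fun hsum fun n => ?_
  rw [binomialSeries_coeff, binomialSeries_apply, List.ofFn_const, List.prod_replicate, smul_eq_mul,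
    smul_eq_mul, mul_one, neg_mul]

theorem coeffAsymp_oneSubPow (hρ : ρ ≠ 0) (ha : ∀ k : ℕ, a ≠ k) :
    CoeffAsymp (oneSubPow ρ⁻¹ a) ρ (a + 1) (Real.Gamma (-a))⁻¹ := by
  refine (tendsto_neg_one_pow_mul_choose_mul_rpow ha).congr fun n => ?_
  rw [oneSubPow, coeff_rescale, binomialSeries_coeff, smul_eq_mul, mul_one, neg_pow ρ⁻¹, inv_pow]
  field_simp

end BinomialSeries

end SingularityAnalysis

namespace CountSeries

open Finset hiding mk
open KernelMethod SingularityAnalysis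

section Factorization

variable {R : Type*} [CommRing R] {α β z : R}

/-- The quotient of `denominator z` by `1 - z / α`, for a root `α` of the denominator. -/
def cofactor (α z : R) : R :=
  1 - (24 * α - 20 * α ^ 2 + 4 * α ^ 3) * z + (20 * α - 4 * α ^ 2) * z ^ 2 - 4 * α * z ^ 3

lemma denominator_eq_mul_cofactor (hα : denominator α = 0) (hαβ : α * β = 1) :
    denominator z = (1 - β * z) * cofactor α z := by
  simp only [denominator, cofactor] at hα ⊢
  linear_combination z * β * hα + hαβ * (z * (10 - 24 * α + 20 * α ^ 2 - 4 * α ^ 3) -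
    z ^ 2 * (24 - 20 * α + 4 * α ^ 2) + z ^ 3 * (20 - 4 * α) - 4 * z ^ 4)

end Factorization

variable {α ρ r v e L : ℝ} {s : ℝ⟦X⟧}

lemma exists_denominator_eq_zero : ∃ α : ℝ, 0 < α ∧ α < 3 / 20 ∧ denominator α = 0 := by
  have hcont : ContinuousOn (denominator : ℝ → ℝ) (Set.Icc 0 (3 / 20)) := by
    unfold denominator
    fun_prop
  obtain ⟨α, ⟨hα0, hα1⟩, hα⟩ := intermediate_value_Ioo' (by norm_num) hcont
    (show (0 : ℝ) ∈ _ by norm_num [denominator])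
  exact ⟨α, hα0, hα1, hα⟩

lemma numerator_eq_zero (hα0 : 0 < α) (hα1 : α ≤ 1 / 5) (hα : denominator α = 0) (hv0 : 0 ≤ v)
    (hv : v ^ 2 * (1 - α) = 1 - 5 * α) : numerator α v = 0 := by
  -- `numerator α v` times its conjugate in `v` is a multiple of `denominator α`.
  have hpos : 0 < 1 - 5 * α + 7 * α ^ 2 - 2 * α ^ 3 := by nlinarith [pow_pos hα0 2, pow_pos hα0 3]
  have hconj : 1 - 5 * α + 7 * α ^ 2 - 2 * α ^ 3 + (1 - α) ^ 2 * v ≠ 0 := by positivity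
  refine (mul_eq_zero.1 ?_).resolve_right hconj
  simp only [denominator, numerator] at hα ⊢
  linear_combination (1 - α) ^ 3 * hv + (2 * α - α ^ 2) * hα

lemma polynomial_coe_ofNat (n : ℕ) [n.AtLeastTwo] :
    ((ofNat(n) : Polynomial ℝ) : ℝ⟦X⟧) = ofNat(n) :=
  map_ofNat Polynomial.coeToPowerSeries.ringHom n

lemma evalsTo_cofactor (α r : ℝ) : EvalsTo (cofactor (C α) X) r (cofactor α r) := by
  convert EvalsTo.polynomial (cofactor (Polynomial.C α) Polynomial.X) r using 1 <;>
    simp [cofactor, polynomial_coe_ofNat]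

lemma denominator_X_eq_mul_cofactor (hα0 : α ≠ 0) (hα : denominator α = 0) :
    denominator (X : ℝ⟦X⟧) = (1 - C α⁻¹ * X) * cofactor (C α) X := by
  refine denominator_eq_mul_cofactor ?_ (by rw [← map_mul, mul_inv_cancel₀ hα0, map_one])
  have h := congrArg (C (R := ℝ)) hα
  simpa only [denominator, map_add, map_sub, map_mul, map_pow, map_one, map_zero, map_ofNat] using h

lemma coeff_succ_cofactor (α : ℝ) (k : ℕ) : coeff (k + 1) (cofactor (C α) X) =
    if k = 0 then -(24 * α - 20 * α ^ 2 + 4 * α ^ 3) else if k = 1 then 20 * α - 4 * α ^ 2 else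
      if k = 2 then -(4 * α) else 0 := by
  have hC : cofactor (C α) X = 1 - C (24 * α - 20 * α ^ 2 + 4 * α ^ 3) * X +
      C (20 * α - 4 * α ^ 2) * X ^ 2 - C (4 * α) * X ^ 3 := by
    simp only [cofactor, map_sub, map_add, map_mul, map_pow, map_ofNat]
  rw [hC, map_sub, map_add, map_sub, coeff_C_mul, coeff_C_mul, coeff_C_mul, coeff_one, coeff_X,
    coeff_X_pow, coeff_X_pow]
  rcases k with _ | _ | _ | k <;> simp

lemma summable_coeff_inv_cofactor (hα0 : 0 < α) (hα1 : α < 3 / 20) (hr : 0 ≤ r) (hr1 : r < 1 / 4) :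
    Summable fun n => coeff n (cofactor (C α) X)⁻¹ * r ^ n := by
  refine summable_of_abs_coeff_mul_pow_le hr hr1
    (abs_coeff_inv_mul_pow_le_one (by norm_num) (by simp [cofactor]) fun n => ?_)
  have h1 : 0 < 24 * α - 20 * α ^ 2 + 4 * α ^ 3 := by nlinarith [pow_pos hα0 3]
  have h2 : 0 < 20 * α - 4 * α ^ 2 := by nlinarith
  have hvanish : ∀ k ∈ range n,
      |coeff (3 + k + 1) (cofactor (C α) X)| * (1 / 4) ^ (3 + k + 1) = 0 :=
    fun k _ => by simp [coeff_succ_cofactor, add_comm 3]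
  calc ∑ k ∈ range n, |coeff (k + 1) (cofactor (C α) X)| * (1 / 4) ^ (k + 1)
      ≤ ∑ k ∈ range (3 + n), |coeff (k + 1) (cofactor (C α) X)| * (1 / 4) ^ (k + 1) :=
        sum_le_sum_of_subset_of_nonneg (range_mono (Nat.le_add_left n 3))
          fun _ _ _ => by positivity
    _ = (24 * α - 20 * α ^ 2 + 4 * α ^ 3) * (1 / 4) + (20 * α - 4 * α ^ 2) * (1 / 4) ^ 2 +
          4 * α * (1 / 4) ^ 3 := by
        rw [sum_range_add, sum_eq_zero hvanish, add_zero, sum_range_succ, sum_range_succ,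
          sum_range_one]
        simp only [coeff_succ_cofactor, if_true, one_ne_zero, if_false, OfNat.ofNat_ne_zero,
          OfNat.ofNat_ne_one, abs_neg, abs_of_pos h1, abs_of_pos h2,
          abs_of_pos (mul_pos four_pos hα0), zero_add, pow_one, Nat.reduceAdd]
    _ ≤ 1 := by nlinarith [pow_pos hα0 3, mul_pos hα0 (sub_pos.2 hα1)]

lemma evalsTo_denominator (r : ℝ) : EvalsTo (denominator X) r (denominator r) := by
  convert EvalsTo.polynomial (denominator Polynomial.X) r using 1 <;>
    simp [denominator, polynomial_coe_ofNat]

lemma evalsTo_numerator (hs : EvalsTo s r v) : EvalsTo (numerator X s) r (numerator r v) := by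
  convert (EvalsTo.polynomial (numerator Polynomial.X 0) r).add
    ((EvalsTo.polynomial ((1 - Polynomial.X) ^ 2) r).mul hs) using 1 <;>
    simp [numerator, polynomial_coe_ofNat]

lemma coeffAsymp_denominator (ρ e : ℝ) : CoeffAsymp (denominator X) ρ e 0 := by
  convert CoeffAsymp.polynomial (denominator Polynomial.X) ρ e using 1
  simp [denominator, polynomial_coe_ofNat]

lemma coeffAsymp_numerator (he : 0 ≤ e) (hρ : 0 < ρ) (hs : CoeffAsymp s ρ e L) :
    CoeffAsymp (numerator X s) ρ e (L * (1 - ρ) ^ 2) := by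
  convert (CoeffAsymp.polynomial (numerator Polynomial.X 0) ρ e).add
    (hs.mul_polynomial he hρ ((1 - Polynomial.X) ^ 2)) using 1 <;>
    simp [numerator, polynomial_coe_ofNat, mul_comm s]

/-- The power series `√((1 - 5X) / (1 - X))`. -/
noncomputable def sqrtSeries : ℝ⟦X⟧ := oneSubPow 5 (1 / 2) * oneSubPow 1 (-(1 / 2))

lemma sqrtSeries_sq : sqrtSeries ^ 2 * (1 - X) = 1 - 5 * X := by
  have h5 : oneSubPow 5 (1 / 2) ^ 2 = 1 - 5 * X := by
    rw [sq, ← oneSubPow_add]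
    have h := oneSubPow_natCast 5 1
    rw [Nat.cast_one, pow_one, map_ofNat] at h
    rw [← h]
    norm_num
  have h1 : oneSubPow 1 (-(1 / 2)) ^ 2 * (1 - X) = 1 := by
    have hone := oneSubPow_natCast 1 1
    have hzero := oneSubPow_natCast 1 0
    simp only [Nat.cast_one, Nat.cast_zero, map_one, one_mul, pow_one, pow_zero] at hone hzero
    rw [← hone, sq, ← oneSubPow_add, ← oneSubPow_add, ← hzero]
    norm_num
  rw [sqrtSeries, mul_pow, h5, mul_assoc, h1, mul_one]

lemma constantCoeff_sqrtSeries : constantCoeff sqrtSeries = 1 := by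
  rw [sqrtSeries, map_mul, constantCoeff_oneSubPow, constantCoeff_oneSubPow, mul_one]

lemma evalsTo_sqrtSeries (hr0 : 0 ≤ r) (hr1 : r < 1 / 5) :
    ∃ v, 0 ≤ v ∧ v ^ 2 * (1 - r) = 1 - 5 * r ∧ EvalsTo sqrtSeries r v := by
  have h5 : 0 ≤ 1 - 5 * r := by linarith
  have h1 : 0 < 1 - 1 * r := by linarith
  refine ⟨_, by positivity, ?_, (evalsTo_oneSubPow (abs_lt.2 ⟨by linarith, by linarith⟩)).mul
    (evalsTo_oneSubPow (abs_lt.2 ⟨by linarith, by linarith⟩))⟩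
  rw [mul_pow, ← Real.rpow_natCast, ← Real.rpow_natCast, ← Real.rpow_mul h5, ← Real.rpow_mul h1.le,
    show 1 / 2 * ((2 : ℕ) : ℝ) = 1 by norm_num, show -(1 / 2) * ((2 : ℕ) : ℝ) = -1 by norm_num,
    Real.rpow_one, Real.rpow_neg_one, one_mul, inv_mul_cancel_right₀ (by linarith)]

lemma inv_Gamma_neg_one_half : (Real.Gamma (-(1 / 2)))⁻¹ = -(2 * √Real.pi)⁻¹ := by
  have h := Real.Gamma_add_one (s := -(1 / 2)) (by norm_num)
  rw [show -(1 / 2) + 1 = (1 / 2 : ℝ) by norm_num, Real.Gamma_one_half_eq] at h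
  rw [h, ← inv_neg]
  congr 1
  ring

lemma coeffAsymp_sqrtSeries : CoeffAsymp sqrtSeries (1 / 5) (3 / 2) (-√(5 / Real.pi) / 4) := by
  have hhalf (k : ℕ) : (1 / 2 : ℝ) ≠ k := fun h => by
    have : (2 * k : ℝ) = 1 := by linarith
    norm_cast at this
    omega
  have hfive := coeffAsymp_oneSubPow (ρ := 1 / 5) (by norm_num) hhalf
  have hone (r : ℝ) (hr : |1 * r| < 1) := evalsTo_oneSubPow (a := -(1 / 2)) hr
  have h := hfive.mul (by norm_num) (by norm_num) (hone (1 / 5) (by norm_num [abs_lt]))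
    (by norm_num) (hone (1 / 2) (by norm_num [abs_lt])).summable
  rw [inv_Gamma_neg_one_half] at h
  convert h using 1
  · norm_num [sqrtSeries]
  · norm_num
  · have h45 : (1 - 1 * (1 / 5) : ℝ) ^ (-(1 / 2) : ℝ) = √5 / 2 := by
      rw [Real.rpow_neg (by norm_num), ← Real.sqrt_eq_rpow, ← Real.sqrt_inv,
        show (1 - 1 * (1 / 5) : ℝ)⁻¹ = 5 / 2 ^ 2 by norm_num, Real.sqrt_div' _ (by norm_num),
        Real.sqrt_sq (by norm_num)]
    rw [h45, Real.sqrt_div (by norm_num)]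
    field_simp
    norm_num

theorem evalsTo_denominator_mul_mk_dCount (hα0 : 0 < α) (hα1 : α < 1 / 5)
    (hα : denominator α = 0) :
    EvalsTo (denominator X * mk fun n => (dCount n : ℝ)) α 0 := by
  obtain ⟨v, hv0, hv, hs⟩ := evalsTo_sqrtSeries hα0.le hα1
  rw [denominator_mul_mk_dCount sqrtSeries_sq constantCoeff_sqrtSeries]
  convert (evalsTo_denominator α).add
    ((EvalsTo.polynomial (1 - 2 * Polynomial.X) α).mul (evalsTo_numerator hs)) using 1
  · simp [polynomial_coe_ofNat]
  · rw [hα, numerator_eq_zero hα0 hα1.le hα hv0 hv, mul_zero, add_zero]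

theorem coeffAsymp_denominator_mul_mk_dCount :
    CoeffAsymp (denominator X * mk fun n => (dCount n : ℝ)) (1 / 5) (3 / 2)
      (-(12 / 125) * √(5 / Real.pi)) := by
  have h := (coeffAsymp_denominator (1 / 5) (3 / 2)).add ((coeffAsymp_numerator (by norm_num)
    (by norm_num) coeffAsymp_sqrtSeries).mul_polynomial (by norm_num) (by norm_num)
      (1 - 2 * Polynomial.X))
  rw [denominator_mul_mk_dCount sqrtSeries_sq constantCoeff_sqrtSeries, mul_comm (1 - 2 * X)]
  convert h using 1
  · simp [polynomial_coe_ofNat]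
  · simp only [Polynomial.eval_sub, Polynomial.eval_one, Polynomial.eval_mul,
      Polynomial.eval_ofNat, Polynomial.eval_X]
    ring

end CountSeries

open KernelMethod SingularityAnalysis CountSeries in
theorem dCount_asymptotics :
    Tendsto (fun n : ℕ => (dCount n : ℝ) * (n : ℝ) ^ ((3 : ℝ) / 2) / 5 ^ n)
      atTop (nhds ((60 / 121) * Real.sqrt (5 / Real.pi))) := by
  obtain ⟨α, hα0, hα1, hα⟩ := exists_denominator_eq_zero
  have hasymp := coeffAsymp_denominator_mul_mk_dCount
  have hzero := evalsTo_denominator_mul_mk_dCount hα0 (by linarith) hα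
  rw [denominator_X_eq_mul_cofactor hα0.ne' hα, mul_assoc] at hasymp hzero
  have hpole := hasymp.of_linear_mul (by norm_num) hα0.ne' (by rw [abs_of_pos hα0]; linarith) hzero
  have h := hpole.of_mul (by norm_num) (by norm_num)
    (by simp [cofactor]) (evalsTo_cofactor α _) (by norm_num : (1 / 5 : ℝ) < 6 / 25)
    (summable_coeff_inv_cofactor hα0 hα1 (by norm_num) (by norm_num))
  rw [div_div, div_eq_inv_mul (1 / 5) α,
    ← denominator_eq_mul_cofactor hα (mul_inv_cancel₀ hα0.ne'), CoeffAsymp] at h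
  convert h using 2 with n
  · rw [coeff_mk, one_div, inv_pow]
    ring
  · norm_num [denominator]
    ring
end

section
/- Let h(n) denote the number of permutations of length n avoiding 4213, 2413 and 2143, and let d(n) denote the number of permutations of length n avoiding 4213 and 2143. Then the ratio h(n)/d(n) tends to 121/216 as n → ∞; in particular, since 121/216 > 1/2, for all sufficiently large n more than half of the permutations of length n avoiding 4213 and 2143 also avoid 2413. -/
open Filter Topology PowerSeries

/-!
Permutations in either class are grown by appending a last entry. Which values may be appended is
governed by a few parameters of the permutation, so the descendants of each permutation have an
explicit generating series in terms of the solution `y` of `y = X (1 + 3 y + y²)`. In particular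
`∑ h(n) Xⁿ = 1 / (1 - X (1 + y))` and
`∑ d(n) Xⁿ = (1 - X) / (1 - 2 X + 2 X² - 2 X (1 - 2 X) y)`.

After replacing `X` by `X / 5`, both coefficient sequences are asymptotic to constants times one and
the same sequence, the rescaled coefficients of `y / X`: series with this property form a ring which
is closed under `A ↦ (1 - A)⁻¹` when the absolute values of the coefficients of `A` have sum less
than `1`. The constants are `1 / 9` and `24 / 121`, with quotient `121 / 216`.
-/

/-! ### Patterns -/

open Equiv (Perm)
open Finset (range)

section Patterns

variable {n k : ℕ} (σ : Perm (Fin n))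

lemma patternContains_iff_exists_strictMono {π ρ : Fin k → Fin k} (hπρ : ∀ a, π (ρ a) = a)
    (hρπ : ∀ a, ρ (π a) = a) :
    PatternContains σ π ↔ ∃ f : Fin k → Fin n, StrictMono f ∧ StrictMono (σ ∘ f ∘ ρ) := by
  refine exists_congr fun f => and_congr_right fun _ => ⟨fun h a b hab => ?_, fun h a b => ?_⟩
  · exact (h _ _).1 (by rwa [hπρ, hπρ])
  · simpa [hρπ] using (h.lt_iff_lt (a := π a) (b := π b)).symm

lemma patternContains_p4213 : PatternContains σ p4213 ↔
    ∃ a b c d, (a < b ∧ b < c ∧ c < d) ∧ σ c < σ b ∧ σ b < σ d ∧ σ d < σ a := by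
  rw [patternContains_iff_exists_strictMono σ (ρ := ![2, 1, 3, 0]) (by decide) (by decide)]
  simp only [Fin.strictMono_iff_lt_succ, Fin.forall_fin_succ, IsEmpty.forall_iff, and_true,
    Fin.exists_fin_succ_pi, Fin.exists_fin_zero_pi]
  rfl

lemma patternContains_p2413 : PatternContains σ p2413 ↔
    ∃ a b c d, (a < b ∧ b < c ∧ c < d) ∧ σ c < σ a ∧ σ a < σ d ∧ σ d < σ b := by
  rw [patternContains_iff_exists_strictMono σ (ρ := ![2, 0, 3, 1]) (by decide) (by decide)]
  simp only [Fin.strictMono_iff_lt_succ, Fin.forall_fin_succ, IsEmpty.forall_iff, and_true,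
    Fin.exists_fin_succ_pi, Fin.exists_fin_zero_pi]
  rfl

lemma patternContains_p2143 : PatternContains σ p2143 ↔
    ∃ a b c d, (a < b ∧ b < c ∧ c < d) ∧ σ b < σ a ∧ σ a < σ d ∧ σ d < σ c := by
  rw [patternContains_iff_exists_strictMono σ (ρ := ![1, 0, 3, 2]) (by decide) (by decide)]
  simp only [Fin.strictMono_iff_lt_succ, Fin.forall_fin_succ, IsEmpty.forall_iff, and_true,
    Fin.exists_fin_succ_pi, Fin.exists_fin_zero_pi]
  rfl

end Patterns

section Append

variable {n : ℕ} (σ : Perm (Fin n)) (v : Fin (n + 1))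

/-- The permutation obtained from `σ` by appending a last entry of value `v`, the values `≥ v` of
`σ` being shifted up by one. Every generating tree below grows permutations by this operation. -/
def appendLast : Perm (Fin (n + 1)) :=
  finSuccEquivLast.trans ((Equiv.optionCongr σ).trans (finSuccEquiv' v).symm)

@[simp] lemma appendLast_last : appendLast σ v (Fin.last n) = v := by
  simp [appendLast]

@[simp] lemma appendLast_castSucc (k : Fin n) :
    appendLast σ v k.castSucc = v.succAbove (σ k) := by
  simp [appendLast]

lemma val_appendLast_castSucc (k : Fin n) :
    (appendLast σ v k.castSucc : ℕ) = if (σ k : ℕ) < v then (σ k : ℕ) else (σ k : ℕ) + 1 := by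
  rw [appendLast_castSucc, Fin.succAbove]
  simp only [Fin.lt_def, Fin.val_castSucc]
  split_ifs <;> simp

lemma appendLast_castSucc_lt_castSucc_iff (k l : Fin n) :
    appendLast σ v k.castSucc < appendLast σ v l.castSucc ↔ σ k < σ l := by
  simp [Fin.succAbove_lt_succAbove_iff]

lemma appendLast_castSucc_lt_last_iff (k : Fin n) :
    appendLast σ v k.castSucc < appendLast σ v (Fin.last n) ↔ (σ k : ℕ) < v := by
  rw [Fin.lt_def, val_appendLast_castSucc, appendLast_last]
  split_ifs <;> omega

lemma appendLast_last_lt_castSucc_iff (k : Fin n) :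
    appendLast σ v (Fin.last n) < appendLast σ v k.castSucc ↔ (v : ℕ) ≤ σ k := by
  rw [Fin.lt_def, val_appendLast_castSucc, appendLast_last]
  split_ifs <;> omega

lemma appendLast_one_last : appendLast (1 : Perm (Fin n)) (Fin.last n) = 1 := by
  ext k
  induction k using Fin.lastCases with
  | last => simp
  | cast k => simp [val_appendLast_castSucc, -appendLast_castSucc]

lemma appendLast_bijective (n : ℕ) :
    Function.Bijective fun p : Perm (Fin n) × Fin (n + 1) => appendLast p.1 p.2 := by
  rw [Fintype.bijective_iff_injective_and_card]
  refine ⟨?_, by simp [Fintype.card_perm, Nat.factorial_succ, mul_comm]⟩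
  rintro ⟨σ, v⟩ ⟨τ, w⟩ h
  obtain rfl : v = w := by simpa using Equiv.congr_fun h (Fin.last n)
  obtain rfl : σ = τ := by
    ext k
    have hk : v.succAbove (σ k) = v.succAbove (τ k) := by
      simpa using Equiv.congr_fun h k.castSucc
    rw [Fin.succAbove_right_injective hk]
  rfl

lemma appendLast_castSucc_lt_iff_of_le {m : ℕ} (hm : m ≤ v) (k : Fin n) :
    (appendLast σ v k.castSucc : ℕ) < m ↔ (σ k : ℕ) < m := by
  rw [val_appendLast_castSucc]
  split_ifs <;> omega

lemma appendLast_castSucc_lt_succ_iff {m : ℕ} (hm : v ≤ m) (k : Fin n) :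
    (appendLast σ v k.castSucc : ℕ) < m + 1 ↔ (σ k : ℕ) < m := by
  rw [val_appendLast_castSucc]
  split_ifs <;> omega

lemma patternContains_p4213_appendLast : PatternContains (appendLast σ v) p4213 ↔
    PatternContains σ p4213 ∨
      ∃ a b c, (a < b ∧ b < c) ∧ σ c < σ b ∧ (σ b : ℕ) < v ∧ (v : ℕ) ≤ σ a := by
  simp [patternContains_p4213, Fin.exists_fin_succ', Fin.castSucc_lt_last, (Fin.le_last _).not_gt,
    appendLast_castSucc_lt_castSucc_iff, appendLast_castSucc_lt_last_iff,
    appendLast_last_lt_castSucc_iff, exists_or, -appendLast_castSucc, -appendLast_last]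

lemma patternContains_p2413_appendLast : PatternContains (appendLast σ v) p2413 ↔
    PatternContains σ p2413 ∨
      ∃ a b c, (a < b ∧ b < c) ∧ σ c < σ a ∧ (σ a : ℕ) < v ∧ (v : ℕ) ≤ σ b := by
  simp [patternContains_p2413, Fin.exists_fin_succ', Fin.castSucc_lt_last, (Fin.le_last _).not_gt,
    appendLast_castSucc_lt_castSucc_iff, appendLast_castSucc_lt_last_iff,
    appendLast_last_lt_castSucc_iff, exists_or, -appendLast_castSucc, -appendLast_last]

lemma patternContains_p2143_appendLast : PatternContains (appendLast σ v) p2143 ↔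
    PatternContains σ p2143 ∨
      ∃ a b c, (a < b ∧ b < c) ∧ σ b < σ a ∧ (σ a : ℕ) < v ∧ (v : ℕ) ≤ σ c := by
  simp [patternContains_p2143, Fin.exists_fin_succ', Fin.castSucc_lt_last, (Fin.le_last _).not_gt,
    appendLast_castSucc_lt_castSucc_iff, appendLast_castSucc_lt_last_iff,
    appendLast_last_lt_castSucc_iff, exists_or, -appendLast_castSucc, -appendLast_last]

end Append

section Descendants

variable (P : ∀ n, Perm (Fin n) → Prop)

open Classical in
/-- The number of permutations satisfying `P` obtained from `σ` by appending `r` entries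
in succession. -/
noncomputable def descendants : ℕ → ∀ {n : ℕ}, Perm (Fin n) → ℕ
  | 0, n, σ => if P n σ then 1 else 0
  | r + 1, _, σ => ∑ v, descendants r (appendLast σ v)

lemma sum_descendants (r n : ℕ) : ∑ σ : Perm (Fin n), descendants P r σ =
    Nat.card {σ : Perm (Fin (n + r)) // P (n + r) σ} := by
  classical
  induction r generalizing n with
  | zero => simp [descendants, Nat.card_eq_fintype_card, Fintype.card_subtype]
  | succ r ih =>
    rw [← add_assoc, add_right_comm, ← ih, ← (appendLast_bijective n).sum_comp,
      Fintype.sum_prod_type]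
    rfl

lemma card_eq_descendants (r : ℕ) :
    Nat.card {σ : Perm (Fin r) // P r σ} = descendants P r (1 : Perm (Fin 0)) := by
  rw [← Nat.zero_add r, ← sum_descendants, Nat.zero_add, Fintype.sum_unique]
  rfl

variable {P}

lemma descendants_eq_zero (hP : ∀ n (σ : Perm (Fin n)) v, P (n + 1) (appendLast σ v) → P n σ)
    (r : ℕ) {n : ℕ} {σ : Perm (Fin n)} (hσ : ¬ P n σ) : descendants P r σ = 0 := by
  induction r generalizing n with
  | zero => simp [descendants, hσ]
  | succ r ih => exact Finset.sum_eq_zero fun v _ => ih fun h => hσ (hP _ _ _ h)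

end Descendants

/-! ### Sites -/

section Sites

variable {n : ℕ}

/-- The values below `m` appear in increasing order. -/
def LowIncreasing (σ : Perm (Fin n)) (m : ℕ) : Prop :=
  ∀ a b, a < b → (σ a : ℕ) < m → (σ b : ℕ) < m → σ a < σ b

/-- Every inversion among the values below `m` straddles all the values that are at least `m`.
These `m` are the values that can be appended to `σ` without creating 4213 or 2143. -/
def Straddles (σ : Perm (Fin n)) (m : ℕ) : Prop :=
  ∀ a b, a < b → σ b < σ a → (σ a : ℕ) < m → ∀ c, m ≤ (σ c : ℕ) → a < c ∧ c < b

/-- The values in `[u, m)` appear before all the values that are at least `m`. -/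
def Precedes (σ : Perm (Fin n)) (u m : ℕ) : Prop :=
  ∀ a, u ≤ (σ a : ℕ) → (σ a : ℕ) < m → ∀ c, m ≤ (σ c : ℕ) → a < c

variable (σ : Perm (Fin n)) (v : Fin (n + 1))

lemma exists_val_eq {m : ℕ} (hm : m < n) : ∃ c, (σ c : ℕ) = m :=
  ⟨σ.symm ⟨m, hm⟩, by simp⟩

lemma straddles_iff_not_exists {m : ℕ} : Straddles σ m ↔
    (¬ ∃ a b c, (a < b ∧ b < c) ∧ σ c < σ b ∧ (σ b : ℕ) < m ∧ m ≤ (σ a : ℕ)) ∧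
      ¬ ∃ a b c, (a < b ∧ b < c) ∧ σ b < σ a ∧ (σ a : ℕ) < m ∧ m ≤ (σ c : ℕ) := by
  refine ⟨fun h => ⟨?_, ?_⟩, fun h a b hab hlt ha c hc => ⟨?_, ?_⟩⟩
  · rintro ⟨c, a, b, ⟨hca, hab⟩, hlt, ha, hc⟩
    exact hca.not_gt (h a b hab hlt ha c hc).1
  · rintro ⟨a, b, c, ⟨hab, hbc⟩, hlt, ha, hc⟩
    exact hbc.not_gt (h a b hab hlt ha c hc).2
  · refine lt_of_not_ge fun hca => h.1 ⟨c, a, b, ⟨hca.lt_of_ne ?_, hab⟩, hlt, ha, hc⟩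
    rintro rfl
    omega
  · refine lt_of_not_ge fun hbc => h.2 ⟨a, b, c, ⟨hab, hbc.lt_of_ne ?_⟩, hlt, ha, hc⟩
    rintro rfl
    exact (hlt.trans_le' (Fin.le_def.2 (by omega))).false

lemma straddles_of_lowIncreasing {m : ℕ} (h : LowIncreasing σ m) : Straddles σ m :=
  fun a b hab hlt ha => absurd (h a b hab ha ((Fin.lt_def.1 hlt).trans ha)) hlt.not_gt

lemma straddles_top : Straddles σ n := fun _ _ _ _ _ c hc => absurd (σ c).2 hc.not_gt

lemma lowIncreasing_or_eq_top_iff {m : ℕ} (hm : m ≤ n) : LowIncreasing σ m ∨ m = n ↔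
    Straddles σ m ∧
      ¬ ∃ a b c, (a < b ∧ b < c) ∧ σ c < σ a ∧ (σ a : ℕ) < m ∧ m ≤ (σ b : ℕ) := by
  constructor
  · rintro (h | rfl)
    · refine ⟨straddles_of_lowIncreasing σ h, ?_⟩
      rintro ⟨a, b, c, ⟨hab, hbc⟩, hlt, ha, -⟩
      exact (h a c (hab.trans hbc) ha ((Fin.lt_def.1 hlt).trans ha)).not_gt hlt
    · exact ⟨straddles_top σ, fun ⟨_, b, _, _, _, _, hb⟩ => absurd (σ b).2 hb.not_gt⟩
  · rintro ⟨hs, hn⟩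
    refine or_iff_not_imp_right.2 fun hmn a b hab ha _ => lt_of_not_ge fun hle => ?_
    have hlt : σ b < σ a := hle.lt_of_ne (σ.injective.ne hab.ne')
    obtain ⟨c, hc⟩ := exists_val_eq σ (hm.lt_of_ne hmn)
    exact hn ⟨a, c, b, hs a b hab hlt ha c hc.ge, hlt, ha, hc.ge⟩

lemma avoidsD_appendLast : AvoidsD (appendLast σ v) ↔ AvoidsD σ ∧ Straddles σ v := by
  simp only [AvoidsD, PatternAvoids, patternContains_p4213_appendLast,
    patternContains_p2143_appendLast, straddles_iff_not_exists, not_or]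
  exact iff_of_eq (by ac_rfl)

lemma avoidsH_appendLast :
    AvoidsH (appendLast σ v) ↔ AvoidsH σ ∧ (LowIncreasing σ v ∨ (v : ℕ) = n) := by
  simp only [AvoidsH, PatternAvoids, patternContains_p4213_appendLast,
    patternContains_p2413_appendLast, patternContains_p2143_appendLast,
    lowIncreasing_or_eq_top_iff σ v.is_le, straddles_iff_not_exists, not_or]
  exact iff_of_eq (by ac_rfl)

end Sites

section AppendSites

variable {n : ℕ} (σ : Perm (Fin n)) (v : Fin (n + 1))

lemma precedes_self (u : ℕ) : Precedes σ u u := fun _ hu ha => absurd hu ha.not_ge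

lemma precedes_top (u : ℕ) : Precedes σ u n := fun _ _ _ c hc => absurd (σ c).2 hc.not_gt

lemma lowIncreasing_appendLast_iff_of_le {m : ℕ} (hm : m ≤ v) :
    LowIncreasing (appendLast σ v) m ↔ LowIncreasing σ m := by
  simp only [LowIncreasing, Fin.forall_fin_succ', appendLast_castSucc_lt_iff_of_le σ v hm,
    appendLast_castSucc_lt_castSucc_iff, Fin.castSucc_lt_castSucc_iff, appendLast_last, hm.not_gt,
    IsEmpty.forall_iff, implies_true, and_true]

lemma lowIncreasing_appendLast_succ_iff {m : ℕ} (hv : v ≤ m) (hm : m ≤ n) :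
    LowIncreasing (appendLast σ v) (m + 1) ↔ LowIncreasing σ m ∧ m = v := by
  have below : (∀ a, (σ a : ℕ) < m → (σ a : ℕ) < v) ↔ m = v := by
    refine ⟨fun h => le_antisymm (not_lt.1 fun hlt => ?_) hv, fun h a ha => h ▸ ha⟩
    obtain ⟨a, ha⟩ := exists_val_eq σ (hlt.trans_le hm)
    exact (h a (ha ▸ hlt)).ne ha
  simp only [LowIncreasing, Fin.forall_fin_succ', appendLast_castSucc_lt_succ_iff σ v hv,
    appendLast_castSucc_lt_castSucc_iff, appendLast_castSucc_lt_last_iff,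
    Fin.castSucc_lt_castSucc_iff, Fin.castSucc_lt_last, (Fin.le_last _).not_gt]
  simp [hv, forall_and, below]

lemma straddles_appendLast_iff_of_le {m : ℕ} (hm : m ≤ v) :
    Straddles (appendLast σ v) m ↔ LowIncreasing σ m := by
  rw [← lowIncreasing_appendLast_iff_of_le σ v hm]
  refine ⟨fun h a b hab ha _ => lt_of_not_ge fun hle => ?_, straddles_of_lowIncreasing _⟩
  have hlt := hle.lt_of_ne ((appendLast σ v).injective.ne hab.ne')
  exact (h a b hab hlt ha (Fin.last n) (by simpa using hm)).2.not_ge (Fin.le_last b)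

lemma straddles_appendLast_succ_iff {m : ℕ} (hv : v ≤ m) :
    Straddles (appendLast σ v) (m + 1) ↔ Straddles σ m ∧ Precedes σ v m := by
  simp only [Straddles, Precedes, ← not_lt, Fin.forall_fin_succ',
    appendLast_castSucc_lt_succ_iff σ v hv, appendLast_castSucc_lt_castSucc_iff,
    appendLast_last_lt_castSucc_iff]
  simp [hv, Fin.castSucc_lt_last, (Fin.le_last _).not_gt, forall_and]

lemma precedes_appendLast_iff_of_le {u m : ℕ} (hm : m ≤ v) :
    Precedes (appendLast σ v) u m ↔ Precedes σ u m := by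
  refine ⟨fun h a hu ha c hc => ?_, fun h a hu ha c hc => ?_⟩
  · simpa using h a.castSucc (by grind [val_appendLast_castSucc])
      (by grind [val_appendLast_castSucc]) c.castSucc (by grind [val_appendLast_castSucc])
  · induction a using Fin.lastCases with
    | last => simp [hm.not_gt] at ha
    | cast a =>
      induction c using Fin.lastCases with
      | last => exact Fin.castSucc_lt_last a
      | cast c =>
        rw [val_appendLast_castSucc] at hu ha hc
        exact h a (by grind) (by grind) c (by grind)

lemma precedes_appendLast_succ_iff {u m : ℕ} (h : Precedes σ v m) (hv : v ≤ m) (hm : m < n) :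
    Precedes (appendLast σ v) u (m + 1) ↔ v < u := by
  constructor
  · intro h
    obtain ⟨c, hc⟩ := exists_val_eq σ hm
    refine lt_of_not_ge fun hu => (h (Fin.last n) ?_ ?_ c.castSucc ?_).not_ge (Fin.le_last _)
    · simpa using hu
    · simpa [Nat.lt_succ_iff] using hv
    · rw [← not_lt, appendLast_castSucc_lt_succ_iff σ v hv, hc]
      exact lt_irrefl m
  · intro hu a
    induction a using Fin.lastCases with
    | last => simp [hu.not_ge]
    | cast a =>
      intro hu' ha c hc
      induction c using Fin.lastCases with
      | last => exact Fin.castSucc_lt_last a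
      | cast c =>
        rw [val_appendLast_castSucc] at hu' ha hc
        exact h a (by grind) (by grind) c (by grind)

end AppendSites

/-! ### Shapes of the permutations avoiding 4213 and 2143 -/

section Shapes

variable {n : ℕ}

/-- The label of a node in the generating tree of the permutations avoiding 4213 and 2143. The
values below `m` increase exactly for `m ≤ j`, among which `[u, m)` precedes everything larger
exactly for `m ≤ i` (or `u = m`). The other sites are the `s` special ones, `m ∈ [b, b + s)`, for
which `[u, m)` precedes everything larger exactly when `e ≤ u`, and the top `m = n`. -/
structure HasShape (σ : Perm (Fin n)) (i j e b s : ℕ) : Prop where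
  i_le_j : i ≤ j
  j_le_e : j ≤ e
  e_le_b : e ≤ b
  j_lt_b : j < b
  lowIncreasing_iff : ∀ m ≤ n, LowIncreasing σ m ↔ m ≤ j
  straddles_iff : ∀ m ≤ n, Straddles σ m ↔ m ≤ j ∨ (b ≤ m ∧ m < b + s) ∨ m = n
  precedes_iff_of_le : ∀ u m, u < m → m ≤ j → (Precedes σ u m ↔ m ≤ i)
  precedes_iff_of_special : ∀ u m, u ≤ m → b ≤ m → m < b + s → m < n → (Precedes σ u m ↔ e ≤ u)

lemma lowIncreasing_one (m : ℕ) : LowIncreasing (1 : Perm (Fin n)) m := fun _ _ hab _ _ => hab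

lemma hasShape_one : HasShape (1 : Perm (Fin n)) n n n (n + 1) 0 where
  i_le_j := le_rfl
  j_le_e := le_rfl
  e_le_b := n.le_succ
  j_lt_b := n.lt_succ_self
  lowIncreasing_iff m hm := iff_of_true (lowIncreasing_one m) hm
  straddles_iff m hm := iff_of_true (straddles_of_lowIncreasing _ (lowIncreasing_one m)) (.inl hm)
  precedes_iff_of_le _ _ _ hm := iff_of_true (fun _ _ ha _ hc => ha.trans_le hc) hm
  precedes_iff_of_special := by omega

lemma lowIncreasing_appendLast_iff {σ : Perm (Fin n)} {j : ℕ}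
    (hσ : ∀ m ≤ n, LowIncreasing σ m ↔ m ≤ j) (v : Fin (n + 1)) {m : ℕ} (hm : m ≤ n + 1) :
    LowIncreasing (appendLast σ v) m ↔ m ≤ if v ≤ j then (v : ℕ) + 1 else j := by
  rcases le_or_gt m v with h | h
  · rw [lowIncreasing_appendLast_iff_of_le σ v h, hσ m (h.trans v.is_le)]
    grind
  · obtain ⟨m, rfl⟩ := Nat.exists_eq_add_one_of_ne_zero (Nat.ne_zero_of_lt h)
    rw [lowIncreasing_appendLast_succ_iff σ v (by omega) (by omega), hσ m (by omega)]
    grind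

namespace HasShape

variable {σ : Perm (Fin n)} {i j e b s : ℕ}

lemma straddles_and_precedes_iff (h : HasShape σ i j e b s) {u m : ℕ} (hu : u ≤ m) (hm : m < n) :
    Straddles σ m ∧ Precedes σ u m ↔
      m ≤ j ∧ (m ≤ i ∨ m = u) ∨ b ≤ m ∧ m < b + s ∧ e ≤ u := by
  rw [h.straddles_iff m hm.le]
  have hjb := h.j_lt_b
  have heb := h.e_le_b
  rcases hu.eq_or_lt with rfl | hlt
  · simp only [precedes_self, and_true, or_true]
    omega
  · have hlow := h.precedes_iff_of_le u m hlt
    have hspecial := h.precedes_iff_of_special u m hu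
    grind

/-- The numbers `b'` and `s'` describe the special sites of the appended permutation: they stem
from the sites above `v` that are not separated from `v` by the inversions below them. -/
lemma append {b' s' : ℕ} (h : HasShape σ i j e b s) {v : Fin (n + 1)} (hv : (v : ℕ) < n)
    (hvb : v + 1 ≤ b') (hvb' : v ≤ j → v + 1 < b')
    (special_iff : ∀ m : ℕ, v ≤ m → m < n →
      (v < m ∧ m ≤ i ∨ b ≤ m ∧ m < b + s ∧ e ≤ v ↔ b' ≤ m + 1 ∧ m + 1 < b' + s')) :
    HasShape (appendLast σ v) (min i v) (if v ≤ j then v + 1 else j) (v + 1) b' s' where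
  i_le_j := by have := h.i_le_j; grind
  j_le_e := by grind
  e_le_b := hvb
  j_lt_b := by grind
  lowIncreasing_iff m hm := lowIncreasing_appendLast_iff h.lowIncreasing_iff v hm
  straddles_iff m hm := by
    have := h.i_le_j
    rcases le_or_gt m v with hmv | hmv
    · rw [straddles_appendLast_iff_of_le σ v hmv, h.lowIncreasing_iff m (by omega)]
      grind
    · obtain ⟨m, rfl⟩ := Nat.exists_eq_add_one_of_ne_zero (Nat.ne_zero_of_lt hmv)
      rw [straddles_appendLast_succ_iff σ v (by omega)]
      obtain rfl | hmn : m = n ∨ m < n := by omega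
      · exact iff_of_true ⟨straddles_top σ, precedes_top σ v⟩ (.inr (.inr rfl))
      · rw [h.straddles_and_precedes_iff (by omega) hmn]
        have := special_iff m (by omega) hmn
        grind
  precedes_iff_of_le u m hu hm := by
    rcases le_or_gt m v with hmv | hmv
    · rw [precedes_appendLast_iff_of_le σ v hmv, h.precedes_iff_of_le u m hu (by grind)]
      omega
    · obtain rfl : m = v + 1 := by grind
      rw [precedes_appendLast_succ_iff σ v (precedes_self σ v) le_rfl hv]
      omega
  precedes_iff_of_special u m hu hbm hms hmn := by
    obtain ⟨m, rfl⟩ := Nat.exists_eq_add_one_of_ne_zero (n := m) (by omega)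
    have hmn' : m < n := by omega
    have hprec := (h.straddles_and_precedes_iff (u := v) (m := m) (by omega) hmn').2 (by
      have := special_iff m (by omega) hmn'
      have := h.i_le_j
      omega)
    exact precedes_appendLast_succ_iff σ v hprec.2 (by omega) hmn'

lemma append_top (h : HasShape σ i j e b s) {v : Fin (n + 1)} (hv : (v : ℕ) = n) (hj : j < n) :
    HasShape (appendLast σ v) i j j (j + 1) 0 where
  i_le_j := h.i_le_j
  j_le_e := le_rfl
  e_le_b := j.le_succ
  j_lt_b := j.lt_succ_self
  lowIncreasing_iff m hm := by
    rw [lowIncreasing_appendLast_iff h.lowIncreasing_iff v hm, if_neg (by omega)]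
  straddles_iff m hm := by
    obtain hmn | rfl := hm.lt_or_eq
    · rw [straddles_appendLast_iff_of_le σ v (by omega), h.lowIncreasing_iff m (by omega)]
      omega
    · exact iff_of_true (straddles_top _) (.inr (.inr rfl))
  precedes_iff_of_le u m hu hm := by
    rw [precedes_appendLast_iff_of_le σ v (by omega), h.precedes_iff_of_le u m hu hm]
  precedes_iff_of_special := by omega

lemma append_prefix (h : HasShape σ i j e b s) {v : Fin (n + 1)} (hvi : v < i) (hv : (v : ℕ) < n)
    {s' : ℕ} (hs' : ∀ m < n, m ≤ i ↔ m ≤ v + s') :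
    HasShape (appendLast σ v) v (v + 1) (v + 1) (v + 2) s' := by
  have := h.i_le_j
  have := h.j_le_e
  convert h.append hv (b' := v + 2) (s' := s') ?_ ?_ ?_ using 1
  · omega
  · rw [if_pos (by omega)]
  all_goals grind

lemma append_low (h : HasShape σ i j e b s) {v : Fin (n + 1)} (hiv : i ≤ v) (hvj : v ≤ j)
    (hve : v < e) (hv : (v : ℕ) < n) :
    HasShape (appendLast σ v) i (v + 1) (v + 1) (v + 2) 0 := by
  convert h.append hv (b' := v + 2) (s' := 0) ?_ ?_ ?_ using 1
  · omega
  · rw [if_pos hvj]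
  all_goals omega

lemma append_exact (h : HasShape σ i j j b s) {v : Fin (n + 1)} (hvj : v = j) (hv : (v : ℕ) < n) :
    HasShape (appendLast σ v) i (j + 1) (j + 1) (b + 1) s := by
  have := h.i_le_j
  have := h.j_lt_b
  convert h.append hv (b' := b + 1) (s' := s) ?_ ?_ ?_ using 1
  · omega
  · rw [if_pos hvj.le, hvj]
  all_goals omega

lemma append_special (h : HasShape σ i j e b s) {v : Fin (n + 1)} (hbv : b ≤ v) (hvb : v < b + s)
    (hv : (v : ℕ) < n) : HasShape (appendLast σ v) i j (v + 1) (v + 1) (b + s - v) := by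
  have := h.i_le_j
  have := h.e_le_b
  have := h.j_lt_b
  convert h.append hv (b' := v + 1) (s' := b + s - v) ?_ ?_ ?_ using 1
  · omega
  · rw [if_neg (by omega)]
  all_goals omega

end HasShape

end Shapes

/-! ### Sums of the form `∑ Xᵏ Fₖ` -/

section SumXPow

variable {R : Type*} [CommRing R]

/-- The power series `∑ Xᵏ Fₖ`. It collects a sequence of series that is determined by a recursion
on `k` into a single series. -/
noncomputable def sumXPow (F : ℕ → R⟦X⟧) : R⟦X⟧ :=
  .mk fun n => ∑ k ∈ range (n + 1), coeff (n - k) (F k)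

lemma sumXPow_eq (F : ℕ → R⟦X⟧) : sumXPow F = F 0 + X * sumXPow fun k => F (k + 1) := by
  ext n
  cases n with
  | zero => simp [sumXPow]
  | succ n =>
    rw [map_add, coeff_succ_X_mul, sumXPow, coeff_mk, Finset.sum_range_succ', add_comm, sumXPow,
      coeff_mk]
    simp only [Nat.add_sub_add_right, Nat.sub_zero]

lemma sumXPow_add_eq (F : ℕ → R⟦X⟧) (n : ℕ) :
    sumXPow (fun k => F (n + k)) = F n + X * sumXPow fun k => F (n + 1 + k) := by
  rw [sumXPow_eq]
  simp only [add_zero, add_right_comm, add_assoc]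

lemma eq_sumXPow {F S : ℕ → R⟦X⟧} (h : ∀ n, S n = F n + X * S (n + 1)) : S 0 = sumXPow F := by
  suffices ∀ r n, coeff r (S n) = coeff r (sumXPow fun k => F (n + k)) by
    ext r
    simpa using this r 0
  intro r
  induction r with
  | zero =>
    intro n
    rw [h, sumXPow_add_eq]
    simp
  | succ r ih =>
    intro n
    rw [h, sumXPow_add_eq, map_add, map_add, coeff_succ_X_mul, coeff_succ_X_mul, ih]

lemma sumXPow_add (F G : ℕ → R⟦X⟧) : sumXPow (fun k => F k + G k) = sumXPow F + sumXPow G := by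
  have h := eq_sumXPow (F := fun k => F k + G k)
    (S := fun n => sumXPow (fun k => F (n + k)) + sumXPow fun k => G (n + k)) fun n => by
      linear_combination sumXPow_add_eq F n + sumXPow_add_eq G n
  simpa using h.symm

lemma sumXPow_const_mul (c : R⟦X⟧) (F : ℕ → R⟦X⟧) :
    sumXPow (fun k => c * F k) = c * sumXPow F := by
  have h := eq_sumXPow (F := fun k => c * F k) (S := fun n => c * sumXPow fun k => F (n + k))
    fun n => by linear_combination c * sumXPow_add_eq F n
  simpa using h.symm

lemma one_sub_X_mul_pow_mul_sumXPow (c : R⟦X⟧) : (1 - X * c) * sumXPow (fun k => c ^ k) = 1 := by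
  have h := sumXPow_eq fun k => c ^ k
  simp only [pow_succ', sumXPow_const_mul] at h
  linear_combination h

lemma sumXPow_convolution (F G : ℕ → R⟦X⟧) :
    sumXPow (fun n => ∑ k ∈ range (n + 1), F k * G (n - k)) = sumXPow F * sumXPow G := by
  have h := eq_sumXPow (F := fun n => ∑ k ∈ range (n + 1), F k * G (n - k))
    (S := fun n => ∑ k ∈ range n, F k * (sumXPow fun l => G (n - k + l)) +
      sumXPow (fun k => F (n + k)) * sumXPow G) fun n => by
    have hG : ∀ k ∈ range n, F k * (sumXPow fun l => G (n - k + l)) =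
        F k * G (n - k) + X * (F k * sumXPow fun l => G (n + 1 - k + l)) := fun k hk => by
      rw [sumXPow_add_eq, Nat.sub_add_comm (Finset.mem_range.1 hk).le]
      ring
    rw [Finset.sum_congr rfl hG, Finset.sum_add_distrib, ← Finset.mul_sum, Finset.sum_range_succ,
      Finset.sum_range_succ, Nat.sub_self, Nat.add_sub_cancel_left]
    have hG0 := sumXPow_add_eq G 0
    simp only [zero_add] at hG0
    linear_combination sumXPow G * sumXPow_add_eq F n + F n * hG0
  simpa using h.symm

end SumXPow

/-! ### Generating series -/

section Series

/-- The coefficients of the power series `Y` with `Y = 1 + 3 X Y + X² Y²`, the numbers of Motzkin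
paths with three colours for the level steps. -/
noncomputable def motz : ℕ → ℝ
  | 0 => 1
  | n + 1 => 3 * motz n + ∑ k : Fin n, motz k * motz (n - 1 - k)

lemma motz_succ (n : ℕ) :
    motz (n + 1) = 3 * motz n + ∑ k ∈ range n, motz k * motz (n - 1 - k) := by
  rw [motz, Fin.sum_univ_eq_sum_range fun k => motz k * motz (n - 1 - k)]

lemma mk_motz_eq : mk motz = 1 + X * (3 * mk motz + X * mk motz ^ 2) := by
  ext n
  cases n with
  | zero => simp [motz]
  | succ n =>
    rw [coeff_mk, motz_succ, map_add, coeff_succ_X_mul, map_add, ← map_ofNat C, coeff_C_mul,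
      coeff_mk, coeff_one, if_neg n.succ_ne_zero, zero_add]
    congr 1
    cases n with
    | zero => simp
    | succ n =>
      rw [coeff_succ_X_mul, pow_two, coeff_mul, Finset.Nat.sum_antidiagonal_eq_sum_range_succ_mk]
      simp

/-- The power series `y` with `y = X (1 + 3 y + y²)`, in terms of which all the generating series
are rational. -/
noncomputable def ySeries : ℝ⟦X⟧ := X * mk motz

lemma ySeries_eq : ySeries = X * (1 + 3 * ySeries + ySeries ^ 2) := by
  unfold ySeries
  linear_combination X * mk_motz_eq

/-- The geometric series `1 / (1 - X)`. -/
noncomputable def geomSeries : ℝ⟦X⟧ := (1 - X)⁻¹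

lemma one_sub_X_mul_geomSeries : (1 - X) * geomSeries = 1 :=
  PowerSeries.mul_inv_cancel _ (by simp)

lemma X_mul_one_add_ySeries_sq_mul_geomSeries : X * (1 + ySeries) ^ 2 * geomSeries = ySeries := by
  linear_combination ySeries * one_sub_X_mul_geomSeries - geomSeries * ySeries_eq

/-- The generating series of the descendants of a permutation with `k + 2` sites, the last of which
is the top, when appending below the top never affects the lower sites. -/
noncomputable def lowSeries (k : ℕ) : ℝ⟦X⟧ := (1 + ySeries) ^ (k + 1) * geomSeries

lemma X_mul_lowSeries_succ (k : ℕ) :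
    X * lowSeries (k + 1) = (1 + ySeries) ^ k * ySeries := by
  rw [lowSeries]
  linear_combination (1 + ySeries) ^ k * X_mul_one_add_ySeries_sq_mul_geomSeries

lemma X_mul_sum_lowSeries (k : ℕ) :
    X * ∑ v ∈ range k, lowSeries (v + 1) = (1 + ySeries) ^ k - 1 := by
  simp only [Finset.mul_sum, X_mul_lowSeries_succ, ← Finset.sum_mul]
  linear_combination geom_sum_mul (1 + ySeries) k

lemma lowSeries_eq (k : ℕ) :
    lowSeries k = 1 + X * (∑ v ∈ range (k + 1), lowSeries (v + 1) + lowSeries k) := by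
  rw [mul_add, X_mul_sum_lowSeries, lowSeries]
  linear_combination (1 + ySeries) ^ (k + 1) * one_sub_X_mul_geomSeries

/-- The generating series of the permutations avoiding 4213, 2413 and 2143. -/
noncomputable def hSeries : ℝ⟦X⟧ := (1 - X * (1 + ySeries))⁻¹

lemma hSeries_mul : (1 - X * (1 + ySeries)) * hSeries = 1 := PowerSeries.mul_inv_cancel _ (by simp)

lemma pow_mul_hSeries_eq (n : ℕ) : (1 + ySeries) ^ n * hSeries =
    1 + X * (∑ v ∈ range n, lowSeries (v + 1) + (1 + ySeries) ^ (n + 1) * hSeries) := by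
  rw [mul_add, X_mul_sum_lowSeries]
  linear_combination (1 + ySeries) ^ n * hSeries_mul

lemma two_sub_X_mul_hSeries : (2 - X) * hSeries = 2 + ySeries := by
  refine mul_left_cancel₀ (left_ne_zero_of_mul_eq_one hSeries_mul) ?_
  linear_combination (2 - X) * hSeries_mul - ySeries_eq

/-- The factor contributed by `s` special sites of a shape with `e = j`. -/
noncomputable def specialSeries (s : ℕ) : ℝ⟦X⟧ := 1 + (geomSeries ^ s - 1) * hSeries

lemma X_mul_sum_geomSeries_pow (s : ℕ) :
    X * ∑ p ∈ range s, geomSeries ^ (s - p) = geomSeries ^ s - 1 := by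
  have h : ∀ p ∈ range s, geomSeries ^ (s - p) = geomSeries * geomSeries ^ (s - 1 - p) :=
    fun p hp => by rw [← pow_succ']; congr 1; grind
  rw [Finset.sum_congr rfl h, ← Finset.mul_sum, Finset.sum_range_reflect fun p => geomSeries ^ p]
  linear_combination geom_sum_mul geomSeries s
    - (∑ p ∈ range s, geomSeries ^ p) * one_sub_X_mul_geomSeries

lemma lowSeries_mul_specialSeries (k s : ℕ) : lowSeries k * specialSeries s =
    (1 + ySeries) ^ k + X * lowSeries (k + 1) * specialSeries s +
      lowSeries k * (geomSeries ^ s - 1) + X * lowSeries k := by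
  rw [X_mul_lowSeries_succ, specialSeries, lowSeries, pow_succ]
  have h : ((1 + ySeries) * geomSeries - ySeries) * hSeries = (1 + ySeries) * geomSeries := by
    linear_combination (1 + ySeries) * geomSeries * hSeries_mul +
      hSeries * X_mul_one_add_ySeries_sq_mul_geomSeries
  linear_combination (1 + ySeries) ^ (k + 1) * one_sub_X_mul_geomSeries +
    (1 + ySeries) ^ k * (geomSeries ^ s - 1) * h

lemma lowSeries_mul_geomSeries_pow (k s : ℕ) : lowSeries k * geomSeries ^ s =
    (1 + ySeries) ^ k + X * lowSeries (k + 1) + lowSeries k * (geomSeries ^ s - 1) +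
      X * lowSeries k := by
  rw [X_mul_lowSeries_succ, lowSeries]
  linear_combination (1 + ySeries) ^ (k + 1) * one_sub_X_mul_geomSeries

/-- The factor contributed by a prefix of `i` sites. -/
noncomputable def prefixSeries (i : ℕ) : ℝ⟦X⟧ :=
  1 + ySeries * ∑ v : Fin i, prefixSeries v * specialSeries (i - v)

lemma prefixSeries_eq (i : ℕ) : prefixSeries i =
    1 + ySeries * ∑ v ∈ range i, prefixSeries v * specialSeries (i - v) := by
  rw [prefixSeries, Fin.sum_univ_eq_sum_range fun v => prefixSeries v * specialSeries (i - v)]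

lemma specialSeries_zero : specialSeries 0 = 1 := by simp [specialSeries]

/-- The generating series of the descendants of a permutation of shape `i j e b s`. -/
noncomputable def shapeSeries (i j e s : ℕ) : ℝ⟦X⟧ :=
  prefixSeries i * lowSeries (j - i) * if e = j then specialSeries s else geomSeries ^ s

lemma shapeSeries_self (i j s : ℕ) :
    shapeSeries i j j s = prefixSeries i * lowSeries (j - i) * specialSeries s := by
  rw [shapeSeries, if_pos rfl]

lemma shapeSeries_of_ne {e j : ℕ} (h : e ≠ j) (i s : ℕ) :
    shapeSeries i j e s = prefixSeries i * lowSeries (j - i) * geomSeries ^ s := by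
  rw [shapeSeries, if_neg h]

end Series

section ShapeSeries

lemma X_mul_sum_prefixSeries (i : ℕ) :
    X * ∑ v ∈ range i, shapeSeries v (v + 1) (v + 1) (i - v) = prefixSeries i - 1 := by
  have h1 : X * lowSeries 1 = ySeries := by simpa using X_mul_lowSeries_succ 0
  simp only [shapeSeries_self, Nat.add_sub_cancel_left, mul_right_comm _ (lowSeries 1),
    ← Finset.sum_mul]
  linear_combination (∑ v ∈ range i, prefixSeries v * specialSeries (i - v)) * h1 -
    prefixSeries_eq i

lemma sum_shapeSeries_low {i j : ℕ} (hij : i ≤ j) (s : ℕ) :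
    ∑ v ∈ range (j + 1), (if v < i then shapeSeries v (v + 1) (v + 1) (i - v)
      else shapeSeries i (v + 1) (v + 1) (if v = j then s else 0)) =
    ∑ v ∈ range i, shapeSeries v (v + 1) (v + 1) (i - v) +
      prefixSeries i * (∑ l ∈ range (j - i), lowSeries (l + 1) +
        lowSeries (j - i + 1) * specialSeries s) := by
  obtain ⟨k, rfl⟩ := Nat.exists_eq_add_of_le hij
  rw [Finset.sum_range_succ, Finset.sum_range_add, Nat.add_sub_cancel_left, if_neg (by omega),
    if_pos rfl, shapeSeries_self, Finset.sum_congr rfl fun v hv => if_pos (Finset.mem_range.1 hv),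
    mul_add, ← mul_assoc, ← add_assoc, add_assoc i k 1, Nat.add_sub_cancel_left, Finset.mul_sum]
  congr 2
  refine Finset.sum_congr rfl fun l hl => ?_
  rw [if_neg (by omega), if_neg (Finset.mem_range.1 hl |>.ne <| Nat.add_left_cancel ·),
    shapeSeries_self, specialSeries_zero, mul_one, add_assoc, Nat.add_sub_cancel_left]

lemma shapeSeries_eq {i j e b : ℕ} (hij : i ≤ j) (hjb : j < b) (s : ℕ) : shapeSeries i j e s =
    1 + X * (∑ v ∈ range (j + 1), (if v < i then shapeSeries v (v + 1) (v + 1) (i - v)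
        else shapeSeries i (v + 1) (v + 1) (if v = j ∧ e = j then s else 0)) +
      ∑ p ∈ range s, shapeSeries i j (b + p + 1) (s - p) + shapeSeries i j j 0) := by
  have hspecial : ∑ p ∈ range s, shapeSeries i j (b + p + 1) (s - p) =
      prefixSeries i * lowSeries (j - i) * ∑ p ∈ range s, geomSeries ^ (s - p) := by
    rw [Finset.mul_sum]
    exact Finset.sum_congr rfl fun p _ => shapeSeries_of_ne (by omega) i _
  simp only [ite_and]
  rw [sum_shapeSeries_low hij, hspecial, shapeSeries_self i j 0, specialSeries_zero]
  have hprefix := X_mul_sum_prefixSeries i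
  have hlow := X_mul_sum_lowSeries (j - i)
  have hgeom := X_mul_sum_geomSeries_pow s
  rcases eq_or_ne e j with rfl | hej
  · rw [shapeSeries_self, if_pos rfl]
    linear_combination prefixSeries i * lowSeries_mul_specialSeries (e - i) s - hprefix -
      prefixSeries i * hlow - prefixSeries i * lowSeries (e - i) * hgeom
  · rw [shapeSeries_of_ne hej, if_neg hej, specialSeries_zero]
    linear_combination prefixSeries i * lowSeries_mul_geomSeries_pow (j - i) s - hprefix -
      prefixSeries i * hlow - prefixSeries i * lowSeries (j - i) * hgeom

end ShapeSeries

section IdentitySeries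

/-- The generating series of the descendants of the identity permutation of length `n` avoiding
4213 and 2143. The summand of index `k` collects those that descend from the identity of length
`n + k`, but not from the longer ones. -/
noncomputable def identitySeries (n : ℕ) : ℝ⟦X⟧ :=
  sumXPow fun k => 1 + X * ∑ v ∈ range (n + k), shapeSeries v (v + 1) (v + 1) (n + k - 1 - v)

lemma identitySeries_eq (n : ℕ) : identitySeries n = 1 + X *
    (∑ v ∈ range n, shapeSeries v (v + 1) (v + 1) (n - 1 - v) + identitySeries (n + 1)) := by
  rw [identitySeries,
    sumXPow_add_eq fun k => 1 + X * ∑ v ∈ range k, shapeSeries v (v + 1) (v + 1) (k - 1 - v),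
    ← identitySeries]
  ring

/-- The generating series of the permutations avoiding 4213 and 2143. -/
noncomputable def dSeries : ℝ⟦X⟧ := identitySeries 0

lemma sumXPow_one : sumXPow (fun _ => (1 : ℝ⟦X⟧)) = geomSeries := by
  have h := one_sub_X_mul_pow_mul_sumXPow (1 : ℝ⟦X⟧)
  simp only [one_pow, mul_one] at h
  exact mul_left_cancel₀ (left_ne_zero_of_mul_eq_one h) (h.trans one_sub_X_mul_geomSeries.symm)

lemma one_add_ySeries_mul_sumXPow_prefixSeries : (1 + ySeries) * sumXPow prefixSeries =
    geomSeries + ySeries * (sumXPow prefixSeries * sumXPow specialSeries) := by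
  have h : sumXPow (fun i => (1 + ySeries) * prefixSeries i) = sumXPow fun i =>
      1 + ySeries * ∑ v ∈ range (i + 1), prefixSeries v * specialSeries (i - v) := by
    refine congrArg sumXPow (funext fun i => ?_)
    rw [Finset.sum_range_succ, Nat.sub_self, specialSeries_zero]
    linear_combination prefixSeries_eq i
  rwa [sumXPow_const_mul, sumXPow_add, sumXPow_const_mul, sumXPow_one, sumXPow_convolution] at h

lemma dSeries_eq : dSeries =
    geomSeries + X * ySeries * (sumXPow prefixSeries * sumXPow specialSeries) := by
  have h : dSeries = sumXPow fun k => 1 +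
      ySeries * ∑ v ∈ range k, prefixSeries v * specialSeries (k - 1 - v) := by
    rw [dSeries, identitySeries]
    refine congrArg sumXPow (funext fun k => ?_)
    have h1 : X * lowSeries 1 = ySeries := by simpa using X_mul_lowSeries_succ 0
    simp only [zero_add, shapeSeries_self, Nat.add_sub_cancel_left,
      mul_right_comm _ (lowSeries 1), ← Finset.sum_mul]
    linear_combination (∑ v ∈ range k, prefixSeries v * specialSeries (k - 1 - v)) * h1
  rw [h, sumXPow_add, sumXPow_one, sumXPow_const_mul, sumXPow_eq]
  simp only [Finset.range_zero, Finset.sum_empty, zero_add, Nat.add_sub_cancel, sumXPow_convolution]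
  ring

lemma one_sub_X_mul_one_sub_two_X_mul_sumXPow_specialSeries :
    (1 - X) * (1 - 2 * X) * sumXPow specialSeries = 1 - 2 * X + X ^ 2 * hSeries := by
  have hs : specialSeries = fun s => (1 - hSeries) * 1 + hSeries * geomSeries ^ s := by
    ext1 s
    rw [specialSeries]
    ring
  have hgeom : (1 - 2 * X) * sumXPow (fun s => geomSeries ^ s) = 1 - X := by
    linear_combination (1 - X) * one_sub_X_mul_pow_mul_sumXPow geomSeries +
      X * sumXPow (fun s => geomSeries ^ s) * one_sub_X_mul_geomSeries
  rw [hs, sumXPow_add, sumXPow_const_mul, sumXPow_const_mul, sumXPow_one]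
  linear_combination (1 - 2 * X) * (1 - hSeries) * one_sub_X_mul_geomSeries +
    (1 - X) * hSeries * hgeom

lemma dSeries_eq_one_add : dSeries = 1 + X * (1 + ySeries) * sumXPow prefixSeries := by
  linear_combination dSeries_eq + one_sub_X_mul_geomSeries -
    X * one_add_ySeries_mul_sumXPow_prefixSeries

lemma sumXPow_prefixSeries_mul :
    ((2 - 3 * X - X * ySeries) * (1 - 2 * X + 2 * X ^ 2 - 2 * X * (1 - 2 * X) * ySeries)) *
      sumXPow prefixSeries = (1 - 2 * X) * (2 - X) := by
  set P := sumXPow prefixSeries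
  linear_combination
    (1 - X) * (1 - 2 * X) * (2 - X) * one_add_ySeries_mul_sumXPow_prefixSeries +
    ySeries * P * (2 - X) * one_sub_X_mul_one_sub_two_X_mul_sumXPow_specialSeries +
    ySeries * P * X ^ 2 * two_sub_X_mul_hSeries +
    (1 - 2 * X) * (2 - X) * one_sub_X_mul_geomSeries -
    (3 * X - 4 * X ^ 2) * P * ySeries_eq

lemma dSeries_mul :
    (1 - 2 * X + 2 * X ^ 2 - 2 * X * (1 - 2 * X) * ySeries) * dSeries = 1 - X := by
  have hne : (2 - 3 * X - X * ySeries : ℝ⟦X⟧) ≠ 0 := fun h => by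
    simpa [map_ofNat] using congrArg constantCoeff h
  refine mul_left_cancel₀ hne ?_
  rw [dSeries_eq_one_add]
  linear_combination X * (1 + ySeries) * sumXPow_prefixSeries_mul +
    (-2 * X + 4 * X ^ 2) * ySeries_eq

end IdentitySeries

/-! ### Generating trees -/

section Labels

/-- Every permutation satisfying `P` may carry several labels `F` in the sense of `L`; each of them
determines labels of the children of the permutation, in accordance with the recursion expected of a
generating series of the descendants. -/
def IsLabelling (P : ∀ n, Perm (Fin n) → Prop) (L : ∀ n, Perm (Fin n) → ℝ⟦X⟧ → Prop) : Prop :=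
  ∀ n σ F, P n σ → L n σ F → ∃ G : ℕ → ℝ⟦X⟧, F = 1 + X * ∑ v ∈ range (n + 1), G v ∧
    ∀ v : Fin (n + 1), (P (n + 1) (appendLast σ v) → L (n + 1) (appendLast σ v) (G v)) ∧
      (¬ P (n + 1) (appendLast σ v) → G v = 0)

lemma IsLabelling.cast_descendants {P : ∀ n, Perm (Fin n) → Prop}
    {L : ∀ n, Perm (Fin n) → ℝ⟦X⟧ → Prop} (hL : IsLabelling P L)
    (hP : ∀ n (σ : Perm (Fin n)) v, P (n + 1) (appendLast σ v) → P n σ) (r : ℕ) {n : ℕ}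
    {σ : Perm (Fin n)} {F : ℝ⟦X⟧} (hσ : P n σ) (hF : L n σ F) :
    (descendants P r σ : ℝ) = coeff r F := by
  induction r generalizing n F with
  | zero =>
    obtain ⟨G, rfl, -⟩ := hL n σ F hσ hF
    simp [descendants, hσ]
  | succ r ih =>
    obtain ⟨G, rfl, hG⟩ := hL n σ F hσ hF
    rw [descendants, map_add, coeff_succ_X_mul, coeff_one, if_neg r.succ_ne_zero, zero_add,
      map_sum, Nat.cast_sum, ← Fin.sum_univ_eq_sum_range fun v => coeff r (G v)]
    refine Finset.sum_congr rfl fun v _ => ?_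
    by_cases hv : P (n + 1) (appendLast σ v)
    · exact ih hv ((hG v).1 hv)
    · rw [descendants_eq_zero hP r hv, (hG v).2 hv, Nat.cast_zero, map_zero]

lemma sum_range_sites {M : Type*} [AddCommMonoid M] {j b s n : ℕ} (hjb : j < b) (hbs : b + s ≤ n)
    (f g : ℕ → M) (c : M) :
    ∑ v ∈ range (n + 1), (if v ≤ j then f v else if b ≤ v ∧ v < b + s then g v
      else if v = n then c else 0) = ∑ v ∈ range (j + 1), f v + ∑ p ∈ range s, g (b + p) + c := by
  rw [Finset.sum_range_succ, if_neg (by omega), if_neg (by omega), if_pos rfl]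
  congr 1
  have hsplit : ∀ v ∈ range n, (if v ≤ j then f v else if b ≤ v ∧ v < b + s then g v
      else if v = n then c else 0) =
      (if v ∈ range (j + 1) then f v else 0) + if v ∈ Finset.Ico b (b + s) then g v else 0 := by
    intro v hv
    simp only [Finset.mem_range, Finset.mem_Ico] at hv ⊢
    split_ifs <;> first | omega | simp
  rw [Finset.sum_congr rfl hsplit, Finset.sum_add_distrib, Finset.sum_ite_mem, Finset.sum_ite_mem,
    Finset.inter_eq_right.2 (Finset.range_subset_range.2 (by omega)),
    Finset.inter_eq_right.2 fun v hv => by grind, Finset.sum_Ico_eq_sum_range,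
    Nat.add_sub_cancel_left]

/-- The labels of the permutations avoiding 4213, 2413 and 2143. -/
inductive HLabel : ∀ n, Perm (Fin n) → ℝ⟦X⟧ → Prop
  | identity (n : ℕ) : HLabel n 1 ((1 + ySeries) ^ n * hSeries)
  | low {n : ℕ} {σ : Perm (Fin n)} (j : ℕ) (hj : j < n)
    (hσ : ∀ m ≤ n, LowIncreasing σ m ↔ m ≤ j) : HLabel n σ (lowSeries j)

lemma isLabelling_hLabel : IsLabelling (fun _ => AvoidsH) HLabel := by
  rintro n σ F hA (- | ⟨j, hj, hσ⟩)
  · refine ⟨fun v => if v < n then lowSeries (v + 1) else (1 + ySeries) ^ (n + 1) * hSeries,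
      ?_, fun v => ⟨fun _ => ?_, fun hv => ?_⟩⟩
    · rw [Finset.sum_range_succ, if_neg (lt_irrefl n), pow_mul_hSeries_eq,
        Finset.sum_congr rfl fun v hv => if_pos (Finset.mem_range.1 hv)]
    · dsimp only
      split_ifs with hv
      · refine .low _ (by omega) fun m hm => ?_
        rw [lowIncreasing_appendLast_iff hasShape_one.lowIncreasing_iff v hm, if_pos hv.le]
      · obtain rfl : v = Fin.last n := Fin.ext (by grind)
        exact appendLast_one_last ▸ .identity (n + 1)
    · exact absurd ((avoidsH_appendLast 1 v).2 ⟨hA, .inl (lowIncreasing_one v)⟩) hv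
  · refine ⟨fun v => if v ≤ j then lowSeries (v + 1)
      else if j + 1 ≤ v ∧ v < j + 1 + 0 then 0 else if v = n then lowSeries j else 0, ?_,
      fun v => ?_⟩
    · rw [sum_range_sites j.lt_succ_self hj (fun v => lowSeries (v + 1)), Finset.sum_range_zero,
        add_zero, ← lowSeries_eq]
    · dsimp only
      have hlow {m : ℕ} (hm : m ≤ n + 1) := lowIncreasing_appendLast_iff hσ v hm
      rw [avoidsH_appendLast, hσ v v.is_le, if_neg (c := _ ∧ _) (by omega)]
      split_ifs with hvj hv
      · simp only [if_pos hvj] at hlow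
        exact ⟨fun _ => .low _ (by omega) fun m => hlow, fun h => absurd ⟨hA, .inl hvj⟩ h⟩
      · simp only [if_neg hvj] at hlow
        exact ⟨fun _ => .low j (by omega) fun m => hlow, fun h => absurd ⟨hA, .inr hv⟩ h⟩
      · exact ⟨fun h => absurd h.2 (by tauto), fun _ => rfl⟩

theorem hCount_eq_coeff (n : ℕ) : (hCount n : ℝ) = coeff n hSeries := by
  rw [hCount, card_eq_descendants fun _ => AvoidsH, isLabelling_hLabel.cast_descendants
    (fun _ σ v h => ((avoidsH_appendLast σ v).1 h).1) n ?_ (.identity 0), pow_zero, one_mul]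
  exact ⟨fun ⟨f, _⟩ => (f 0).elim0, fun ⟨f, _⟩ => (f 0).elim0, fun ⟨f, _⟩ => (f 0).elim0⟩

/-- The labels of the permutations avoiding 4213 and 2143. -/
inductive DLabel : ∀ n, Perm (Fin n) → ℝ⟦X⟧ → Prop
  | identity (n : ℕ) : DLabel n 1 (identitySeries n)
  | shape {n i j e b s : ℕ} {σ : Perm (Fin n)} (hσ : HasShape σ i j e b s) (hbs : b + s ≤ n) :
    DLabel n σ (shapeSeries i j e s)

lemma DLabel.exists_children_identity {n : ℕ} (hA : AvoidsD (1 : Perm (Fin n))) :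
    ∃ G : ℕ → ℝ⟦X⟧, identitySeries n = 1 + X * ∑ v ∈ range (n + 1), G v ∧
      ∀ v : Fin (n + 1), AvoidsD (appendLast 1 v) ∧ DLabel (n + 1) (appendLast 1 v) (G v) := by
  refine ⟨fun v => if v < n then shapeSeries v (v + 1) (v + 1) (n - 1 - v)
    else identitySeries (n + 1), ?_, fun v => ⟨?_, ?_⟩⟩
  · rw [Finset.sum_range_succ, if_neg (lt_irrefl n), identitySeries_eq,
      Finset.sum_congr rfl fun v hv => if_pos (Finset.mem_range.1 hv)]
  · exact (avoidsD_appendLast 1 v).2 ⟨hA, straddles_of_lowIncreasing 1 (lowIncreasing_one v)⟩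
  · dsimp only
    split_ifs with hv
    · exact .shape (hasShape_one.append_prefix hv hv (by omega)) (by omega)
    · obtain rfl : v = Fin.last n := Fin.ext (by grind)
      exact appendLast_one_last ▸ .identity (n + 1)

lemma DLabel.exists_children_shape {n i j e b s : ℕ} {σ : Perm (Fin n)} (hA : AvoidsD σ)
    (hσ : HasShape σ i j e b s) (hbs : b + s ≤ n) :
    ∃ G : ℕ → ℝ⟦X⟧, shapeSeries i j e s = 1 + X * ∑ v ∈ range (n + 1), G v ∧
      ∀ v : Fin (n + 1), (AvoidsD (appendLast σ v) → DLabel (n + 1) (appendLast σ v) (G v)) ∧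
        (¬ AvoidsD (appendLast σ v) → G v = 0) := by
  have hij := hσ.i_le_j
  have hje := hσ.j_le_e
  have hjb := hσ.j_lt_b
  refine ⟨fun v => if v ≤ j then if v < i then shapeSeries v (v + 1) (v + 1) (i - v)
      else shapeSeries i (v + 1) (v + 1) (if v = j ∧ e = j then s else 0)
    else if b ≤ v ∧ v < b + s then shapeSeries i j (v + 1) (b + s - v)
    else if v = n then shapeSeries i j j 0 else 0, ?_, fun v => ?_⟩
  · rw [sum_range_sites hjb hbs (fun v => if v < i then shapeSeries v (v + 1) (v + 1) (i - v)
      else shapeSeries i (v + 1) (v + 1) (if v = j ∧ e = j then s else 0)),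
      shapeSeries_eq hij hjb]
    simp only [Nat.add_sub_add_left]
  · simp only [avoidsD_appendLast, hA, hσ.straddles_iff v v.is_le, true_and]
    split_ifs with hvj hvi hvej hv hv
    · exact ⟨fun _ => .shape (hσ.append_prefix hvi (by omega) (by omega)) (by omega),
        fun h => h.elim (.inl hvj)⟩
    · obtain ⟨hv, rfl⟩ := hvej
      exact ⟨fun _ => hv ▸ .shape (hσ.append_exact hv (by omega)) (by omega),
        fun h => h.elim (.inl hvj)⟩
    · exact ⟨fun _ => .shape (hσ.append_low (by omega) hvj (by omega) (by omega)) (by omega),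
        fun h => h.elim (.inl hvj)⟩
    · exact ⟨fun _ => .shape (hσ.append_special hv.1 hv.2 (by omega)) (by omega),
        fun h => h.elim (.inr (.inl hv))⟩
    · exact ⟨fun _ => .shape (hσ.append_top hv (by omega)) (by omega),
        fun h => h.elim (.inr (.inr hv))⟩
    · exact ⟨fun h => absurd h (by tauto), fun _ => rfl⟩

lemma isLabelling_dLabel : IsLabelling (fun _ => AvoidsD) DLabel := by
  rintro n σ F hA (- | ⟨hσ, hbs⟩)
  · obtain ⟨G, hF, hG⟩ := DLabel.exists_children_identity hA
    exact ⟨G, hF, fun v => ⟨fun _ => (hG v).2, fun hv => absurd (hG v).1 hv⟩⟩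
  · exact DLabel.exists_children_shape hA hσ hbs

theorem dCount_eq_coeff (n : ℕ) : (dCount n : ℝ) = coeff n dSeries := by
  rw [dCount, card_eq_descendants fun _ => AvoidsD, isLabelling_dLabel.cast_descendants
    (fun _ σ v h => ((avoidsD_appendLast σ v).1 h).1) n ?_ (.identity 0), dSeries]
  exact ⟨fun ⟨f, _⟩ => (f 0).elim0, fun ⟨f, _⟩ => (f 0).elim0⟩

end Labels

/-! ### Series with coefficients comparable to a weight -/

section Contraction

variable {x r ε : ℕ → ℝ} {θ : ℝ}

lemma exists_forall_le_of_le_mul_add (hθ : θ < 1) (hr : Tendsto r atTop (𝓝 θ))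
    (hε : Tendsto ε atTop (𝓝 0)) (hx : ∀ n, 0 ≤ x n)
    (h : ∀ n B, (∀ m, n / 2 ≤ m → m ≤ n → x m ≤ B) → x n ≤ r n * B + ε n) :
    ∃ B, ∀ n, x n ≤ B := by
  obtain ⟨ρ, hθρ, hρ⟩ := exists_between hθ
  obtain ⟨N, hN⟩ := eventually_atTop.1
    ((hr.eventually_le_const hθρ).and (hε.eventually_le_const one_pos))
  have hρ0 : 0 < (1 - ρ)⁻¹ := inv_pos.2 (by linarith)
  have hsum : 0 ≤ ∑ m ∈ range N, x m := Finset.sum_nonneg fun m _ => hx m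
  refine ⟨∑ m ∈ range N, x m + (1 - ρ)⁻¹, fun n => ?_⟩
  set B := ∑ m ∈ range N, x m + (1 - ρ)⁻¹
  induction n using Nat.strong_induction_on with
  | _ n ih =>
    rcases lt_or_ge n N with hn | hn
    · have := Finset.single_le_sum (fun m _ => hx m) (Finset.mem_range.2 hn)
      linarith
    · by_contra! hlt
      have hle := h n (x n) fun m _ hm => hm.lt_or_eq.elim
        (fun hm => (ih m hm).trans hlt.le) fun hm => hm ▸ le_rfl
      have hmul := mul_le_mul_of_nonneg_right (hN n hn).1 (hx n)
      have : x n ≤ (1 - ρ)⁻¹ := by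
        rw [← one_div, le_div_iff₀ (by linarith)]
        linarith [(hN n hn).2]
      linarith

lemma tendsto_zero_of_le_mul_add (hθ : θ < 1) (hr : Tendsto r atTop (𝓝 θ))
    (hε : Tendsto ε atTop (𝓝 0)) (hx : ∀ n, 0 ≤ x n)
    (h : ∀ n B, (∀ m, n / 2 ≤ m → m ≤ n → x m ≤ B) → x n ≤ r n * B + ε n) :
    Tendsto x atTop (𝓝 0) := by
  obtain ⟨B, hB⟩ := exists_forall_le_of_le_mul_add hθ hr hε hx h
  obtain ⟨ρ, hρ, hρ1⟩ := exists_between (max_lt hθ one_pos)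
  obtain ⟨hθρ, hρ0⟩ := max_lt_iff.1 hρ
  have hB1 : 0 < B + 1 := by linarith [hx 0, hB 0]
  have hpow (j : ℕ) : ∀ᶠ n in atTop, x n ≤ ρ ^ j * (B + 1) := by
    induction j with
    | zero => exact Eventually.of_forall fun n => by linarith [hB n]
    | succ j ih =>
      have : 0 < ρ ^ j * (B + 1) := by positivity
      have hlim := (hr.mul_const (ρ ^ j * (B + 1))).add hε
      obtain ⟨N, hN⟩ := eventually_atTop.1 ih
      filter_upwards [eventually_ge_atTop (2 * N), hlim.eventually_le_const
        (show θ * (ρ ^ j * (B + 1)) + 0 < ρ ^ (j + 1) * (B + 1) by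
          rw [add_zero, pow_succ', mul_assoc]
          gcongr)] with n hn hle
      exact (h n _ fun m hm _ => hN m (by omega)).trans hle
  have hlim : Tendsto (fun j => ρ ^ j * (B + 1)) atTop (𝓝 0) := by
    simpa using (tendsto_pow_atTop_nhds_zero_of_lt_one hρ0.le hρ1).mul_const (B + 1)
  refine tendsto_order.2 ⟨fun b hb => Eventually.of_forall fun n => hb.trans_le (hx n),
    fun b hb => ?_⟩
  obtain ⟨j, hj⟩ := (hlim.eventually_lt_const hb).exists
  exact (hpow j).mono fun n hn => hn.trans_lt hj

end Contraction

section Tails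

/-- A positive sequence varying so slowly that the series whose coefficients are summable and
asymptotically proportional to it form a ring, see `IsRegularWeight.hasTail_mul`. -/
structure IsRegularWeight (τ : ℕ → ℝ) : Prop where
  pos : ∀ n, 0 < τ n
  tendsto_div_succ : Tendsto (fun n => τ n / τ (n + 1)) atTop (𝓝 1)
  exists_le_mul : ∃ C, ∀ k n, k ≤ n / 2 → τ (n - k) ≤ C * τ n

/-- The coefficients of `A` sum to `s` and are asymptotic to `α` times the weight `τ`. -/
structure HasTail (τ : ℕ → ℝ) (A : ℝ⟦X⟧) (s α : ℝ) : Prop where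
  hasSum : HasSum (fun n => coeff n A) s
  tendsto : Tendsto (fun n => coeff n A / τ n) atTop (𝓝 α)

variable {τ : ℕ → ℝ} {A B : ℝ⟦X⟧} {s t α β : ℝ}

lemma HasTail.add (hA : HasTail τ A s α) (hB : HasTail τ B t β) :
    HasTail τ (A + B) (s + t) (α + β) where
  hasSum := by simpa using hA.hasSum.add hB.hasSum
  tendsto := by simpa [add_div] using hA.tendsto.add hB.tendsto

lemma hasTail_monomial (m : ℕ) (r : ℝ) : HasTail τ (monomial m r) r 0 where
  hasSum := by
    simpa [coeff_monomial] using hasSum_single (f := fun n => coeff n (monomial m r)) m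
      fun n hn => by rw [coeff_monomial, if_neg hn]
  tendsto := tendsto_const_nhds.congr' <| by
    filter_upwards [eventually_gt_atTop m] with n hn
    rw [coeff_monomial, if_neg hn.ne', zero_div]

lemma hasTail_C (r : ℝ) : HasTail τ (C r) r 0 := by
  rw [← monomial_zero_eq_C_apply]
  exact hasTail_monomial 0 r

lemma hasTail_X : HasTail τ X 1 0 := by
  rw [X_eq]
  exact hasTail_monomial 1 (1 : ℝ)

lemma hasSum_coeff_mul (hA : HasSum (fun n => coeff n A) s) (hB : HasSum (fun n => coeff n B) t) :
    HasSum (fun n => coeff n (A * B)) (s * t) := by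
  have hsum := summable_norm_sum_mul_antidiagonal_of_summable_norm hA.summable.norm hB.summable.norm
  have heq := tsum_mul_tsum_eq_tsum_sum_antidiagonal_of_summable_norm hA.summable.norm
    hB.summable.norm
  rw [hA.tsum_eq, hB.tsum_eq] at heq
  rw [heq]
  simpa only [coeff_mul] using hsum.of_norm.hasSum

lemma coeff_mul_eq_half_add_half (A B : ℝ⟦X⟧) (n : ℕ) : coeff n (A * B) =
    ∑ k ∈ range (n / 2 + 1), coeff k A * coeff (n - k) B +
      ∑ k ∈ range ((n + 1) / 2), coeff k B * coeff (n - k) A := by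
  rw [coeff_mul, Finset.Nat.sum_antidiagonal_eq_sum_range_succ_mk,
    ← Finset.sum_range_add_sum_Ico _ (show n / 2 + 1 ≤ n + 1 by omega)]
  congr 1
  have h := Finset.sum_Ico_reflect (fun k => coeff k A * coeff (n - k) B) 0
    (show (n + 1) / 2 ≤ n + 1 by omega)
  rw [← Finset.range_eq_Ico, show n + 1 - (n + 1) / 2 = n / 2 + 1 by omega, Nat.sub_zero] at h
  rw [← h]
  refine Finset.sum_congr rfl fun k hk => ?_
  rw [Nat.sub_sub_self (by grind), mul_comm]

lemma summable_of_one_sub_mul_eq_one {G : ℝ⟦X⟧} (hA : Summable fun n => |coeff n A|)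
    (hlt : ∑' n, |coeff n A| < 1) (hG : (1 - A) * G = 1) : Summable fun n => |coeff n G| := by
  set θ := ∑' n, |coeff n A|
  have hG' : G = 1 + A * G := by linear_combination hG
  refine summable_of_sum_range_le (c := (1 - θ)⁻¹) (fun n => abs_nonneg _) fun N => ?_
  have hcoeff (n : ℕ) : |coeff n G| ≤ |coeff n (1 : ℝ⟦X⟧)| +
      ∑ k ∈ range (n + 1), |coeff k A| * |coeff (n - k) G| := by
    conv_lhs => rw [hG', map_add, coeff_mul, Finset.Nat.sum_antidiagonal_eq_sum_range_succ_mk]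
    refine (abs_add_le _ _).trans (add_le_add_right ((Finset.abs_sum_le_sum_abs _ _).trans_eq ?_) _)
    simp only [abs_mul]
  have hone : ∑ n ∈ range N, |coeff n (1 : ℝ⟦X⟧)| ≤ 1 := by
    simp only [coeff_one, apply_ite abs, abs_one, abs_zero, Finset.sum_ite_eq']
    split_ifs <;> norm_num
  have hmul : ∑ n ∈ range N, ∑ k ∈ range (n + 1), |coeff k A| * |coeff (n - k) G| ≤
      θ * ∑ n ∈ range N, |coeff n G| := by
    rw [Finset.sum_range_diag_flip N fun i j => |coeff i A| * |coeff j G|]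
    calc ∑ i ∈ range N, ∑ j ∈ range (N - i), |coeff i A| * |coeff j G|
        ≤ ∑ i ∈ range N, |coeff i A| * ∑ j ∈ range N, |coeff j G| := by
          refine Finset.sum_le_sum fun i _ => ?_
          rw [Finset.mul_sum]
          exact Finset.sum_le_sum_of_subset_of_nonneg (by simp) fun _ _ _ => by positivity
      _ ≤ θ * ∑ j ∈ range N, |coeff j G| := by
          rw [← Finset.sum_mul]
          gcongr
          exact hA.sum_le_tsum _ fun _ _ => abs_nonneg _
  have h := Finset.sum_le_sum fun n (_ : n ∈ range N) => hcoeff n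
  rw [Finset.sum_add_distrib] at h
  rw [← one_div, le_div_iff₀ (by linarith)]
  linarith

lemma hasSum_of_one_sub_mul_eq_one {G : ℝ⟦X⟧} (hA : HasSum (fun n => coeff n A) s)
    (hlt : ∑' n, |coeff n A| < 1) (hG : (1 - A) * G = 1) :
    1 - s ≠ 0 ∧ HasSum (fun n => coeff n G) (1 - s)⁻¹ := by
  have hsum := (summable_of_one_sub_mul_eq_one hA.summable.abs hlt hG).of_abs.hasSum
  have hone : HasSum (fun n => coeff n (1 : ℝ⟦X⟧)) 1 := by
    simpa [coeff_one] using hasSum_ite_eq 0 (1 : ℝ)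
  have hs : (1 - s) * ∑' n, coeff n G = 1 := by
    have h := hone.add (hasSum_coeff_mul hA hsum)
    simp only [← map_add, show 1 + A * G = G by linear_combination -hG] at h
    linarith [h.unique hsum]
  exact ⟨left_ne_zero_of_mul_eq_one hs, eq_inv_of_mul_eq_one_right hs ▸ hsum⟩

namespace IsRegularWeight

variable (hτ : IsRegularWeight τ)
include hτ

lemma tendsto_div_add (k : ℕ) : Tendsto (fun n => τ n / τ (n + k)) atTop (𝓝 1) := by
  induction k with
  | zero => simp [div_self (hτ.pos _).ne']
  | succ k ih =>
    have h := ih.mul (hτ.tendsto_div_succ.comp (tendsto_add_atTop_nat k))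
    rw [mul_one] at h
    exact h.congr fun n => div_mul_div_cancel₀ (hτ.pos _).ne'

lemma exists_abs_le_mul {b : ℕ → ℝ} (hb : Tendsto (fun n => b n / τ n) atTop (𝓝 β)) :
    ∃ M, 0 ≤ M ∧ ∀ n, |b n| ≤ M * τ n := by
  obtain ⟨M, hM⟩ := hb.abs.bddAbove_range
  have h : ∀ n, |b n / τ n| ≤ M := fun n => hM ⟨n, rfl⟩
  refine ⟨M, (abs_nonneg _).trans (h 0), fun n => ?_⟩
  simpa [abs_div, abs_of_pos (hτ.pos n), div_le_iff₀ (hτ.pos n)] using h n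

lemma tendsto_sub_div {b : ℕ → ℝ} (hb : Tendsto (fun n => b n / τ n) atTop (𝓝 β)) (k : ℕ) :
    Tendsto (fun n => b (n - k) / τ n) atTop (𝓝 β) := by
  rw [← tendsto_add_atTop_iff_nat k]
  have h := hb.mul (hτ.tendsto_div_add k)
  rw [mul_one] at h
  refine h.congr fun n => ?_
  rw [Nat.add_sub_cancel, div_mul_div_cancel₀ (hτ.pos n).ne']

lemma tendsto_half_convolution {a b : ℕ → ℝ} (ha : Summable a)
    (hb : Tendsto (fun n => b n / τ n) atTop (𝓝 β)) {m : ℕ → ℕ}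
    (hm : ∀ n, n / 2 ≤ m n ∧ m n ≤ n / 2 + 1) :
    Tendsto (fun n => (∑ k ∈ range (m n), a k * b (n - k)) / τ n) atTop (𝓝 ((∑' k, a k) * β)) := by
  obtain ⟨M, hM0, hM⟩ := hτ.exists_abs_le_mul hb
  obtain ⟨C, hC⟩ := hτ.exists_le_mul
  have hsum (n : ℕ) : (∑ k ∈ range (m n), a k * b (n - k)) / τ n =
      ∑' k, if k ∈ range (m n) then a k * (b (n - k) / τ n) else 0 := by
    rw [tsum_eq_sum (s := range (m n)) fun k hk => if_neg hk, Finset.sum_div]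
    exact Finset.sum_congr rfl fun k hk => by rw [if_pos hk, mul_div_assoc]
  simp only [hsum, ← tsum_mul_right]
  refine tendsto_tsum_of_dominated_convergence (bound := fun k => |a k| * (M * C))
    (ha.abs.mul_right _) (fun k => ?_) (Eventually.of_forall fun n k => ?_)
  · refine ((hτ.tendsto_sub_div hb k).const_mul (a k)).congr' ?_
    filter_upwards [eventually_ge_atTop (2 * k + 2)] with n hn
    rw [if_pos (Finset.mem_range.2 (by grind))]
  · have hC0 : 0 ≤ C := nonneg_of_mul_nonneg_left ((hτ.pos 0).le.trans (hC 0 0 le_rfl)) (hτ.pos 0)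
    split_ifs with hk
    · have hb' : |b (n - k)| ≤ M * (C * τ n) := (hM _).trans <|
        mul_le_mul_of_nonneg_left (hC k n (by grind)) hM0
      rw [Real.norm_eq_abs, abs_mul, abs_div, abs_of_pos (hτ.pos n)]
      gcongr
      rwa [div_le_iff₀ (hτ.pos n), mul_assoc]
    · rw [norm_zero]
      positivity

lemma hasTail_mul (hA : HasTail τ A s α) (hB : HasTail τ B t β) :
    HasTail τ (A * B) (s * t) (s * β + t * α) where
  hasSum := hasSum_coeff_mul hA.hasSum hB.hasSum
  tendsto := by
    have hlow := hτ.tendsto_half_convolution (m := fun n => n / 2 + 1) hA.hasSum.summable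
      hB.tendsto (by omega)
    have hhigh := hτ.tendsto_half_convolution (m := fun n => (n + 1) / 2) hB.hasSum.summable
      hA.tendsto (by omega)
    rw [hA.hasSum.tsum_eq] at hlow
    rw [hB.hasSum.tsum_eq] at hhigh
    exact (hlow.add hhigh).congr fun n => by rw [coeff_mul_eq_half_add_half, add_div]

lemma deviation_eq_half_convolution_add {G : ℝ⟦X⟧} (hG : G = 1 + A * G) (L : ℝ) (n : ℕ) :
    coeff n G / τ n - L =
      (∑ k ∈ range (n / 2 + 1), coeff k A * τ (n - k) * (coeff (n - k) G / τ (n - k) - L)) / τ n +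
      (coeff n (1 : ℝ⟦X⟧) / τ n +
        (∑ k ∈ range ((n + 1) / 2), coeff k G * coeff (n - k) A) / τ n +
        L * ((∑ k ∈ range (n / 2 + 1), coeff k A * τ (n - k)) / τ n) - L) := by
  have hterm (k : ℕ) : coeff k A * τ (n - k) * (coeff (n - k) G / τ (n - k) - L) =
      coeff k A * coeff (n - k) G - L * (coeff k A * τ (n - k)) := by
    rw [mul_sub, mul_assoc, mul_div_cancel₀ _ (hτ.pos _).ne']
    ring
  conv_lhs => rw [hG, map_add, coeff_mul_eq_half_add_half]
  simp only [hterm, Finset.sum_sub_distrib, ← Finset.mul_sum]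
  ring

/- Up to a vanishing error, the deviation of `coeff n G / τ n` from its limit is a combination, of
total mass at most `∑' n, |coeff n A| < 1`, of the deviations at indices between `n / 2` and `n`. -/
lemma hasTail_of_one_sub_mul_eq_one {G : ℝ⟦X⟧} (hA : HasTail τ A s α)
    (hlt : ∑' n, |coeff n A| < 1) (hG : (1 - A) * G = 1) :
    HasTail τ G (1 - s)⁻¹ (α / (1 - s) ^ 2) := by
  have hG' : G = 1 + A * G := by linear_combination hG
  obtain ⟨hs, hsum⟩ := hasSum_of_one_sub_mul_eq_one hA.hasSum hlt hG
  refine ⟨hsum, ?_⟩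
  have hone : HasTail τ 1 1 0 := by simpa using hasTail_C (τ := τ) 1
  set L := α / (1 - s) ^ 2
  have hlow {a : ℕ → ℝ} (ha : Summable a) :=
    hτ.tendsto_half_convolution (m := fun n => n / 2 + 1) (b := τ) (β := 1) ha
      (by simp [div_self (hτ.pos _).ne']) (by omega)
  have hhigh := hτ.tendsto_half_convolution (m := fun n => (n + 1) / 2) hsum.summable hA.tendsto
    (by omega)
  have herr := (((hone.tendsto.add hhigh).add
    ((hlow hA.hasSum.summable).const_mul L)).sub_const L).abs
  have hmass := hlow hA.hasSum.summable.abs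
  rw [mul_one] at hmass
  rw [hA.hasSum.tsum_eq, hsum.tsum_eq, show 0 + (1 - s)⁻¹ * α + L * (s * 1) - L = 0 by
    simp only [L]; field_simp; ring, abs_zero] at herr
  rw [← tendsto_sub_nhds_zero_iff, tendsto_zero_iff_abs_tendsto_zero]
  refine tendsto_zero_of_le_mul_add hlt hmass herr (fun n => abs_nonneg _) fun n B hB => ?_
  simp only [Function.comp_apply]
  rw [hτ.deviation_eq_half_convolution_add hG' L n]
  refine (abs_add_le _ _).trans (add_le_add_left ?_ _)
  rw [abs_div, abs_of_pos (hτ.pos n), div_mul_eq_mul_div, Finset.sum_mul]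
  gcongr
  · exact (hτ.pos n).le
  refine (Finset.abs_sum_le_sum_abs _ _).trans (Finset.sum_le_sum fun k hk => ?_)
  rw [abs_mul, abs_mul, abs_of_pos (hτ.pos _)]
  have := hτ.pos (n - k)
  gcongr
  exact hB _ (by grind) (by omega)

end IsRegularWeight

end Tails

/-! ### Growth of the coefficients of `y` -/

section Growth

lemma motz_pos (n : ℕ) : 0 < motz n := by
  induction n using Nat.strong_induction_on with
  | _ n ih =>
    cases n with
    | zero => simp [motz]
    | succ n =>
      rw [motz_succ]
      have hn := ih n (by omega)
      have hsum : 0 ≤ ∑ k ∈ range n, motz k * motz (n - 1 - k) :=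
        Finset.sum_nonneg fun k hk =>
          (mul_pos (ih k (by grind)) (ih (n - 1 - k) (by grind))).le
      linarith

/-- The square root of the discriminant of the quadratic equation for `ySeries`. -/
noncomputable def sqrtDisc : ℝ⟦X⟧ := 1 - 3 * X - 2 * X ^ 2 * mk motz

lemma sqrtDisc_sq : sqrtDisc ^ 2 = 1 - 6 * X + 5 * X ^ 2 := by
  rw [sqrtDisc]
  linear_combination -4 * X ^ 2 * mk_motz_eq

lemma mul_derivative_sqrtDisc :
    (1 - 6 * X + 5 * X ^ 2) * d⁄dX ℝ sqrtDisc = (5 * X - 3) * sqrtDisc := by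
  have h5 : d⁄dX ℝ (5 : ℝ⟦X⟧) = 0 := (d⁄dX ℝ).map_natCast 5
  have h6 : d⁄dX ℝ (6 : ℝ⟦X⟧) = 0 := (d⁄dX ℝ).map_natCast 6
  have h : 2 * (sqrtDisc * d⁄dX ℝ sqrtDisc) = 2 * (5 * X - 3) := by
    have h := congrArg (d⁄dX ℝ) sqrtDisc_sq
    simp only [map_add, map_sub, Derivation.leibniz, Derivation.leibniz_pow, derivative_X, h5, h6,
      Derivation.map_one_eq_zero, smul_eq_mul, nsmul_eq_mul] at h
    linear_combination h
  have h2 : (2 : ℝ⟦X⟧) ≠ 0 := fun h0 => by simpa [map_ofNat] using congrArg constantCoeff h0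
  linear_combination sqrtDisc * mul_left_cancel₀ h2 h - d⁄dX ℝ sqrtDisc * sqrtDisc_sq

lemma coeff_sqrtDisc (n : ℕ) : coeff (n + 2) sqrtDisc = -2 * motz n := by
  have h : sqrtDisc = 1 - C 3 * X - C 2 * (X ^ 2 * mk motz) := by
    simp only [sqrtDisc, map_ofNat, mul_assoc]
  simp [h, coeff_X_pow_mul, coeff_one]

lemma motz_recurrence (n : ℕ) :
    (n + 4) * motz (n + 2) = (6 * n + 15) * motz (n + 1) - 5 * (n + 1) * motz n := by
  have hode : d⁄dX ℝ sqrtDisc - C 6 * (X ^ 1 * d⁄dX ℝ sqrtDisc) + C 5 * (X ^ 2 * d⁄dX ℝ sqrtDisc) =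
      C 5 * (X ^ 1 * sqrtDisc) - C 3 * sqrtDisc := by
    simp only [map_ofNat]
    linear_combination mul_derivative_sqrtDisc
  have h := congrArg (coeff (n + 3)) hode
  simp only [map_add, map_sub, coeff_C_mul, show n + 3 = (n + 2) + 1 by omega, coeff_X_pow_mul] at h
  rw [show n + 2 + 1 = (n + 1) + 2 by omega, coeff_X_pow_mul,
    coeff_derivative, coeff_derivative, coeff_derivative, coeff_sqrtDisc, coeff_sqrtDisc,
    show n + 1 + 1 = n + 2 by omega, coeff_sqrtDisc] at h
  push_cast at h
  linarith

/-- The coefficients `motz n`, scaled by the radius of convergence `1 / 5`. -/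
noncomputable def tau (n : ℕ) : ℝ := motz n / 5 ^ n

lemma tau_pos (n : ℕ) : 0 < tau n := div_pos (motz_pos n) (by positivity)

lemma tau_recurrence (n : ℕ) :
    5 * (n + 4) * tau (n + 2) = (6 * n + 15) * tau (n + 1) - (n + 1) * tau n := by
  have h := motz_recurrence n
  unfold tau
  rw [pow_add, pow_add]
  field_simp
  linarith

lemma tau_succ_bounds (n : ℕ) :
    tau (n + 1) ≤ tau n ∧ (n + 1) * tau n ≤ (n + 3) * tau (n + 1) := by
  induction n with
  | zero => norm_num [tau, motz_succ, motz]
  | succ n ih =>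
    obtain ⟨hle, hge⟩ := ih
    have hrec := tau_recurrence n
    have hpos := tau_pos (n + 1)
    push_cast
    constructor
    · have : (n + 1) * tau (n + 1) ≤ (n + 1) * tau n := by gcongr
      have : (n + 4) * tau (n + 2) ≤ (n + 4) * tau (n + 1) := by nlinarith
      exact le_of_mul_le_mul_left this (by positivity)
    · ring_nf at *
      nlinarith

lemma monotone_mul_tau : Monotone fun n : ℕ => ((n : ℝ) + 1) * (n + 2) * tau n := by
  refine monotone_nat_of_le_succ fun n => ?_
  have h : ((n : ℝ) + 2) * ((n + 1) * tau n) ≤ (n + 2) * ((n + 3) * tau (n + 1)) := by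
    gcongr ?_ * ?_
    exact (tau_succ_bounds n).2
  push_cast
  linarith

lemma tau_sub_le {k n : ℕ} (h : k ≤ n / 2) : tau (n - k) ≤ 4 * tau n := by
  have hmono := monotone_mul_tau (Nat.sub_le n k)
  have hk : 2 * (k : ℝ) ≤ n := by exact_mod_cast (by omega : 2 * k ≤ n)
  have hpos := tau_pos (n - k)
  simp only [Nat.cast_sub (show k ≤ n by omega)] at hmono
  have hle : ((n : ℝ) + 1) * (n + 2) * tau (n - k) ≤
      4 * ((n - k + 1) * (n - k + 2)) * tau (n - k) := by
    refine mul_le_mul_of_nonneg_right ?_ hpos.le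
    nlinarith
  have : ((n : ℝ) + 1) * (n + 2) * tau (n - k) ≤ (n + 1) * (n + 2) * (4 * tau n) := by linarith
  exact le_of_mul_le_mul_left this (by positivity)

lemma tendsto_tau_div_succ : Tendsto (fun n => tau n / tau (n + 1)) atTop (𝓝 1) := by
  have hlim : Tendsto (fun n : ℕ => 1 + 2 * (1 / ((n : ℝ) + 1))) atTop (𝓝 1) := by
    simpa using (tendsto_one_div_add_atTop_nhds_zero_nat.const_mul (2 : ℝ)).const_add 1
  refine tendsto_of_tendsto_of_tendsto_of_le_of_le tendsto_const_nhds hlim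
    (fun n => (one_le_div (tau_pos _)).2 (tau_succ_bounds n).1) fun n => ?_
  have h := (tau_succ_bounds n).2
  rw [div_le_iff₀ (tau_pos _)]
  field_simp
  linarith

lemma isRegularWeight_tau : IsRegularWeight tau where
  pos := tau_pos
  tendsto_div_succ := tendsto_tau_div_succ
  exists_le_mul := ⟨4, fun _ _ => tau_sub_le⟩

lemma two_mul_sum_tau (n : ℕ) :
    2 * ∑ k ∈ range n, tau k = 10 + (n - 1) * tau n - 5 * (n + 3) * tau (n + 1) := by
  induction n with
  | zero => norm_num [tau, motz_succ, motz]
  | succ n ih =>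
    rw [Finset.sum_range_succ, mul_add, ih]
    push_cast
    linarith [tau_recurrence n]

lemma summable_tau : Summable tau := by
  refine summable_of_sum_range_le (c := 5) (fun n => (tau_pos n).le) fun n => ?_
  have hsum := two_mul_sum_tau n
  have hge := (tau_succ_bounds n).2
  nlinarith [tau_pos n, tau_pos (n + 1)]

/-- The series `Y = ySeries / X` rescaled by its radius of convergence. -/
noncomputable def tauSeries : ℝ⟦X⟧ := rescale 5⁻¹ (mk motz)

lemma coeff_tauSeries (n : ℕ) : coeff n tauSeries = tau n := by
  rw [tauSeries, coeff_rescale, coeff_mk, tau, inv_pow, div_eq_inv_mul]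

lemma tauSeries_eq : tauSeries =
    1 + C 5⁻¹ * X * (C 3 * tauSeries + C 5⁻¹ * X * (tauSeries * tauSeries)) := by
  have h := congrArg (rescale (5⁻¹ : ℝ)) mk_motz_eq
  simpa only [map_add, map_mul, map_one, map_ofNat, rescale_X, pow_two, tauSeries] using h

/- The value `5` of the sum is forced by comparing the tails of the two sides of `tauSeries_eq`. -/
lemma hasTail_tauSeries : HasTail tau tauSeries 5 1 := by
  have hτ := isRegularWeight_tau
  have h : HasTail tau tauSeries (∑' n, tau n) 1 :=
    ⟨by simpa only [coeff_tauSeries] using summable_tau.hasSum,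
      by simp [coeff_tauSeries, div_self (tau_pos _).ne']⟩
  have hX := hτ.hasTail_mul (hasTail_C 5⁻¹) hasTail_X
  have h' := (hasTail_C 1).add (hτ.hasTail_mul hX ((hτ.hasTail_mul (hasTail_C 3) h).add
    (hτ.hasTail_mul hX (hτ.hasTail_mul h h))))
  rw [map_one, ← tauSeries_eq] at h'
  have htail := tendsto_nhds_unique h.tendsto h'.tendsto
  rwa [show ∑' n, tau n = 5 by linarith] at h

end Growth

section Ratio

lemma HasTail.tsum_abs_coeff {τ : ℕ → ℝ} {A : ℝ⟦X⟧} {s α : ℝ} (hA : HasTail τ A s α)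
    (h : ∀ n, 0 ≤ coeff n A) : ∑' n, |coeff n A| = s := by
  simpa only [abs_of_nonneg (h _)] using hA.hasSum.tsum_eq

lemma coeff_mul_nonneg {A B : ℝ⟦X⟧} (hA : ∀ n, 0 ≤ coeff n A) (hB : ∀ n, 0 ≤ coeff n B) (n : ℕ) :
    0 ≤ coeff n (A * B) := by
  rw [coeff_mul]
  exact Finset.sum_nonneg fun p _ => mul_nonneg (hA _) (hB _)

lemma coeff_add_nonneg {A B : ℝ⟦X⟧} (hA : ∀ n, 0 ≤ coeff n A) (hB : ∀ n, 0 ≤ coeff n B) (n : ℕ) :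
    0 ≤ coeff n (A + B) := by
  rw [map_add]
  exact add_nonneg (hA _) (hB _)

lemma coeff_tauSeries_nonneg (n : ℕ) : 0 ≤ coeff n tauSeries :=
  coeff_tauSeries n ▸ (tau_pos n).le

/-- The image of `X` under rescaling by the radius of convergence `1 / 5`. -/
noncomputable def scaledX : ℝ⟦X⟧ := rescale 5⁻¹ X

lemma coeff_scaledX_nonneg (n : ℕ) : 0 ≤ coeff n scaledX := by
  rw [scaledX, coeff_rescale, coeff_X]
  positivity

lemma hasTail_scaledX : HasTail tau scaledX 5⁻¹ 0 := by
  rw [scaledX, rescale_X]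
  simpa using isRegularWeight_tau.hasTail_mul (hasTail_C 5⁻¹) hasTail_X

lemma hasTail_hSeries : HasTail tau (rescale 5⁻¹ hSeries) (5 / 3) (1 / 9) := by
  have hτ := isRegularWeight_tau
  have hX := hasTail_scaledX
  have hA := hX.add (hτ.hasTail_mul hX (hτ.hasTail_mul hX hasTail_tauSeries))
  have hlt := (hA.tsum_abs_coeff (coeff_add_nonneg coeff_scaledX_nonneg
    (coeff_mul_nonneg coeff_scaledX_nonneg
      (coeff_mul_nonneg coeff_scaledX_nonneg coeff_tauSeries_nonneg)))).trans_lt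
    (show _ < (1 : ℝ) by norm_num)
  convert hτ.hasTail_of_one_sub_mul_eq_one hA hlt (G := rescale 5⁻¹ hSeries) ?_ using 1
  · norm_num
  · norm_num
  · have h := congrArg (rescale (5⁻¹ : ℝ)) hSeries_mul
    simp only [ySeries, map_mul, map_sub, map_add, map_one] at h
    rw [scaledX, tauSeries]
    linear_combination h

/-- The kernel `K` of `dSeries = (1 - X) / (1 - K)`, rescaled as `scaledX` and `tauSeries` are, in a
form that exhibits the nonnegativity of its coefficients: `K = 2 (X + X³ Y + X⁴ Y²)`. -/
noncomputable def dKernel : ℝ⟦X⟧ :=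
  C 2 * (scaledX + scaledX * (scaledX * (scaledX * (tauSeries +
    scaledX * (tauSeries * tauSeries)))))

lemma one_sub_dKernel_mul : (1 - dKernel) * rescale 5⁻¹ dSeries = 1 - scaledX := by
  have h : (1 - 2 * (X + X * (X * (X * (mk motz + X * (mk motz * mk motz)))))) * dSeries =
      1 - X := by
    have h := dSeries_mul
    rw [ySeries] at h
    linear_combination h + 2 * X ^ 2 * dSeries * mk_motz_eq
  have h' := congrArg (rescale (5⁻¹ : ℝ)) h
  simp only [map_mul, map_sub, map_add, map_one, map_ofNat] at h'
  simpa only [map_ofNat, dKernel, scaledX, tauSeries] using h'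

lemma coeff_dKernel_nonneg (n : ℕ) : 0 ≤ coeff n dKernel := by
  have hX := coeff_scaledX_nonneg
  have hT := coeff_tauSeries_nonneg
  rw [dKernel, coeff_C_mul]
  exact mul_nonneg zero_le_two (coeff_add_nonneg hX (coeff_mul_nonneg hX (coeff_mul_nonneg hX
    (coeff_mul_nonneg hX (coeff_add_nonneg hT (coeff_mul_nonneg hX (coeff_mul_nonneg hT hT)))))) n)

lemma hasTail_dKernel : HasTail tau dKernel (14 / 25) (6 / 125) := by
  have hτ := isRegularWeight_tau
  have hX := hasTail_scaledX
  have hT := hasTail_tauSeries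
  rw [dKernel]
  convert hτ.hasTail_mul (hasTail_C 2) (hX.add (hτ.hasTail_mul hX (hτ.hasTail_mul hX
    (hτ.hasTail_mul hX (hT.add (hτ.hasTail_mul hX (hτ.hasTail_mul hT hT))))))) using 1 <;> norm_num

lemma hasTail_dSeries : HasTail tau (rescale 5⁻¹ dSeries) (20 / 11) (24 / 121) := by
  have hτ := isRegularWeight_tau
  have hunit : (1 - dKernel) * (1 - dKernel)⁻¹ = 1 :=
    PowerSeries.mul_inv_cancel _ (by simp [dKernel, scaledX])
  have hinv := hτ.hasTail_of_one_sub_mul_eq_one hasTail_dKernel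
    ((hasTail_dKernel.tsum_abs_coeff coeff_dKernel_nonneg).trans_lt (by norm_num)) hunit
  have hnum := (hasTail_C 1).add (hτ.hasTail_mul (hasTail_C (-1)) hasTail_scaledX)
  convert hτ.hasTail_mul hnum hinv using 1
  · rw [map_one, map_neg, map_one]
    linear_combination (1 - dKernel)⁻¹ * one_sub_dKernel_mul - rescale 5⁻¹ dSeries * hunit
  · norm_num
  · norm_num

end Ratio

theorem ratio_hCount_dCount :
    Tendsto (fun n : ℕ => (hCount n : ℝ) / (dCount n : ℝ)) atTop (nhds (121 / 216)) ∧
    ∀ᶠ n : ℕ in atTop, dCount n < 2 * hCount n := by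
  have hlim : Tendsto (fun n : ℕ => (hCount n : ℝ) / (dCount n : ℝ)) atTop (nhds (121 / 216)) := by
    have h := hasTail_hSeries.tendsto.div hasTail_dSeries.tendsto (by norm_num)
    rw [show (1 / 9 : ℝ) / (24 / 121) = 121 / 216 by norm_num] at h
    refine h.congr fun n => ?_
    rw [Pi.div_apply, div_div_div_cancel_right₀ (tau_pos n).ne', coeff_rescale, coeff_rescale,
      mul_div_mul_left _ _ (by positivity), hCount_eq_coeff, dCount_eq_coeff]
  refine ⟨hlim, ?_⟩
  filter_upwards [hlim.eventually_const_lt (show (1 / 2 : ℝ) < 121 / 216 by norm_num)] with n hn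
  have hd : (0 : ℝ) < dCount n := (Nat.cast_nonneg _).lt_of_ne fun h0 => by
    rw [← h0, div_zero] at hn
    norm_num at hn
  rw [lt_div_iff₀ hd] at hn
  exact_mod_cast (by linarith : (dCount n : ℝ) < 2 * hCount n)
end
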